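/- arXiv:2506.22667 — 2 statements merged into one kernel-verified Lean document; each statement's English description precedes it below -/
import Mathlib

section
/- Let C₁, C₂ > 0. There is a constant C = C(C₁, C₂) such that for all X ≥ 3, all q₀, q₁ ∈ (ℤ/8ℤ)^*, all odd integers 1 ≤ r₀, r₁ ≤ (log X)^{C₁}, and all integers 1 ≤ c₀, c₁ ≤ (log X)^{C₂}: | ∑∑_{‖n₀c₀, n₁c₁‖ ≤ X, gcd(n_i, r_i) = 1 and n_i ≡ q_i (mod 8) for i = 0,1} 1/(‖n₀c₀, n₁c₁‖² τ(n₀) τ(n₁)) − 𝔖₁(r₀, r₁) (log log X)/(c₀ c₁) | ≤ C · τ(r₀) τ(r₁) √(log log X)/(c₀ c₁), where 𝔖₁(r₀, r₁) := 2 f₀² / ( φ(8)² (∏_{p | 2r₀} f_p)(∏_{p | 2r₁} f_p) ) and φ(8) = 4. -/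
/-!
Write `α(n) = 1_{(n,r₀)=1, n ≡ q₀ (N)}/τ(n)` and `β` similarly for `r₁`, `q₁`, where `N` is `8` in
the theorem. The sharply truncated sum is compared with the smoothed sum
`∑ α(n₀) β(n₁) max(n₀c₀, n₁c₁)^{-2-ε}`.

Since `e^{-σ|u|}` is the Fourier transform of `(σ/π)/(σ²+t²)`, evaluation at `u = log(n₀c₀/n₁c₁)`
turns the smoothed sum into `(σ/π) ∫ D_α(s) c₀^{-s} · conj(D_β(s) c₁^{-s}) |s|^{-2} dt` on the line
`s = σ + it`, `σ = 1 + ε/2`, where `D_α`, `D_β` are the Dirichlet series of `α`, `β`.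

Detecting the residue class by characters modulo `N`, each `D` becomes a combination of the series
`P(χ, r, s) = ∑_{(n,r)=1} χ(n) τ(n)⁻¹ n^{-s}`. Its Euler factors are `g(χ(p)p^{-s})` with
`g(z) = ∑ zᵉ/(e+1)`, and `g(z)²(1-z) = 1 + O(z²)`; hence `|P|² ≪ τ(r)|L(s,χ)|`, and
`L(s,χ) = O(|s|^{1/2})` up to the pole of the principal character. The principal character moreover
satisfies `|Q(s)|² = π f₀²/|s-1| + O(1)` for the full series `Q(s) = ∑ τ(n)⁻¹ n^{-s}`, and the
factors removed at `Nr` vary by `O(τ(r) |s-1| log Nr)`. Nonprincipal characters cost only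
`O(|s-1|^{-1/2})`.

Consequently, if `Λ` bounds `log Nrᵢ` and `log cᵢ`, then `c₀c₁` times the integrand is a constant
multiple of `1/|s-1|` plus an acceptable error for `|t| ≤ 1/Λ`, is `O(τ(r₀)τ(r₁)/|t|)` for
`1/Λ ≤ |t| ≤ 1`, and is `O(τ(r₀)τ(r₁)|t|^{-3/2})` beyond. Integrating, the smoothed sum times `c₀c₁`
equals `𝔖₁ log(1/ε) + O(τ(r₀)τ(r₁)(1 + log Λ))`.

Because the terms are nonnegative, Rankin's trick with `ε ≈ 1/log X`, up to factors `1 + log log X`,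
gives the same asymptotics with `log(1/ε)` replaced by `log log X` for the truncated sum. Here
`Λ ≍ 1 + log log X` is admissible, so the error is `O(τ(r₀)τ(r₁)(1 + log(1 + log log X)))`, which is
smaller than required.
-/

open Finset

/-- `f_p = 1 + ∑_{j ≥ 1} 1/((j+1) p^j)`. -/
noncomputable def fP (p : ℕ) : ℝ :=
  1 + ∑' j : ℕ, 1 / (((j : ℝ) + 2) * (p : ℝ) ^ (j + 1))

/-- `f₀ = (1/√π) ∏_p f_p (1 − 1/p)^{1/2}`. -/
noncomputable def f0 : ℝ :=
  (1 / Real.sqrt Real.pi) * ∏' p : Nat.Primes, fP p * (1 - 1 / (p : ℝ)) ^ ((1:ℝ)/2)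

/-- `𝔖₁(r₀, r₁) = 2 f₀² / (φ(8)² (∏_{p|2r₀} f_p)(∏_{p|2r₁} f_p))`. -/
noncomputable def S1 (r₀ r₁ : ℕ) : ℝ :=
  2 * f0 ^ 2 /
    ((Nat.totient 8 : ℝ) ^ 2 * (∏ p ∈ (2 * r₀).primeFactors, fP p) *
      (∏ p ∈ (2 * r₁).primeFactors, fP p))

namespace DivisorSum

open Complex Filter MeasureTheory Metric Topology

lemma exists_norm_sub_le_of_differentiableOn_ball {f : ℂ → ℂ} {c : ℂ} {r R : ℝ} (hrR : r < R)
    (hf : DifferentiableOn ℂ f (ball c R)) :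
    ∃ C ≥ 0, ∀ z ∈ closedBall c r, ∀ w ∈ closedBall c r, ‖f z - f w‖ ≤ C * ‖z - w‖ := by
  have hsub : closedBall c r ⊆ ball c R := closedBall_subset_ball hrR
  obtain ⟨C, hC⟩ := (isCompact_closedBall c r).exists_bound_of_continuousOn
    ((hf.deriv isOpen_ball).continuousOn.mono hsub)
  refine ⟨|C|, abs_nonneg C, fun z hz w hw => ?_⟩
  exact (convex_closedBall c r).norm_image_sub_le_of_norm_deriv_le
    (fun x hx => hf.differentiableAt (isOpen_ball.mem_nhds (hsub hx)))
    (fun x hx => (hC x hx).trans (le_abs_self C)) hw hz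

lemma exists_norm_sub_le_of_deriv_eq_zero {f : ℂ → ℂ} {r R : ℝ} (hrR : r < R)
    (hf : DifferentiableOn ℂ f (ball 0 R)) (hf' : deriv f 0 = 0) :
    ∃ C ≥ 0, ∀ z w : ℂ, ‖z‖ ≤ r → ‖w‖ ≤ r → ‖f z - f w‖ ≤ C * (‖z‖ + ‖w‖) * ‖z - w‖ := by
  obtain ⟨C, hC, hlip⟩ :=
    exists_norm_sub_le_of_differentiableOn_ball hrR (hf.deriv isOpen_ball)
  refine ⟨C, hC, fun z w hz hw => ?_⟩
  set ρ := max ‖z‖ ‖w‖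
  have hρr : ρ ≤ r := max_le hz hw
  have hρ : ρ ≤ ‖z‖ + ‖w‖ := max_le_add_of_nonneg (norm_nonneg z) (norm_nonneg w)
  have hderiv : ∀ x ∈ closedBall (0 : ℂ) ρ, ‖deriv f x‖ ≤ C * (‖z‖ + ‖w‖) := by
    intro x hx
    have hr : (0 : ℝ) ≤ r := (norm_nonneg z).trans hz
    have h := hlip x (closedBall_subset_closedBall hρr hx) 0 (mem_closedBall_self hr)
    rw [hf', sub_zero, sub_zero] at h
    exact h.trans (by gcongr; exact (mem_closedBall_zero_iff.mp hx).trans hρ)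
  refine (convex_closedBall 0 ρ).norm_image_sub_le_of_norm_deriv_le (fun x hx => ?_) hderiv
    (mem_closedBall_zero_iff.mpr (le_max_right _ _)) (mem_closedBall_zero_iff.mpr (le_max_left _ _))
  exact hf.differentiableAt
    (isOpen_ball.mem_nhds (closedBall_subset_ball (hρr.trans_lt hrR) hx))

lemma norm_mul_sub_mul_le {R : Type*} [NormedRing R] {a b a₁ b₁ : R} {A B α β : ℝ}
    (ha : ‖a₁‖ ≤ A) (hb : ‖b‖ ≤ B) (hα : ‖a - a₁‖ ≤ α) (hβ : ‖b - b₁‖ ≤ β) :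
    ‖a * b - a₁ * b₁‖ ≤ α * B + A * β := by
  have hA : 0 ≤ A := (norm_nonneg _).trans ha
  have hα0 : 0 ≤ α := (norm_nonneg _).trans hα
  calc ‖a * b - a₁ * b₁‖ = ‖(a - a₁) * b + a₁ * (b - b₁)‖ := by congr 1; noncomm_ring
    _ ≤ ‖(a - a₁) * b‖ + ‖a₁ * (b - b₁)‖ := norm_add_le _ _
    _ ≤ α * B + A * β :=
      add_le_add ((norm_mul_le _ _).trans (by gcongr)) ((norm_mul_le _ _).trans (by gcongr))

lemma norm_prod_sub_prod_le {ι R : Type*} [NormedCommRing R] [NormOneClass R] (S : Finset ι)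
    {a b : ι → R} {M : ι → ℝ} (hM : ∀ i ∈ S, 1 ≤ M i) (ha : ∀ i ∈ S, ‖a i‖ ≤ M i)
    (hb : ∀ i ∈ S, ‖b i‖ ≤ M i) :
    ‖∏ i ∈ S, a i - ∏ i ∈ S, b i‖ ≤ (∏ i ∈ S, M i) * ∑ i ∈ S, ‖a i - b i‖ := by
  classical
  induction S using Finset.induction_on with
  | empty => simp
  | insert j S hj ih =>
    simp only [forall_mem_insert] at hM ha hb
    have hprod : ‖∏ i ∈ S, a i‖ ≤ ∏ i ∈ S, M i :=
      (Finset.norm_prod_le _ _).trans (prod_le_prod (fun i _ => norm_nonneg _) ha.2)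
    have hprod0 : 0 ≤ ∏ i ∈ S, M i := (norm_nonneg _).trans hprod
    rw [prod_insert hj, prod_insert hj, prod_insert hj, sum_insert hj]
    calc ‖a j * ∏ i ∈ S, a i - b j * ∏ i ∈ S, b i‖
        ≤ ‖a j - b j‖ * ∏ i ∈ S, M i + M j * ((∏ i ∈ S, M i) * ∑ i ∈ S, ‖a i - b i‖) :=
          norm_mul_sub_mul_le hb.1 hprod le_rfl (ih hM.2 ha.2 hb.2)
      _ ≤ M j * (‖a j - b j‖ * ∏ i ∈ S, M i) +
            M j * ((∏ i ∈ S, M i) * ∑ i ∈ S, ‖a i - b i‖) := by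
          refine add_le_add_left ?_ _
          exact le_mul_of_one_le_left (mul_nonneg (norm_nonneg _) hprod0) hM.1
      _ = M j * (∏ i ∈ S, M i) * (‖a j - b j‖ + ∑ i ∈ S, ‖a i - b i‖) := by ring

/-! ### The local Euler factors -/

/-- The Lerch transcendent `Φ(z, 1, m) = ∑ zᵉ/(e+m)`, of which the Euler factor of
`∑ χ(n) τ(n)⁻¹ n⁻ˢ` is the case `m = 1`. -/
noncomputable def lerchSeries (m : ℕ) (z : ℂ) : ℂ := ∑' e : ℕ, z ^ e / ((e : ℂ) + m)

section Lerch

variable {m : ℕ} {z : ℂ}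

lemma norm_lerchSeries_term_le (hm : m ≠ 0) (z : ℂ) (e : ℕ) :
    ‖z ^ e / ((e : ℂ) + m)‖ ≤ ‖z‖ ^ e * (m : ℝ)⁻¹ := by
  have : (0 : ℝ) < m := by positivity
  rw [norm_div, norm_pow, ← Nat.cast_add, norm_natCast, div_eq_mul_inv]
  gcongr
  exact Nat.le_add_left m e

lemma summable_lerchSeries_term (hm : m ≠ 0) (hz : ‖z‖ < 1) :
    Summable fun e : ℕ => z ^ e / ((e : ℂ) + m) :=
  .of_norm_bounded ((summable_geometric_of_lt_one (norm_nonneg z) hz).mul_right _)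
    (norm_lerchSeries_term_le hm z)

lemma lerchSeries_zero_right (m : ℕ) : lerchSeries m 0 = (m : ℂ)⁻¹ := by
  rw [lerchSeries, tsum_eq_single 0 fun e he => by simp [he]]
  simp

lemma lerchSeries_eq_inv_add (hm : m ≠ 0) (hz : ‖z‖ < 1) :
    lerchSeries m z = (m : ℂ)⁻¹ + z * lerchSeries (m + 1) z := by
  rw [lerchSeries, (summable_lerchSeries_term hm hz).tsum_eq_zero_add, lerchSeries, ← tsum_mul_left]
  congr 1
  · simp
  · refine tsum_congr fun e => ?_
    push_cast
    ring

lemma norm_lerchSeries_le (hm : m ≠ 0) (hz : ‖z‖ < 1) :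
    ‖lerchSeries m z‖ ≤ (1 - ‖z‖)⁻¹ * (m : ℝ)⁻¹ :=
  tsum_of_norm_bounded ((hasSum_geometric_of_lt_one (norm_nonneg z) hz).mul_right _)
    (norm_lerchSeries_term_le hm z)

lemma differentiableOn_lerchSeries (hm : m ≠ 0) :
    DifferentiableOn ℂ (lerchSeries m) (ball 0 1) := by
  intro z hz
  obtain ⟨ρ, hzρ, hρ⟩ := exists_between (mem_ball_zero_iff.mp hz)
  have hdiff : DifferentiableOn ℂ (lerchSeries m) (ball 0 ρ) := by
    refine differentiableOn_tsum_of_summable_norm (u := fun e => ρ ^ e * (m : ℝ)⁻¹)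
      ((summable_geometric_of_lt_one ((norm_nonneg z).trans hzρ.le) hρ).mul_right _)
      (fun e => by fun_prop) isOpen_ball fun e w hw => ?_
    refine (norm_lerchSeries_term_le hm w e).trans ?_
    gcongr
    exact (mem_ball_zero_iff.mp hw).le
  exact (hdiff.differentiableAt
    (isOpen_ball.mem_nhds (mem_ball_zero_iff.mpr hzρ))).differentiableWithinAt

end Lerch

/-- The Euler factor `∑ zᵉ/(e+1) = -log(1-z)/z` of a Dirichlet series with coefficients
`χ(n)/τ(n)`, to be evaluated at `z = χ(p)p⁻ˢ`. -/
noncomputable def eulerFactor (z : ℂ) : ℂ := lerchSeries 1 z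

section EulerFactor

variable {z : ℂ}

lemma eulerFactor_zero : eulerFactor 0 = 1 := by
  simp [eulerFactor, lerchSeries_zero_right]

lemma eulerFactor_eq_one_add (hz : ‖z‖ < 1) : eulerFactor z = 1 + z * lerchSeries 2 z := by
  simpa [eulerFactor] using lerchSeries_eq_inv_add one_ne_zero hz

lemma differentiableOn_eulerFactor : DifferentiableOn ℂ eulerFactor (ball 0 1) :=
  differentiableOn_lerchSeries one_ne_zero

lemma half_le_norm_eulerFactor (hz : ‖z‖ ≤ 1 / 2) : 1 / 2 ≤ ‖eulerFactor z‖ := by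
  have hz1 : ‖z‖ < 1 := by linarith
  have hΦ : ‖lerchSeries 2 z‖ ≤ 1 :=
    calc ‖lerchSeries 2 z‖ ≤ (1 - ‖z‖)⁻¹ * ((2 : ℕ) : ℝ)⁻¹ := norm_lerchSeries_le two_ne_zero hz1
      _ ≤ (1 - 1 / 2 : ℝ)⁻¹ * ((2 : ℕ) : ℝ)⁻¹ := by gcongr
      _ = 1 := by norm_num
  have hsub : ‖eulerFactor z - 1‖ ≤ 1 / 2 * 1 := by
    rw [eulerFactor_eq_one_add hz1, add_sub_cancel_left, norm_mul]
    gcongr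
  have h := norm_sub_norm_le (1 : ℂ) (1 - eulerFactor z)
  rw [norm_one, sub_sub_cancel, norm_sub_rev] at h
  linarith

lemma eulerFactor_ne_zero (hz : ‖z‖ ≤ 1 / 2) : eulerFactor z ≠ 0 :=
  norm_pos_iff.mp (one_half_pos.trans_le (half_le_norm_eulerFactor hz))

lemma norm_inv_eulerFactor_le_two (hz : ‖z‖ ≤ 1 / 2) : ‖(eulerFactor z)⁻¹‖ ≤ 2 := by
  rw [norm_inv, ← inv_inv (2 : ℝ), ← one_div (2 : ℝ)]
  exact inv_anti₀ one_half_pos (half_le_norm_eulerFactor hz)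

lemma exists_norm_inv_eulerFactor_sub_le : ∃ C ≥ 0, ∀ z w : ℂ, ‖z‖ ≤ 1 / 2 → ‖w‖ ≤ 1 / 2 →
    ‖(eulerFactor z)⁻¹ - (eulerFactor w)⁻¹‖ ≤ C * ‖z - w‖ := by
  obtain ⟨C, hC, hlip⟩ := exists_norm_sub_le_of_differentiableOn_ball one_half_lt_one
    differentiableOn_eulerFactor
  refine ⟨2 * C * 2, by positivity, fun z w hz hw => ?_⟩
  rw [inv_sub_inv' (eulerFactor_ne_zero hz) (eulerFactor_ne_zero hw), norm_mul, norm_mul]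
  calc _ ≤ 2 * (C * ‖w - z‖) * 2 := by
        gcongr
        · exact norm_inv_eulerFactor_le_two hz
        · exact hlip w (mem_closedBall_zero_iff.mpr hw) z (mem_closedBall_zero_iff.mpr hz)
        · exact norm_inv_eulerFactor_le_two hw
    _ = 2 * C * 2 * ‖z - w‖ := by rw [norm_sub_rev]; ring

end EulerFactor

/-- The ratio `eulerFactor(z)² (1 - z)` of the squared Euler factor to the Euler factor `(1 - z)⁻¹`
of `L(s, χ)`. -/
noncomputable def eulerRatio (z : ℂ) : ℂ := eulerFactor z ^ 2 * (1 - z)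

lemma eulerRatio_zero : eulerRatio 0 = 1 := by
  simp [eulerRatio, eulerFactor_zero]

lemma hasDerivAt_eulerFactor_zero : HasDerivAt eulerFactor (1 / 2) 0 := by
  have hnhds : ball (0 : ℂ) 1 ∈ 𝓝 0 := ball_mem_nhds 0 one_pos
  have hΦ := ((differentiableOn_lerchSeries two_ne_zero).differentiableAt hnhds).hasDerivAt
  have h := ((hasDerivAt_id (0 : ℂ)).mul hΦ).const_add 1
  simp only [id, lerchSeries_zero_right, one_mul, zero_mul, add_zero] at h
  refine (h.congr_deriv (by norm_num)).congr_of_eventuallyEq ?_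
  filter_upwards [hnhds] with z hz
  exact eulerFactor_eq_one_add (mem_ball_zero_iff.mp hz)

lemma deriv_eulerRatio_zero : deriv eulerRatio 0 = 0 := by
  have h := (hasDerivAt_eulerFactor_zero.pow 2).mul ((hasDerivAt_id (0 : ℂ)).const_sub 1)
  refine (h.congr_deriv ?_).deriv
  simp [eulerFactor_zero]

lemma exists_norm_eulerRatio_sub_le : ∃ C ≥ 0, ∀ z w : ℂ, ‖z‖ ≤ 1 / 2 → ‖w‖ ≤ 1 / 2 →
    ‖eulerRatio z - eulerRatio w‖ ≤ C * (‖z‖ + ‖w‖) * ‖z - w‖ :=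
  exists_norm_sub_le_of_deriv_eq_zero one_half_lt_one
    ((differentiableOn_eulerFactor.pow 2).mul (by fun_prop)) deriv_eulerRatio_zero

lemma exists_norm_eulerRatio_sub_one_le :
    ∃ C ≥ 0, ∀ z : ℂ, ‖z‖ ≤ 1 / 2 → ‖eulerRatio z - 1‖ ≤ C * ‖z‖ ^ 2 := by
  obtain ⟨C, hC, h⟩ := exists_norm_eulerRatio_sub_le
  refine ⟨C, hC, fun z hz => ?_⟩
  simpa [eulerRatio_zero, sq, mul_assoc] using h z 0 hz (by simp)

/-! ### Dirichlet `L`-series near the line `Re s = 1` -/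

lemma norm_exp_neg_sub_one_le {w : ℂ} (hw : 0 ≤ w.re) : ‖exp (-w) - 1‖ ≤ ‖w‖ := by
  have h := (convex_halfSpace_re_ge 0).norm_image_sub_le_of_norm_hasDerivWithin_le (C := 1)
    (f := fun z : ℂ => exp (-z)) (f' := fun z => exp (-z) * (-1)) (x := 0) (y := w)
    (fun z _ => ((hasDerivAt_id z).neg.cexp).hasDerivWithinAt)
    (fun z hz => by
      rw [norm_mul, norm_neg, norm_one, mul_one, norm_exp, Real.exp_le_one_iff]
      simpa using hz) (by simp) hw
  simpa using h

lemma norm_cpow_neg_sub_one_le {x : ℝ} (hx : 1 ≤ x) {z : ℂ} (hz : 0 ≤ z.re) :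
    ‖(x : ℂ) ^ (-z) - 1‖ ≤ ‖z‖ * Real.log x := by
  have hx0 : (x : ℂ) ≠ 0 := by exact_mod_cast (zero_lt_one.trans_le hx).ne'
  have hlog : 0 ≤ Real.log x := Real.log_nonneg hx
  rw [cpow_def_of_ne_zero hx0, ← ofReal_log (zero_le_one.trans hx), mul_neg]
  refine (norm_exp_neg_sub_one_le ?_).trans_eq ?_
  · rw [re_ofReal_mul]; positivity
  · rw [norm_mul, norm_real, Real.norm_of_nonneg hlog, mul_comm]

section PowersNearLine

variable {n x : ℝ} {s : ℂ}

lemma norm_ofReal_cpow_neg_le_inv (hx : 1 ≤ x) (hs : 1 ≤ s.re) : ‖(x : ℂ) ^ (-s)‖ ≤ x⁻¹ := by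
  rw [norm_cpow_eq_rpow_re_of_pos (zero_lt_one.trans_le hx), neg_re, ← Real.rpow_neg_one]
  gcongr

lemma norm_ofReal_cpow_neg_sub_inv_le (hx : 1 ≤ x) (hs : 1 ≤ s.re) :
    ‖(x : ℂ) ^ (-s) - (x : ℂ)⁻¹‖ ≤ ‖s - 1‖ * Real.log x * x⁻¹ := by
  have hx0 : (x : ℂ) ≠ 0 := by exact_mod_cast (zero_lt_one.trans_le hx).ne'
  have hfactor : (x : ℂ) ^ (-s) - (x : ℂ)⁻¹ = ((x : ℂ) ^ (-(s - 1)) - 1) * (x : ℂ)⁻¹ := by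
    rw [sub_mul, one_mul, ← cpow_neg_one, ← cpow_add _ _ hx0]
    ring_nf
  rw [hfactor, norm_mul, norm_inv, norm_real, Real.norm_of_nonneg (zero_le_one.trans hx)]
  gcongr
  exact norm_cpow_neg_sub_one_le hx (by simpa using hs)

lemma norm_cpow_neg_sub_cpow_neg_le (hn : 1 ≤ n) (hx : n ≤ x) (hs : 1 ≤ s.re) :
    ‖(n : ℂ) ^ (-s) - (x : ℂ) ^ (-s)‖ ≤ ‖s‖ * (x - n) / n ^ 2 := by
  have hn0 : 0 < n := by linarith
  have hxn : 1 ≤ x / n := (one_le_div hn0).2 hx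
  have hmul : (x : ℂ) ^ (-s) = (n : ℂ) ^ (-s) * ((x / n : ℝ) : ℂ) ^ (-s) := by
    rw [← mul_cpow_ofReal_nonneg hn0.le (by positivity), ← ofReal_mul, mul_div_cancel₀ _ hn0.ne']
  calc ‖(n : ℂ) ^ (-s) - (x : ℂ) ^ (-s)‖
      = ‖(n : ℂ) ^ (-s)‖ * ‖((x / n : ℝ) : ℂ) ^ (-s) - 1‖ := by
        rw [norm_sub_rev, ← norm_mul, hmul, mul_sub, mul_one]
    _ ≤ n⁻¹ * (‖s‖ * (x / n - 1)) := by
        gcongr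
        · exact norm_ofReal_cpow_neg_le_inv hn hs
        · refine (norm_cpow_neg_sub_one_le hxn (zero_le_one.trans hs)).trans ?_
          gcongr
          exact Real.log_le_sub_one_of_pos (by positivity)
    _ = ‖s‖ * (x - n) / n ^ 2 := by field_simp

-- The geometric mean of the trivial bound and the derivative bound; any exponent of `‖s‖` below `1`
-- would make the Mellin integrals below converge.
lemma norm_cpow_neg_sub_cpow_neg_le_sqrt (hn : 1 ≤ n) (hx : n ≤ x) (hs : 1 ≤ s.re) :
    ‖(n : ℂ) ^ (-s) - (x : ℂ) ^ (-s)‖ ≤ √(2 * ‖s‖ * (x - n)) * n ^ (-(3 / 2) : ℝ) := by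
  have hn0 : 0 < n := by linarith
  have htrivial : ‖(n : ℂ) ^ (-s) - (x : ℂ) ^ (-s)‖ ≤ 2 * n⁻¹ := by
    refine (norm_sub_le _ _).trans ?_
    rw [two_mul]
    refine add_le_add (norm_ofReal_cpow_neg_le_inv hn hs) ?_
    exact (norm_ofReal_cpow_neg_le_inv (hn.trans hx) hs).trans (inv_anti₀ hn0 hx)
  have hpow : n ^ (-(3 / 2) : ℝ) = √((n ^ 3)⁻¹) := by
    rw [Real.sqrt_eq_rpow, ← Real.rpow_natCast, ← Real.rpow_neg hn0.le, ← Real.rpow_mul hn0.le]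
    norm_num
  have : 0 ≤ 2 * ‖s‖ * (x - n) := mul_nonneg (by positivity) (sub_nonneg.2 hx)
  rw [hpow, ← Real.sqrt_mul this]
  refine Real.le_sqrt_of_sq_le ?_
  calc ‖(n : ℂ) ^ (-s) - (x : ℂ) ^ (-s)‖ ^ 2
      ≤ 2 * n⁻¹ * (‖s‖ * (x - n) / n ^ 2) := by
        rw [sq]
        gcongr
        exact norm_cpow_neg_sub_cpow_neg_le hn hx hs
    _ = 2 * ‖s‖ * (x - n) * (n ^ 3)⁻¹ := by field_simp

lemma norm_cpow_neg_sub_mean_le {h : ℝ} (hh : 0 < h) (hn : 1 ≤ n) (hs : 1 < s.re) :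
    ‖(n : ℂ) ^ (-s) - ((n : ℂ) ^ (1 - s) - ((n + h : ℝ) : ℂ) ^ (1 - s)) / (h * (s - 1))‖ ≤
      √(2 * ‖s‖ * h) * n ^ (-(3 / 2) : ℝ) := by
  have hs1 : s - 1 ≠ 0 := sub_ne_zero_of_ne (by rintro rfl; simp at hs)
  have hh' : (h : ℂ) ≠ 0 := by exact_mod_cast hh.ne'
  have h0 : (0 : ℝ) ∉ Set.uIcc n (n + h) := by
    rw [Set.uIcc_of_le (by linarith)]; rintro ⟨h0, -⟩; linarith
  have hmean : (n : ℂ) ^ (-s) - ((n : ℂ) ^ (1 - s) - ((n + h : ℝ) : ℂ) ^ (1 - s)) / (h * (s - 1)) =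
      (h : ℂ)⁻¹ * ∫ x in n..(n + h), ((n : ℂ) ^ (-s) - (x : ℂ) ^ (-s)) := by
    rw [intervalIntegral.integral_sub (by simp)
        (intervalIntegral.intervalIntegrable_cpow (.inr h0)),
      integral_cpow (.inr ⟨fun he => hs1 (by linear_combination -he), h0⟩),
      intervalIntegral.integral_const, add_sub_cancel_left, real_smul,
      show -s + 1 = 1 - s by ring, ← neg_sub s 1, div_neg]
    field_simp
    ring
  have hbound : ∀ x ∈ Set.uIoc n (n + h),
      ‖(n : ℂ) ^ (-s) - (x : ℂ) ^ (-s)‖ ≤ √(2 * ‖s‖ * h) * n ^ (-(3 / 2) : ℝ) := by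
    intro x hx
    rw [Set.uIoc_of_le (by linarith)] at hx
    refine (norm_cpow_neg_sub_cpow_neg_le_sqrt hn hx.1.le hs.le).trans ?_
    gcongr
    linarith [hx.2]
  have hintegral := intervalIntegral.norm_integral_le_of_norm_le_const hbound
  rw [add_sub_cancel_left, abs_of_pos hh] at hintegral
  rw [hmean, norm_mul, norm_inv, norm_real, Real.norm_of_nonneg hh.le, inv_mul_le_iff₀ hh]
  linarith

end PowersNearLine

lemma norm_tsum_sub_le_of_telescoping {E : Type*} [NormedAddCommGroup E] [CompleteSpace E]
    {u v : ℕ → E} {b : ℕ → ℝ} (hu : Summable u) (hb : Summable b) (hv : Tendsto v atTop (𝓝 0))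
    (h : ∀ j, ‖u j - (v j - v (j + 1))‖ ≤ b j) : ‖∑' j, u j - v 0‖ ≤ ∑' j, b j := by
  have hsum : Summable fun j => v j - v (j + 1) := by
    simpa using hu.sub (Summable.of_norm_bounded hb h)
  have htsum : ∑' j, (v j - v (j + 1)) = v 0 := by
    refine tendsto_nhds_unique hsum.hasSum.tendsto_sum_nat ?_
    simp only [sum_range_sub']
    simpa using hv.const_sub (v 0)
  rw [← htsum, ← hu.tsum_sub hsum]
  exact tsum_of_norm_bounded hb.hasSum h

lemma summable_natCast_cpow_neg {s : ℂ} (hs : 1 < s.re) : Summable fun n : ℕ => (n : ℂ) ^ (-s) := by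
  simpa [cpow_neg] using summable_one_div_nat_cpow.mpr hs

lemma summable_natCast_add_one_rpow {a : ℝ} (ha : a < -1) :
    Summable fun n : ℕ => ((n : ℝ) + 1) ^ a := by
  simpa using (summable_nat_add_iff 1).mpr (Real.summable_nat_rpow.mpr ha)

lemma tendsto_progression_cpow_one_sub {s : ℂ} (a : ℕ) {h : ℕ} (hh : 0 < h) (hs : 1 < s.re) :
    Tendsto (fun j : ℕ => ((a + h * j : ℕ) : ℂ) ^ (1 - s)) atTop (𝓝 0) := by
  have hlim : Tendsto (fun j : ℕ => a + h * j) atTop atTop :=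
    tendsto_atTop_mono (fun j => (Nat.le_mul_of_pos_left j hh).trans (Nat.le_add_left _ _))
      tendsto_id
  have hpow : Tendsto (fun n : ℕ => (n : ℂ) ^ (1 - s)) atTop (𝓝 0) := by
    rw [tendsto_zero_iff_norm_tendsto_zero]
    refine ((tendsto_rpow_neg_atTop (sub_pos.2 hs)).comp
      tendsto_natCast_atTop_atTop).congr' ?_
    filter_upwards [eventually_gt_atTop 0] with n hn
    simp [norm_natCast_cpow_of_pos hn]
  exact hpow.comp hlim

lemma norm_cpow_one_sub_div_sub_le_one {s : ℂ} (hs : 1 < s.re) {a h : ℕ} (ha : 1 ≤ a)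
    (hah : a ≤ h) : ‖(a : ℂ) ^ (1 - s) / (h * (s - 1)) - 1 / (h * (s - 1))‖ ≤ 1 := by
  have hs1 : s - 1 ≠ 0 := sub_ne_zero_of_ne (by rintro rfl; simp at hs)
  have hh : 0 < h := ha.trans hah
  have hlog : Real.log a ≤ h :=
    (Real.log_le_self (by positivity)).trans (by exact_mod_cast hah)
  have hpow := norm_cpow_neg_sub_one_le (by exact_mod_cast ha : (1 : ℝ) ≤ a) (z := s - 1)
    (by simpa using hs.le)
  rw [← sub_div, norm_div, norm_mul, Complex.norm_natCast, div_le_one (by positivity)]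
  simpa using hpow.trans (by rw [mul_comm]; gcongr)

lemma norm_tsum_progression_sub_le {s : ℂ} (hs : 1 < s.re) {a h : ℕ} (ha : 1 ≤ a) (hah : a ≤ h) :
    ‖∑' j : ℕ, ((a + h * j : ℕ) : ℂ) ^ (-s) - 1 / (h * (s - 1))‖ ≤
      (√(2 * h) * ∑' n : ℕ, ((n : ℝ) + 1) ^ (-(3 / 2) : ℝ) + 1) * √‖s‖ := by
  have hh : 0 < h := ha.trans hah
  have hnorm : 1 ≤ √‖s‖ := Real.one_le_sqrt.mpr (hs.le.trans (re_le_norm s))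
  have hterm : ∀ j : ℕ, (j : ℝ) + 1 ≤ (a + h * j : ℕ) := fun j => by
    exact_mod_cast (by nlinarith : j + 1 ≤ a + h * j)
  set v : ℕ → ℂ := fun j => ((a + h * j : ℕ) : ℂ) ^ (1 - s) / (h * (s - 1)) with hv
  have hv0 : Tendsto v atTop (𝓝 0) := by
    have hpow := tendsto_progression_cpow_one_sub a hh hs
    simpa [hv] using hpow.div_const (h * (s - 1))
  have htel := norm_tsum_sub_le_of_telescoping
    (u := fun j : ℕ => ((a + h * j : ℕ) : ℂ) ^ (-s)) (v := v)
    ((summable_natCast_cpow_neg hs).comp_injective (i := fun j : ℕ => a + h * j)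
      fun x y hxy => by simpa [hh.ne'] using hxy)
    ((summable_natCast_add_one_rpow (by norm_num : (-(3 / 2) : ℝ) < -1)).mul_left
      √(2 * ‖s‖ * h)) hv0 fun j => by
    have hmean := norm_cpow_neg_sub_mean_le (h := h) (n := (a + h * j : ℕ))
      (by positivity) (le_trans (by simp) (hterm j)) hs
    rw [sub_div] at hmean
    have hnext : a + h * (j + 1) = a + h * j + h := by ring
    simp only [hv, hnext]
    push_cast at hmean ⊢
    refine hmean.trans ?_
    gcongr _ * ?_
    push_cast at hterm
    exact Real.rpow_le_rpow_of_nonpos (by positivity) (hterm j) (by norm_num)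
  have hfirst : ‖v 0 - 1 / (h * (s - 1))‖ ≤ 1 := by
    simpa [hv] using norm_cpow_one_sub_div_sub_le_one hs ha hah
  calc ‖∑' j : ℕ, ((a + h * j : ℕ) : ℂ) ^ (-s) - 1 / (h * (s - 1))‖
      ≤ _ := norm_sub_le_norm_sub_add_norm_sub _ (v 0) _
    _ ≤ √(2 * ‖s‖ * h) * ∑' n : ℕ, ((n : ℝ) + 1) ^ (-(3 / 2) : ℝ) + √‖s‖ := by
        rw [← tsum_mul_left]
        exact add_le_add htel (hfirst.trans hnorm)
    _ = _ := by
        rw [mul_right_comm, Real.sqrt_mul' _ (norm_nonneg s)]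
        ring

section Modulus

variable (N : ℕ) [NeZero N]

lemma exists_norm_LSeries_sub_le :
    ∃ C ≥ 0, ∀ Φ : ZMod N → ℂ, ∀ s : ℂ, 1 < s.re →
      ‖LSeries (fun n => Φ n) s - (∑ j, Φ j) / (N * (s - 1))‖ ≤ (∑ j, ‖Φ j‖) * (C * √‖s‖) := by
  refine ⟨√(2 * N) * ∑' n : ℕ, ((n : ℝ) + 1) ^ (-(3 / 2) : ℝ) + 1,
    add_nonneg (mul_nonneg (by positivity) (tsum_nonneg fun n => by positivity)) zero_le_one,
    fun Φ s hs => ?_⟩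
  have hsum := ZMod.LSeriesSummable_of_one_lt_re Φ hs
  have hshift : LSeries (fun n => Φ n) s =
      ∑' n : ℕ, Φ ((n + 1 : ℕ) : ZMod N) * ((n + 1 : ℕ) : ℂ) ^ (-s) := by
    rw [LSeries, hsum.tsum_eq_zero_add, LSeries.term_zero, zero_add]
    refine tsum_congr fun n => ?_
    rw [LSeries.term_of_ne_zero n.succ_ne_zero, cpow_neg, div_eq_mul_inv]
  have hsum' : Summable fun n : ℕ => Φ ((n + 1 : ℕ) : ZMod N) * ((n + 1 : ℕ) : ℂ) ^ (-s) := by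
    refine ((summable_nat_add_iff 1).mpr hsum).congr fun n => ?_
    rw [LSeries.term_of_ne_zero n.succ_ne_zero, cpow_neg, div_eq_mul_inv]
  have hclass (j : ZMod N) :
      ∑' i : ℕ, Φ ((j.val + N * i + 1 : ℕ) : ZMod N) * ((j.val + N * i + 1 : ℕ) : ℂ) ^ (-s) -
        Φ (j + 1) / (N * (s - 1)) =
      Φ (j + 1) * (∑' i : ℕ, ((j.val + 1 + N * i : ℕ) : ℂ) ^ (-s) - 1 / (N * (s - 1))) := by
    rw [mul_sub (Φ (j + 1)), mul_one_div, ← tsum_mul_left]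
    congr 2 with i
    rw [add_right_comm]
    simp
  rw [hshift, Nat.sumByResidueClasses hsum' N, ← Equiv.sum_comp (Equiv.addRight (1 : ZMod N)) Φ,
    ← Equiv.sum_comp (Equiv.addRight (1 : ZMod N)) (‖Φ ·‖), sum_div, ← sum_sub_distrib, sum_mul]
  refine norm_sum_le_of_le _ fun j _ => ?_
  rw [Equiv.coe_addRight, hclass, norm_mul]
  gcongr
  exact norm_tsum_progression_sub_le hs (by simp) j.val_lt

lemma exists_norm_LSeries_char_sub_le :
    ∃ C ≥ 0, ∀ χ : DirichletCharacter ℂ N, ∀ s : ℂ, 1 < s.re →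
      ‖LSeries (fun n => χ n) s - (∑ j, χ j) / (N * (s - 1))‖ ≤ C * √‖s‖ := by
  obtain ⟨C, hC0, hC⟩ := exists_norm_LSeries_sub_le N
  refine ⟨N * C, by positivity, fun χ s hs => (hC χ s hs).trans ?_⟩
  rw [← mul_assoc]
  gcongr
  calc ∑ j, ‖χ j‖ ≤ ∑ _ : ZMod N, (1 : ℝ) := sum_le_sum fun j _ => χ.norm_le_one j
    _ = N := by simp

lemma exists_norm_LSeries_le_of_ne_one :
    ∃ C ≥ 0, ∀ χ : DirichletCharacter ℂ N, χ ≠ 1 → ∀ s : ℂ, 1 < s.re →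
      ‖LSeries (fun n => χ n) s‖ ≤ C * √‖s‖ := by
  obtain ⟨C, hC0, hC⟩ := exists_norm_LSeries_char_sub_le N
  refine ⟨C, hC0, fun χ hχ s hs => ?_⟩
  simpa [MulChar.sum_eq_zero_of_ne_one hχ] using hC χ s hs

lemma exists_norm_LSeries_le :
    ∃ C ≥ 0, ∀ χ : DirichletCharacter ℂ N, ∀ s : ℂ, 1 < s.re →
      ‖LSeries (fun n => χ n) s‖ ≤ C * √‖s‖ + 1 / ‖s - 1‖ := by
  obtain ⟨C, hC0, hC⟩ := exists_norm_LSeries_char_sub_le N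
  refine ⟨C, hC0, fun χ s hs => ?_⟩
  have hmean : ‖(∑ j, χ j) / (N * (s - 1))‖ ≤ 1 / ‖s - 1‖ := by
    rw [← div_div, norm_div]
    gcongr
    rw [norm_div, norm_natCast, div_le_one (by simp [NeZero.pos N])]
    exact (norm_sum_le_of_le _ fun j _ => χ.norm_le_one j).trans_eq (by simp)
  calc ‖LSeries (fun n => χ n) s‖
      ≤ ‖LSeries (fun n => χ n) s - (∑ j, χ j) / (N * (s - 1))‖ +
          ‖(∑ j, χ j) / (N * (s - 1))‖ := norm_le_norm_sub_add _ _
    _ ≤ C * √‖s‖ + 1 / ‖s - 1‖ := add_le_add (hC χ s hs) hmean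

end Modulus

lemma exists_norm_riemannZeta_sub_le :
    ∃ C ≥ 0, ∀ s : ℂ, 1 < s.re → ‖riemannZeta s - 1 / (s - 1)‖ ≤ C * √‖s‖ := by
  obtain ⟨C, hC0, hC⟩ := exists_norm_LSeries_char_sub_le 1
  refine ⟨C, hC0, fun s hs => ?_⟩
  have h := hC 1 s hs
  rw [DirichletCharacter.LSeries_modOne_eq, LSeries_one_eq_riemannZeta hs] at h
  simpa [sum_const, MulChar.one_apply (isUnit_of_subsingleton _)] using h

/-! ### The Dirichlet series `∑ χ(n) τ(n)⁻¹ n⁻ˢ` -/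

lemma norm_natCast_cpow_neg_le_inv {n : ℕ} (hn : n ≠ 0) {s : ℂ} (hs : 1 ≤ s.re) :
    ‖(n : ℂ) ^ (-s)‖ ≤ (n : ℝ)⁻¹ := by
  exact_mod_cast norm_ofReal_cpow_neg_le_inv (x := n)
    (by exact_mod_cast Nat.one_le_iff_ne_zero.2 hn) hs

lemma norm_natCast_cpow_neg_sub_inv_le {n : ℕ} (hn : n ≠ 0) {s : ℂ} (hs : 1 ≤ s.re) :
    ‖(n : ℂ) ^ (-s) - (n : ℂ)⁻¹‖ ≤ ‖s - 1‖ * Real.log n * (n : ℝ)⁻¹ := by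
  simpa using norm_ofReal_cpow_neg_sub_inv_le (x := n)
    (by exact_mod_cast Nat.one_le_iff_ne_zero.2 hn) hs

lemma inv_prime_le_half {p : ℕ} (hp : p.Prime) : (p : ℝ)⁻¹ ≤ 1 / 2 := by
  rw [one_div]
  exact inv_anti₀ two_pos (by exact_mod_cast hp.two_le)

lemma norm_prime_cpow_neg_le_half {p : ℕ} (hp : p.Prime) {s : ℂ} (hs : 1 ≤ s.re) :
    ‖(p : ℂ) ^ (-s)‖ ≤ 1 / 2 :=
  (norm_natCast_cpow_neg_le_inv hp.ne_zero hs).trans (inv_prime_le_half hp)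

lemma changeLevel_natCast {M N : ℕ} (h : M ∣ N) (χ : DirichletCharacter ℂ M) (n : ℕ) :
    DirichletCharacter.changeLevel h χ n = if n.Coprime N then χ n else 0 := by
  split_ifs with hn
  · exact_mod_cast DirichletCharacter.changeLevel_eq_cast_of_dvd' χ h
      (Nat.isCoprime_iff_coprime.mpr hn)
  · exact MulChar.map_nonunit _ (by rwa [ZMod.isUnit_iff_coprime])

/-- The coefficients `χ(n)/τ(n)`, with value `0` at `n = 0`. -/
noncomputable def recipTau {N : ℕ} (χ : DirichletCharacter ℂ N) (n : ℕ) : ℂ :=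
  χ n / (n.divisors.card : ℂ)

section Character

variable {N : ℕ} (χ : DirichletCharacter ℂ N)

lemma recipTau_zero : recipTau χ 0 = 0 := by simp [recipTau]

lemma norm_recipTau_le_one (n : ℕ) : ‖recipTau χ n‖ ≤ 1 := by
  rw [recipTau, norm_div, Complex.norm_natCast]
  rcases n.eq_zero_or_pos with rfl | hn
  · simp
  · have hτ : (1 : ℝ) ≤ n.divisors.card := by
      exact_mod_cast card_pos.2 (Nat.nonempty_divisors.2 hn.ne')
    exact (div_le_self (norm_nonneg _) hτ).trans (χ.norm_le_one n)

lemma recipTau_mul_of_coprime {m n : ℕ} (h : m.Coprime n) :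
    recipTau χ (m * n) = recipTau χ m * recipTau χ n := by
  simp only [recipTau, h.card_divisors_mul, Nat.cast_mul, map_mul]
  ring

lemma recipTau_prime_pow {p : ℕ} (hp : p.Prime) (e : ℕ) :
    recipTau χ (p ^ e) = χ p ^ e / (e + 1) := by
  simp [recipTau, Nat.divisors_prime_pow hp]

variable {s : ℂ}

lemma hasProd_LSeries_recipTau (hs : 1 < s.re) :
    HasProd (fun p : Nat.Primes => eulerFactor (χ p * (p : ℂ) ^ (-s)))
      (LSeries (recipTau χ) s) := by
  have hsum : LSeriesSummable (recipTau χ) s :=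
    LSeriesSummable_of_bounded_of_one_lt_re (fun n _ => norm_recipTau_le_one χ n) hs
  have hterm := LSeries.term_def₀ (recipTau_zero χ) s
  have h := EulerProduct.eulerProduct_hasProd (f := LSeries.term (recipTau χ) s)
    (by simp [recipTau])
    (fun {m n} hmn => by
      rw [hterm, hterm, hterm, recipTau_mul_of_coprime χ hmn, Nat.cast_mul,
        natCast_mul_natCast_cpow]
      ring)
    hsum.norm (by simp)
  refine h.congr_fun fun p => ?_
  rw [eulerFactor, lerchSeries]
  refine tsum_congr fun e => ?_
  rw [hterm, recipTau_prime_pow χ p.prop, Nat.cast_pow, ← natCast_cpow_natCast_mul,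
    mul_comm (e : ℂ), cpow_mul_nat, mul_pow, Nat.cast_one, div_mul_eq_mul_div]

lemma norm_char_mul_prime_cpow_neg_le_inv (hs : 1 ≤ s.re) (p : Nat.Primes) :
    ‖χ p * (p : ℂ) ^ (-s)‖ ≤ (p : ℝ)⁻¹ := by
  rw [norm_mul]
  exact (mul_le_of_le_one_left (norm_nonneg _) (χ.norm_le_one _)).trans
    (norm_natCast_cpow_neg_le_inv p.prop.ne_zero hs)

lemma hasProd_norm_eulerRatio (hs : 1 < s.re) :
    HasProd (fun p : Nat.Primes => ‖eulerRatio (χ p * (p : ℂ) ^ (-s))‖)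
      (‖LSeries (recipTau χ) s‖ ^ 2 / ‖LSeries (fun n => χ n) s‖) := by
  have hL : ‖LSeries (fun n => χ n) s‖ ≠ 0 :=
    norm_ne_zero_iff.2 (DirichletCharacter.LSeries_ne_zero_of_one_lt_re χ hs)
  have hτ := (hasProd_LSeries_recipTau χ hs).norm
  have hχ := (DirichletCharacter.LSeries_eulerProduct_hasProd χ hs).norm.inv₀ hL
  rw [sq, div_eq_mul_inv]
  refine ((hτ.mul hτ).mul hχ).congr_fun fun p => ?_
  rw [eulerRatio, norm_mul, norm_pow, sq, norm_inv, inv_inv]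

end Character

lemma LSeries_recipTau_changeLevel {M N : ℕ} [NeZero N] (h : M ∣ N) (χ : DirichletCharacter ℂ M)
    {s : ℂ} (hs : 1 < s.re) :
    LSeries (recipTau (DirichletCharacter.changeLevel h χ)) s =
      LSeries (recipTau χ) s * ∏ p ∈ N.primeFactors, (eulerFactor (χ p * (p : ℂ) ^ (-s)))⁻¹ := by
  classical
  set S : Finset Nat.Primes := N.primeFactors.subtype Nat.Prime
  have hmem (p : Nat.Primes) : p ∈ S ↔ (p : ℕ) ∣ N :=
    mem_subtype.trans
      (Nat.mem_primeFactors.trans ⟨fun hp => hp.2.1, fun hp => ⟨p.prop, hp, NeZero.ne N⟩⟩)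
  have hfin : HasProd
      (fun p : Nat.Primes => if (p : ℕ) ∣ N then (eulerFactor (χ p * (p : ℂ) ^ (-s)))⁻¹ else 1)
      (∏ p ∈ N.primeFactors, (eulerFactor (χ p * (p : ℂ) ^ (-s)))⁻¹) := by
    have hprod : ∏ p ∈ N.primeFactors, (eulerFactor (χ p * (p : ℂ) ^ (-s)))⁻¹ =
        ∏ p ∈ S, if (p : ℕ) ∣ N then (eulerFactor (χ p * (p : ℂ) ^ (-s)))⁻¹ else 1 := by
      rw [prod_congr rfl fun p hp => if_pos ((hmem p).1 hp)]
      exact (prod_subtype_of_mem (fun p : ℕ => (eulerFactor (χ p * (p : ℂ) ^ (-s)))⁻¹)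
        fun p hp => Nat.prime_of_mem_primeFactors hp).symm
    rw [hprod]
    exact hasProd_prod_of_ne_finset_one fun p hp => if_neg (mt (hmem p).2 hp)
  refine (hasProd_LSeries_recipTau _ hs).unique
    (((hasProd_LSeries_recipTau χ hs).mul hfin).congr_fun fun p => ?_)
  have hne := eulerFactor_ne_zero
    ((norm_char_mul_prime_cpow_neg_le_inv χ hs.le p).trans (inv_prime_le_half p.prop))
  simp only [changeLevel_natCast, p.prop.coprime_iff_not_dvd, ite_not]
  split_ifs
  · rw [zero_mul, eulerFactor_zero, mul_inv_cancel₀ hne]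
  · rw [mul_one]

/-! ### Comparison with the square root of the `L`-series -/

lemma summable_inv_prime_sq : Summable fun p : Nat.Primes => ((p : ℝ) ^ 2)⁻¹ :=
  (Real.summable_nat_pow_inv.mpr one_lt_two).comp_injective Nat.Primes.coe_nat_injective

lemma summable_log_prime_mul_inv_sq :
    Summable fun p : Nat.Primes => Real.log p * ((p : ℝ) ^ 2)⁻¹ := by
  have hmajor : Summable fun p : Nat.Primes => 2 * (p : ℝ) ^ (-(3 / 2) : ℝ) :=
    ((Real.summable_nat_rpow.mpr (by norm_num)).comp_injective
      Nat.Primes.coe_nat_injective).mul_left 2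
  refine hmajor.of_nonneg_of_le
    (fun p => mul_nonneg (Real.log_natCast_nonneg _) (by positivity)) fun p => ?_
  have hp : (0 : ℝ) < p := by exact_mod_cast p.prop.pos
  calc Real.log p * ((p : ℝ) ^ 2)⁻¹
      ≤ (p : ℝ) ^ (1 / 2 : ℝ) / (1 / 2) * ((p : ℝ) ^ 2)⁻¹ := by
        gcongr
        exact Real.log_le_rpow_div hp.le (by norm_num)
    _ = 2 * ((p : ℝ) ^ (1 / 2 : ℝ) * (p : ℝ) ^ (-2 : ℝ)) := by
        rw [Real.rpow_neg hp.le, Real.rpow_two]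
        ring
    _ = 2 * (p : ℝ) ^ (-(3 / 2) : ℝ) := by
        rw [← Real.rpow_add hp]
        norm_num

lemma exists_norm_eulerRatio_le :
    ∃ C ≥ 0, ∀ p : Nat.Primes, ∀ z : ℂ, ‖z‖ ≤ (p : ℝ)⁻¹ →
      ‖eulerRatio z‖ ≤ 1 + C * ((p : ℝ) ^ 2)⁻¹ := by
  obtain ⟨C, hC0, hC⟩ := exists_norm_eulerRatio_sub_one_le
  refine ⟨C, hC0, fun p z hz => ?_⟩
  calc ‖eulerRatio z‖ ≤ ‖(1 : ℂ)‖ + ‖eulerRatio z - 1‖ := norm_le_norm_add_norm_sub' _ _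
    _ ≤ 1 + C * ((p : ℝ)⁻¹) ^ 2 := by
        rw [norm_one]
        gcongr
        exact (hC z (hz.trans (inv_prime_le_half p.prop))).trans (by gcongr)
    _ = 1 + C * ((p : ℝ) ^ 2)⁻¹ := by rw [inv_pow]

lemma prod_one_add_le_exp_tsum {ι : Type*} {a : ι → ℝ} (ha : Summable a) (ha0 : ∀ i, 0 ≤ a i)
    (S : Finset ι) : ∏ i ∈ S, (1 + a i) ≤ Real.exp (∑' i, a i) := by
  calc ∏ i ∈ S, (1 + a i) ≤ ∏ i ∈ S, Real.exp (a i) :=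
        prod_le_prod (fun i _ => add_nonneg zero_le_one (ha0 i)) fun i _ => by
          rw [add_comm]
          exact Real.add_one_le_exp _
    _ = Real.exp (∑ i ∈ S, a i) := (Real.exp_sum _ _).symm
    _ ≤ Real.exp (∑' i, a i) := Real.exp_le_exp.mpr (ha.sum_le_tsum _ fun i _ => ha0 i)

lemma exists_norm_LSeries_recipTau_sq_le :
    ∃ W ≥ 0, ∀ (N : ℕ) (χ : DirichletCharacter ℂ N) (s : ℂ), 1 < s.re →
      ‖LSeries (recipTau χ) s‖ ^ 2 ≤ W * ‖LSeries (fun n => χ n) s‖ := by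
  obtain ⟨C, hC0, hC⟩ := exists_norm_eulerRatio_le
  refine ⟨Real.exp (∑' p : Nat.Primes, C * ((p : ℝ) ^ 2)⁻¹), (Real.exp_pos _).le,
    fun N χ s hs => ?_⟩
  have hL : 0 < ‖LSeries (fun n => χ n) s‖ :=
    norm_pos_iff.2 (DirichletCharacter.LSeries_ne_zero_of_one_lt_re χ hs)
  rw [← div_le_iff₀ hL]
  refine le_of_tendsto' (hasProd_norm_eulerRatio χ hs) fun S => ?_
  exact (prod_le_prod (fun p _ => norm_nonneg _) fun p _ =>
      hC p _ (norm_char_mul_prime_cpow_neg_le_inv χ hs.le p)).trans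
    (prod_one_add_le_exp_tsum (summable_inv_prime_sq.mul_left C) (fun p => by positivity) S)

section PrimeFactors

lemma two_pow_card_primeFactors_le {n : ℕ} (hn : n ≠ 0) :
    2 ^ n.primeFactors.card ≤ n.divisors.card := by
  rw [Nat.card_divisors hn, ← prod_const]
  refine prod_le_prod' fun p hp => Nat.succ_le_succ ?_
  exact (Nat.prime_of_mem_primeFactors hp).factorization_pos_of_dvd hn
    (Nat.dvd_of_mem_primeFactors hp)

lemma two_pow_card_primeFactors_mul_le {m n : ℕ} (hm : m ≠ 0) (hn : n ≠ 0) :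
    2 ^ (m * n).primeFactors.card ≤ m.divisors.card * n.divisors.card := by
  calc 2 ^ (m * n).primeFactors.card ≤ 2 ^ (m.primeFactors.card + n.primeFactors.card) := by
        rw [Nat.primeFactors_mul hm hn]
        exact Nat.pow_le_pow_right two_pos (card_union_le _ _)
    _ = 2 ^ m.primeFactors.card * 2 ^ n.primeFactors.card := pow_add _ _ _
    _ ≤ m.divisors.card * n.divisors.card :=
        Nat.mul_le_mul (two_pow_card_primeFactors_le hm) (two_pow_card_primeFactors_le hn)

lemma sum_log_primeFactors_le {n : ℕ} (hn : n ≠ 0) :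
    ∑ p ∈ n.primeFactors, Real.log p ≤ Real.log n := by
  rw [← Real.log_prod fun p hp => Nat.cast_ne_zero.2 (Nat.prime_of_mem_primeFactors hp).ne_zero,
    ← Nat.cast_prod]
  refine Real.log_le_log ?_ ?_
  · exact_mod_cast prod_pos fun p hp => (Nat.prime_of_mem_primeFactors hp).pos
  · exact_mod_cast Nat.le_of_dvd (Nat.pos_of_ne_zero hn) (Nat.prod_primeFactors_dvd n)

end PrimeFactors

lemma norm_LSeries_changeLevel_le {M N : ℕ} [NeZero N] (h : M ∣ N) (χ : DirichletCharacter ℂ M)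
    {s : ℂ} (hs : 1 < s.re) :
    ‖LSeries (fun n => DirichletCharacter.changeLevel h χ n) s‖ ≤
      2 ^ N.primeFactors.card * ‖LSeries (fun n => χ n) s‖ := by
  rw [DirichletCharacter.LSeries_changeLevel h χ hs, norm_mul, mul_comm, norm_prod, ← prod_const]
  gcongr with p hp
  have hp := Nat.prime_of_mem_primeFactors hp
  have hz := (norm_char_mul_prime_cpow_neg_le_inv χ hs.le ⟨p, hp⟩).trans (inv_prime_le_half hp)
  calc ‖1 - χ p * (p : ℂ) ^ (-s)‖ ≤ ‖(1 : ℂ)‖ + ‖χ p * (p : ℂ) ^ (-s)‖ := norm_sub_le _ _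
    _ ≤ 1 + 1 / 2 := by rw [norm_one]; gcongr
    _ ≤ 2 := by norm_num

/-! ### The principal character -/

/-- `∑ τ(n)⁻¹ n⁻ˢ`. -/
noncomputable def recipTauSeries (s : ℂ) : ℂ := LSeries (recipTau (1 : DirichletCharacter ℂ 1)) s

/-- The inverse of the part at the primes dividing `M` of the Euler product of
`recipTauSeries`. -/
noncomputable def removedFactors (M : ℕ) (s : ℂ) : ℂ :=
  ∏ p ∈ M.primeFactors, (eulerFactor ((p : ℂ) ^ (-s)))⁻¹

lemma LSeries_recipTau_one (M : ℕ) [NeZero M] {s : ℂ} (hs : 1 < s.re) :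
    LSeries (recipTau (1 : DirichletCharacter ℂ M)) s = recipTauSeries s * removedFactors M s := by
  have h := LSeries_recipTau_changeLevel (one_dvd M) 1 hs
  simpa [removedFactors, recipTauSeries, MulChar.one_apply (isUnit_of_subsingleton _)] using h

lemma hasProd_norm_eulerRatio_prime {s : ℂ} (hs : 1 < s.re) :
    HasProd (fun p : Nat.Primes => ‖eulerRatio ((p : ℂ) ^ (-s))‖)
      (‖recipTauSeries s‖ ^ 2 / ‖riemannZeta s‖) := by
  have h := hasProd_norm_eulerRatio (1 : DirichletCharacter ℂ 1) hs
  rw [DirichletCharacter.LSeries_modOne_eq, LSeries_one_eq_riemannZeta hs] at h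
  simpa [recipTauSeries, MulChar.one_apply (isUnit_of_subsingleton _)] using h

lemma one_le_fP (p : ℕ) : 1 ≤ fP p :=
  le_add_of_nonneg_right (tsum_nonneg fun j => by positivity)

lemma eulerFactor_inv_prime {p : ℕ} (hp : p.Prime) : eulerFactor (p : ℂ)⁻¹ = fP p := by
  have hz : ‖(p : ℂ)⁻¹‖ < 1 := by
    rw [norm_inv, Complex.norm_natCast]
    exact (inv_prime_le_half hp).trans_lt one_half_lt_one
  rw [eulerFactor_eq_one_add hz, lerchSeries, ← tsum_mul_left, fP, ofReal_add, ofReal_one,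
    ofReal_tsum]
  congr 2 with e
  push_cast
  rw [inv_pow, pow_succ]
  field_simp

lemma norm_eulerRatio_inv_prime {p : ℕ} (hp : p.Prime) :
    ‖eulerRatio (p : ℂ)⁻¹‖ = (fP p * (1 - 1 / (p : ℝ)) ^ ((1 : ℝ) / 2)) ^ 2 := by
  have hp1 : 0 ≤ 1 - 1 / (p : ℝ) := by
    rw [one_div]
    linarith [inv_prime_le_half hp]
  have hreal : (fP p : ℂ) ^ 2 * (1 - (p : ℂ)⁻¹) = ((fP p ^ 2 * (1 - 1 / (p : ℝ)) : ℝ) : ℂ) := by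
    push_cast
    rw [one_div]
  rw [eulerRatio, eulerFactor_inv_prime hp, hreal, norm_real, Real.norm_of_nonneg (by positivity),
    mul_pow, ← Real.sqrt_eq_rpow, Real.sq_sqrt hp1]

lemma hasProd_norm_eulerRatio_inv_prime :
    HasProd (fun p : Nat.Primes => ‖eulerRatio (p : ℂ)⁻¹‖) (Real.pi * f0 ^ 2) := by
  set x : Nat.Primes → ℝ := fun p => fP p * (1 - 1 / (p : ℝ)) ^ ((1 : ℝ) / 2)
  have hx0 (p : Nat.Primes) : 0 ≤ x p := by
    have hp1 : 0 ≤ 1 - 1 / (p : ℝ) := by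
      rw [one_div]
      linarith [inv_prime_le_half p.prop]
    exact mul_nonneg (zero_le_one.trans (one_le_fP p)) (Real.rpow_nonneg hp1 _)
  have hmult : Multipliable x := by
    obtain ⟨C, -, hC⟩ := exists_norm_eulerRatio_sub_one_le
    have hsum : Summable fun p => |x p - 1| := by
      refine (summable_inv_prime_sq.mul_left C).of_nonneg_of_le (fun _ => abs_nonneg _) fun p => ?_
      calc |x p - 1| ≤ |x p - 1| * (x p + 1) :=
            le_mul_of_one_le_right (abs_nonneg _) (by linarith [hx0 p])
        _ = |‖eulerRatio (p : ℂ)⁻¹‖ - ‖(1 : ℂ)‖| := by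
            rw [norm_eulerRatio_inv_prime p.prop, norm_one,
              ← abs_of_nonneg (by linarith [hx0 p] : 0 ≤ x p + 1), ← abs_mul]
            congr 1
            ring
        _ ≤ ‖eulerRatio (p : ℂ)⁻¹ - 1‖ := abs_norm_sub_norm_le _ _
        _ ≤ C * ‖(p : ℂ)⁻¹‖ ^ 2 := hC _ (by simpa using inv_prime_le_half p.prop)
        _ = C * ((p : ℝ) ^ 2)⁻¹ := by rw [norm_inv, Complex.norm_natCast, inv_pow]
    simpa using multipliable_one_add_of_summable (f := fun p => x p - 1) (by simpa using hsum)
  have hval : Real.pi * f0 ^ 2 = (∏' p, x p) * ∏' p, x p := by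
    rw [f0, mul_pow, div_pow, Real.sq_sqrt Real.pi_pos.le, one_pow, sq (∏' _, _), ← mul_assoc,
      mul_one_div_cancel Real.pi_ne_zero, one_mul]
  rw [hval]
  refine (hmult.hasProd.mul hmult.hasProd).congr_fun fun p => ?_
  rw [norm_eulerRatio_inv_prime p.prop, sq]

lemma exists_abs_norm_eulerRatio_prime_sub_le :
    ∃ K ≥ 0, ∀ s : ℂ, 1 ≤ s.re → ∀ p : Nat.Primes,
      |‖eulerRatio ((p : ℂ) ^ (-s))‖ - ‖eulerRatio (p : ℂ)⁻¹‖| ≤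
        K * (Real.log p * ((p : ℝ) ^ 2)⁻¹) * ‖s - 1‖ := by
  obtain ⟨K, hK0, hK⟩ := exists_norm_eulerRatio_sub_le
  refine ⟨2 * K, by positivity, fun s hs p => ?_⟩
  have hz : ‖(p : ℂ) ^ (-s)‖ ≤ (p : ℝ)⁻¹ := norm_natCast_cpow_neg_le_inv p.prop.ne_zero hs
  have hw : ‖(p : ℂ)⁻¹‖ ≤ (p : ℝ)⁻¹ := by rw [norm_inv, Complex.norm_natCast]
  calc |‖eulerRatio ((p : ℂ) ^ (-s))‖ - ‖eulerRatio (p : ℂ)⁻¹‖|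
      ≤ ‖eulerRatio ((p : ℂ) ^ (-s)) - eulerRatio (p : ℂ)⁻¹‖ := abs_norm_sub_norm_le _ _
    _ ≤ K * (‖(p : ℂ) ^ (-s)‖ + ‖(p : ℂ)⁻¹‖) * ‖(p : ℂ) ^ (-s) - (p : ℂ)⁻¹‖ :=
        hK _ _ (hz.trans (inv_prime_le_half p.prop)) (hw.trans (inv_prime_le_half p.prop))
    _ ≤ K * ((p : ℝ)⁻¹ + (p : ℝ)⁻¹) * (‖s - 1‖ * Real.log p * (p : ℝ)⁻¹) := by
        gcongr
        exact norm_natCast_cpow_neg_sub_inv_le p.prop.ne_zero hs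
    _ = 2 * K * (Real.log p * ((p : ℝ) ^ 2)⁻¹) * ‖s - 1‖ := by rw [sq, mul_inv]; ring

lemma exists_abs_norm_recipTauSeries_sq_div_sub_le :
    ∃ C ≥ 0, ∀ s : ℂ, 1 < s.re →
      |‖recipTauSeries s‖ ^ 2 / ‖riemannZeta s‖ - Real.pi * f0 ^ 2| ≤ C * ‖s - 1‖ := by
  obtain ⟨B, hB0, hB⟩ := exists_norm_eulerRatio_le
  obtain ⟨K, hK0, hK⟩ := exists_abs_norm_eulerRatio_prime_sub_le
  refine ⟨Real.exp (∑' p : Nat.Primes, B * ((p : ℝ) ^ 2)⁻¹) *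
    ∑' p : Nat.Primes, K * (Real.log p * ((p : ℝ) ^ 2)⁻¹), mul_nonneg (Real.exp_pos _).le
    (tsum_nonneg fun p => mul_nonneg (by positivity)
      (mul_nonneg (Real.log_natCast_nonneg _) (by positivity))), fun s hs => ?_⟩
  have hz (p : Nat.Primes) : ‖(p : ℂ) ^ (-s)‖ ≤ (p : ℝ)⁻¹ :=
    norm_natCast_cpow_neg_le_inv p.prop.ne_zero hs.le
  have hw (p : Nat.Primes) : ‖(p : ℂ)⁻¹‖ ≤ (p : ℝ)⁻¹ := by rw [norm_inv, Complex.norm_natCast]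
  refine le_of_tendsto' ((hasProd_norm_eulerRatio_prime hs).sub
    hasProd_norm_eulerRatio_inv_prime).abs fun S => ?_
  calc |∏ p ∈ S, ‖eulerRatio ((p : ℂ) ^ (-s))‖ - ∏ p ∈ S, ‖eulerRatio (p : ℂ)⁻¹‖|
      ≤ (∏ p ∈ S, (1 + B * ((p : ℝ) ^ 2)⁻¹)) *
          ∑ p ∈ S, ‖‖eulerRatio ((p : ℂ) ^ (-s))‖ - ‖eulerRatio (p : ℂ)⁻¹‖‖ :=
        norm_prod_sub_prod_le S (fun p _ => le_add_of_nonneg_right (by positivity))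
          (fun p _ => (norm_norm _).trans_le (hB p _ (hz p)))
          fun p _ => (norm_norm _).trans_le (hB p _ (hw p))
    _ ≤ Real.exp (∑' p : Nat.Primes, B * ((p : ℝ) ^ 2)⁻¹) *
          ((∑' p : Nat.Primes, K * (Real.log p * ((p : ℝ) ^ 2)⁻¹)) * ‖s - 1‖) := by
        gcongr
        · exact prod_one_add_le_exp_tsum (summable_inv_prime_sq.mul_left B)
            (fun p => by positivity) S
        · refine (sum_le_sum fun p _ => hK s hs.le p).trans ?_
          rw [← sum_mul]
          gcongr
          exact (summable_log_prime_mul_inv_sq.mul_left _).sum_le_tsum _ fun p _ =>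
            mul_nonneg (by positivity) (mul_nonneg (Real.log_natCast_nonneg _) (by positivity))
    _ = _ := (mul_assoc _ _ _).symm

section RemovedFactors

variable {M : ℕ} {s : ℂ}

lemma norm_removedFactors_le (hs : 1 ≤ s.re) :
    ‖removedFactors M s‖ ≤ 2 ^ M.primeFactors.card := by
  rw [removedFactors, ← prod_const, norm_prod]
  exact prod_le_prod (fun _ _ => norm_nonneg _) fun p hp =>
    norm_inv_eulerFactor_le_two
      (norm_prime_cpow_neg_le_half (Nat.prime_of_mem_primeFactors hp) hs)

lemma removedFactors_one (M : ℕ) : removedFactors M 1 = ((∏ p ∈ M.primeFactors, fP p)⁻¹ : ℝ) := by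
  rw [removedFactors, ← prod_inv_distrib, ofReal_prod]
  refine prod_congr rfl fun p hp => ?_
  rw [cpow_neg_one, eulerFactor_inv_prime (Nat.prime_of_mem_primeFactors hp), ofReal_inv]

end RemovedFactors

lemma exists_norm_removedFactors_sub_le :
    ∃ C ≥ 0, ∀ M ≠ 0, ∀ s : ℂ, 1 ≤ s.re →
      ‖removedFactors M s - removedFactors M 1‖ ≤
        2 ^ M.primeFactors.card * (C * ‖s - 1‖ * Real.log M) := by
  obtain ⟨C, hC0, hC⟩ := exists_norm_inv_eulerFactor_sub_le
  refine ⟨C, hC0, fun M hM s hs => ?_⟩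
  have hprime (p : ℕ) (hp : p ∈ M.primeFactors) : p.Prime := Nat.prime_of_mem_primeFactors hp
  have h1 : 1 ≤ (1 : ℂ).re := le_rfl
  refine (norm_prod_sub_prod_le M.primeFactors (M := fun _ => 2) (fun _ _ => one_le_two)
    (fun p hp => norm_inv_eulerFactor_le_two (norm_prime_cpow_neg_le_half (hprime p hp) hs))
    fun p hp => norm_inv_eulerFactor_le_two
      (norm_prime_cpow_neg_le_half (hprime p hp) h1)).trans ?_
  rw [prod_const]
  gcongr
  calc ∑ p ∈ M.primeFactors,
        ‖(eulerFactor ((p : ℂ) ^ (-s)))⁻¹ - (eulerFactor ((p : ℂ) ^ (-1 : ℂ)))⁻¹‖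
      ≤ ∑ p ∈ M.primeFactors, C * ‖s - 1‖ * Real.log p := by
        refine sum_le_sum fun p hp => ?_
        refine (hC _ _ (norm_prime_cpow_neg_le_half (hprime p hp) hs)
          (norm_prime_cpow_neg_le_half (hprime p hp) h1)).trans ?_
        rw [cpow_neg_one, mul_assoc]
        gcongr
        refine (norm_natCast_cpow_neg_sub_inv_le (hprime p hp).ne_zero hs).trans ?_
        exact mul_le_of_le_one_right (mul_nonneg (norm_nonneg _) (Real.log_natCast_nonneg _))
          (Nat.cast_inv_le_one p)
    _ ≤ C * ‖s - 1‖ * Real.log M := by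
        rw [← mul_sum]
        gcongr
        exact sum_log_primeFactors_le hM

/-! ### A Plancherel formula for general Dirichlet series -/

section Plancherel

open scoped ComplexConjugate Real

variable {σ : ℝ}

lemma integrable_inv_sq_add_sq (hσ : σ ≠ 0) : Integrable fun t : ℝ => (σ ^ 2 + t ^ 2)⁻¹ := by
  refine ((integrable_inv_one_add_sq.comp_div hσ).const_mul (σ ^ 2)⁻¹).congr
    (.of_forall fun t => ?_)
  simp only [← mul_inv]
  congr 1
  field_simp

lemma integrable_comp_abs {E : Type*} [NormedAddCommGroup E] {f : ℝ → E}
    (hf : IntegrableOn f (Set.Ioi 0)) : Integrable fun t => f |t| := by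
  have hpos : IntegrableOn (fun t => f |t|) (Set.Ioi 0) :=
    hf.congr_fun (fun x hx => by rw [abs_of_pos hx]) measurableSet_Ioi
  have hneg : IntegrableOn (fun t => f |t|) (Set.Iic 0) := by
    rw [integrableOn_Iic_iff_integrableOn_Iio]
    refine ((integrable_indicator_iff measurableSet_Ioi).2 hf).comp_neg.integrableOn.congr_fun
      (fun x hx => ?_) measurableSet_Iio
    have hx : x < 0 := hx
    simp only [abs_of_neg hx, Set.indicator_of_mem (Set.mem_Ioi.2 (neg_pos.2 hx))]
  simpa only [Set.Iic_union_Ioi, integrableOn_univ] using hneg.union hpos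

lemma integrable_exp_neg_mul_abs {a : ℝ} (ha : 0 < a) :
    Integrable fun x : ℝ => Real.exp (-(a * |x|)) :=
  integrable_comp_abs (f := fun x => Real.exp (-(a * x))) <| by
    simpa only [neg_mul] using integrableOn_exp_mul_Ioi (neg_neg_of_pos ha) 0

lemma integral_cexp_mul_exp_neg_mul_abs {a : ℝ} (ha : 0 < a) (w : ℝ) :
    ∫ x : ℝ, cexp (w * x * I) * Real.exp (-(a * |x|)) = 2 * a / (a ^ 2 + w ^ 2) := by
  have hre (v : ℝ) : (a + v * I : ℂ) ≠ 0 := fun h => ha.ne' (by simpa using congrArg re h)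
  have hpos : Set.EqOn (fun x : ℝ => cexp ((-a + w * I) * x))
      (fun x : ℝ => cexp (w * x * I) * Real.exp (-(a * |x|))) (Set.Ioi 0) := fun x hx => by
    simp only [abs_of_pos (Set.mem_Ioi.1 hx), ofReal_exp, ← Complex.exp_add]
    push_cast
    ring_nf
  have hneg : Set.EqOn (fun x : ℝ => cexp ((a + w * I) * x))
      (fun x : ℝ => cexp (w * x * I) * Real.exp (-(a * |x|))) (Set.Iic 0) := fun x hx => by
    simp only [abs_of_nonpos (Set.mem_Iic.1 hx), ofReal_exp, ← Complex.exp_add]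
    push_cast
    ring_nf
  have hare : (-a + w * I : ℂ).re < 0 := by simpa using ha
  have hbre : 0 < (a + w * I : ℂ).re := by simpa using ha
  rw [← intervalIntegral.integral_Iic_add_Ioi
      ((integrableOn_exp_mul_complex_Iic hbre 0).congr_fun hneg measurableSet_Iic)
      ((integrableOn_exp_mul_complex_Ioi hare 0).congr_fun hpos measurableSet_Ioi),
    ← setIntegral_congr_fun measurableSet_Iic hneg, ← setIntegral_congr_fun measurableSet_Ioi hpos,
    integral_exp_mul_complex_Ioi hare, integral_exp_mul_complex_Iic hbre]
  have hconj : (a - w * I : ℂ) ≠ 0 := by simpa [sub_eq_add_neg] using hre (-w)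
  have hfactor : (a ^ 2 + w ^ 2 : ℂ) = (a + w * I) * (a - w * I) := by
    linear_combination (w : ℂ) ^ 2 * I_sq
  rw [hfactor, show (-a + w * I : ℂ) = -(a - w * I) by ring]
  simp only [ofReal_zero, mul_zero, Complex.exp_zero]
  field_simp [hre w]
  ring

lemma fourier_exp_neg_mul_abs (hσ : 0 < σ) (w : ℝ) :
    FourierTransform.fourier (fun x : ℝ => (Real.exp (-(2 * π * σ * |x|)) : ℂ)) w =
      ((σ / π * (σ ^ 2 + w ^ 2)⁻¹ : ℝ) : ℂ) := by
  have hπ : (π : ℂ) ≠ 0 := ofReal_ne_zero.2 Real.pi_ne_zero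
  have hden : (σ ^ 2 + w ^ 2 : ℂ) ≠ 0 := mod_cast (by positivity : σ ^ 2 + w ^ 2 ≠ 0)
  have h := integral_cexp_mul_exp_neg_mul_abs (mul_pos Real.two_pi_pos hσ) (-(2 * π * w))
  rw [Real.fourier_real_eq_integral_exp_smul]
  convert h using 1
  · refine integral_congr_ae (.of_forall fun x => ?_)
    simp only [smul_eq_mul]
    push_cast
    ring_nf
  · push_cast
    rw [show ((2 * π * σ) ^ 2 + (-(2 * π * w)) ^ 2 : ℂ) = (2 * π) ^ 2 * (σ ^ 2 + w ^ 2) by ring]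
    field_simp

/-- By Fourier inversion from the transform of `e^{-2πσ|x|}`. -/
lemma integral_cexp_mul_inv_sq_add_sq (hσ : 0 < σ) (u : ℝ) :
    ∫ t : ℝ, cexp ((u * t : ℝ) * I) * ((σ ^ 2 + t ^ 2)⁻¹ : ℝ) =
      ((π / σ * Real.exp (-(σ * |u|)) : ℝ) : ℂ) := by
  set f : ℝ → ℂ := fun x => (Real.exp (-(2 * π * σ * |x|)) : ℂ)
  have hF : FourierTransform.fourier f = fun w : ℝ => ((σ / π * (σ ^ 2 + w ^ 2)⁻¹ : ℝ) : ℂ) :=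
    funext (fourier_exp_neg_mul_abs hσ)
  have hf : Integrable f := (integrable_exp_neg_mul_abs (mul_pos Real.two_pi_pos hσ)).ofReal
  have hFint : Integrable (FourierTransform.fourier f) :=
    hF ▸ ((integrable_inv_sq_add_sq hσ.ne').const_mul (σ / π)).ofReal
  have hinv := congrFun
    (Continuous.fourierInv_fourier_eq (by fun_prop : Continuous f) hf hFint) (u / (2 * π))
  have habs : 2 * π * σ * |u / (2 * π)| = σ * |u| := by
    rw [abs_div, abs_of_pos Real.two_pi_pos]
    field_simp
  simp only [Real.fourierInv_eq', hF, f, habs] at hinv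
  have hne : ((σ / π : ℝ) : ℂ) ≠ 0 := ofReal_ne_zero.2 (div_pos hσ Real.pi_pos).ne'
  apply mul_left_cancel₀ hne
  rw [← ofReal_mul, show σ / π * (π / σ * Real.exp (-(σ * |u|))) = Real.exp (-(σ * |u|)) by
    field_simp, ← hinv, ← integral_const_mul]
  refine integral_congr_ae (.of_forall fun t => ?_)
  have hinner : 2 * π * inner ℝ t (u / (2 * π)) = u * t := by
    simp only [RCLike.inner_apply, conj_trivial]
    field_simp
  simp only [hinner, smul_eq_mul]
  push_cast
  ring

lemma rpow_neg_mul_rpow_neg_mul_exp {x y : ℝ} (hx : 0 < x) (hy : 0 < y) (σ : ℝ) :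
    x ^ (-σ) * y ^ (-σ) * Real.exp (-(σ * |Real.log y - Real.log x|)) =
      max x y ^ (-(2 * σ)) := by
  wlog hxy : x ≤ y generalizing x y
  · rw [max_comm, ← this hy hx (le_of_not_ge hxy), abs_sub_comm, mul_comm (x ^ _)]
  rw [max_eq_right hxy, abs_of_nonneg (sub_nonneg.2 (Real.log_le_log hx hxy)),
    Real.rpow_def_of_pos hx, Real.rpow_def_of_pos hy, Real.rpow_def_of_pos hy, ← Real.exp_add,
    ← Real.exp_add]
  ring_nf

lemma ofReal_cpow_neg_eq {x : ℝ} (hx : 0 < x) (σ t : ℝ) :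
    (x : ℂ) ^ (-(σ + t * I)) = (x ^ (-σ) : ℝ) * cexp (-(Real.log x * t) * I) := by
  rw [cpow_def_of_ne_zero (ofReal_ne_zero.2 hx.ne'), ← ofReal_log hx.le, Real.rpow_def_of_pos hx,
    ofReal_exp, ← Complex.exp_add]
  push_cast
  ring_nf

section Terms

variable {a b : ℂ} {x y : ℝ}

lemma norm_mul_ofReal_cpow_neg (hx : a ≠ 0 → 0 < x) (σ t : ℝ) :
    ‖a * (x : ℂ) ^ (-(σ + t * I))‖ = ‖a‖ * x ^ (-σ) := by
  rcases eq_or_ne a 0 with rfl | ha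
  · simp only [zero_mul, norm_zero]
  · rw [norm_mul, norm_cpow_eq_rpow_re_of_pos (hx ha)]
    simp

lemma mul_ofReal_cpow_neg_mul_conj (hx : a ≠ 0 → 0 < x) (hy : b ≠ 0 → 0 < y) (σ t : ℝ) :
    a * (x : ℂ) ^ (-(σ + t * I)) * conj (b * (y : ℂ) ^ (-(σ + t * I))) =
      a * conj b * (x ^ (-σ) * y ^ (-σ) : ℝ) *
        cexp (((Real.log y - Real.log x) * t : ℝ) * I) := by
  rcases eq_or_ne a 0 with rfl | ha
  · simp only [zero_mul]
  rcases eq_or_ne b 0 with rfl | hb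
  · simp only [zero_mul, map_zero, mul_zero]
  rw [ofReal_cpow_neg_eq (hx ha), ofReal_cpow_neg_eq (hy hb),
    show ((((Real.log y - Real.log x) * t : ℝ) : ℂ) * I) =
      -(Real.log x * t) * I + -(Real.log y * t) * -I by push_cast; ring, Complex.exp_add]
  simp only [map_mul, map_neg, conj_ofReal, ← exp_conj, conj_I]
  push_cast
  ring

lemma integrable_mul_ofReal_cpow_neg_mul_conj (hx : a ≠ 0 → 0 < x) (hy : b ≠ 0 → 0 < y)
    (hσ : σ ≠ 0) :
    Integrable fun t : ℝ => a * (x : ℂ) ^ (-(σ + t * I)) *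
      conj (b * (y : ℂ) ^ (-(σ + t * I))) * ((σ ^ 2 + t ^ 2)⁻¹ : ℝ) := by
  simp only [mul_ofReal_cpow_neg_mul_conj hx hy, mul_assoc (_ * ((_ : ℝ) : ℂ))]
  exact ((integrable_inv_sq_add_sq hσ).ofReal.bdd_mul (by fun_prop)
    (.of_forall fun t => (norm_exp_ofReal_mul_I _).le)).const_mul _

lemma integral_mul_ofReal_cpow_neg_mul_conj (hx : a ≠ 0 → 0 < x) (hy : b ≠ 0 → 0 < y)
    (hσ : 0 < σ) :
    ∫ t : ℝ, a * (x : ℂ) ^ (-(σ + t * I)) * conj (b * (y : ℂ) ^ (-(σ + t * I))) *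
        ((σ ^ 2 + t ^ 2)⁻¹ : ℝ) =
      π / σ * (a * conj b * (max x y ^ (-(2 * σ)) : ℝ)) := by
  simp only [mul_ofReal_cpow_neg_mul_conj hx hy, mul_assoc (_ * ((_ : ℝ) : ℂ))]
  rw [integral_const_mul, integral_cexp_mul_inv_sq_add_sq hσ]
  rcases eq_or_ne a 0 with rfl | ha
  · simp only [zero_mul, mul_zero]
  rcases eq_or_ne b 0 with rfl | hb
  · simp only [zero_mul, map_zero, mul_zero]
  rw [← rpow_neg_mul_rpow_neg_mul_exp (hx ha) (hy hb)]
  push_cast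
  ring

end Terms

theorem hasSum_mul_conj_mul_max_rpow {ι κ : Type*} [Countable ι] [Countable κ] {a : ι → ℂ}
    {b : κ → ℂ} {x : ι → ℝ} {y : κ → ℝ} (hx : ∀ i, a i ≠ 0 → 0 < x i) (hy : ∀ j, b j ≠ 0 → 0 < y j)
    (hσ : 0 < σ) (ha : Summable fun i => ‖a i‖ * x i ^ (-σ))
    (hb : Summable fun j => ‖b j‖ * y j ^ (-σ)) :
    HasSum (fun p : ι × κ =>
        π / σ * (a p.1 * conj (b p.2) * (max (x p.1) (y p.2) ^ (-(2 * σ)) : ℝ)))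
      (∫ t : ℝ, (∑' i, a i * (x i : ℂ) ^ (-(σ + t * I))) *
        conj (∑' j, b j * (y j : ℂ) ^ (-(σ + t * I))) * ((σ ^ 2 + t ^ 2)⁻¹ : ℝ)) := by
  set F : ι × κ → ℝ → ℂ := fun p t => a p.1 * (x p.1 : ℂ) ^ (-(σ + t * I)) *
    conj (b p.2 * (y p.2 : ℂ) ^ (-(σ + t * I))) * ((σ ^ 2 + t ^ 2)⁻¹ : ℝ)
  have hF (p : ι × κ) : Integrable (F p) :=
    integrable_mul_ofReal_cpow_neg_mul_conj (hx p.1) (hy p.2) hσ.ne'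
  have hnorm (p : ι × κ) (t : ℝ) :
      ‖F p t‖ = ‖a p.1‖ * x p.1 ^ (-σ) * (‖b p.2‖ * y p.2 ^ (-σ)) * (σ ^ 2 + t ^ 2)⁻¹ := by
    simp only [F, norm_mul _ ((_ : ℝ) : ℂ), norm_mul _ (conj _), RCLike.norm_conj,
      norm_mul_ofReal_cpow_neg (hx _), norm_mul_ofReal_cpow_neg (hy _), norm_real,
      Real.norm_of_nonneg (by positivity : 0 ≤ (σ ^ 2 + t ^ 2)⁻¹)]
  have hsum : Summable fun p => ∫ t, ‖F p t‖ := by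
    simp only [hnorm, integral_const_mul]
    exact (summable_mul_of_summable_norm ha.norm hb.norm).mul_right _
  have htsum (t : ℝ) : ∑' p, F p t = (∑' i, a i * (x i : ℂ) ^ (-(σ + t * I))) *
        conj (∑' j, b j * (y j : ℂ) ^ (-(σ + t * I))) * ((σ ^ 2 + t ^ 2)⁻¹ : ℝ) := by
    have ha' : Summable fun i => ‖a i * (x i : ℂ) ^ (-(σ + t * I))‖ :=
      ha.congr fun i => (norm_mul_ofReal_cpow_neg (hx i) σ t).symm
    have hb' : Summable fun j => ‖conj (b j * (y j : ℂ) ^ (-(σ + t * I)))‖ :=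
      hb.congr fun j => by rw [RCLike.norm_conj, norm_mul_ofReal_cpow_neg (hy j)]
    rw [tsum_mul_right, ← tsum_mul_tsum_of_summable_norm ha' hb', conj_tsum]
  have h := hasSum_integral_of_summable_integral_norm hF hsum
  simp only [htsum] at h
  exact h.congr_fun fun p => (integral_mul_ofReal_cpow_neg_mul_conj (hx p.1) (hy p.2) hσ).symm

end Plancherel

/-! ### Integrals with a logarithmic singularity -/

section LogSingularity

open Set

variable {ε Λ θ : ℝ}

lemma integrableOn_one_div_sqrt_sq_add_sq (hε : ε ≠ 0) (a b : ℝ) :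
    IntegrableOn (fun x => 1 / √(ε ^ 2 + x ^ 2)) (Ioc a b) := by
  have hc : Continuous fun x : ℝ => 1 / √(ε ^ 2 + x ^ 2) :=
    continuous_const.div (by fun_prop) fun x => (Real.sqrt_pos.2 (by positivity)).ne'
  exact hc.integrableOn_Ioc

lemma setIntegral_one_div_sqrt_sq_add_sq (hε : 0 < ε) (hθ : 0 ≤ θ) :
    ∫ x in Ioc 0 θ, 1 / √(ε ^ 2 + x ^ 2) = Real.arsinh (θ / ε) := by
  rw [← intervalIntegral.integral_of_le hθ,
    intervalIntegral.integral_eq_sub_of_hasDerivAt (f := fun x => Real.arsinh (x / ε))]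
  · simp only [zero_div, Real.arsinh_zero, sub_zero]
  · intro x _
    refine ((Real.hasDerivAt_arsinh (x / ε)).comp x ((hasDerivAt_id x).div_const ε)).congr_deriv ?_
    rw [show ε ^ 2 + x ^ 2 = ε ^ 2 * (1 + (x / ε) ^ 2) by field_simp,
      Real.sqrt_mul (by positivity), Real.sqrt_sq hε.le]
    field_simp
  · exact (intervalIntegrable_iff_integrableOn_Ioc_of_le hθ).2
      (integrableOn_one_div_sqrt_sq_add_sq hε.ne' 0 θ)

lemma abs_arsinh_inv_div_sub_log_le (hε : 0 < ε) (hε1 : ε ≤ 1) (hΛ : 1 ≤ Λ) :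
    |Real.arsinh (Λ⁻¹ / ε) - Real.log (1 / ε)| ≤ 2 + Real.log Λ := by
  have hθ : 0 < Λ⁻¹ := by positivity
  have hθ1 : Λ⁻¹ ≤ 1 := inv_le_one_of_one_le₀ hΛ
  have hl : 0 ≤ Real.log Λ := Real.log_nonneg hΛ
  have hfactor : Λ⁻¹ / ε + √(1 + (Λ⁻¹ / ε) ^ 2) = 1 / ε * (Λ⁻¹ + √(ε ^ 2 + Λ⁻¹ ^ 2)) := by
    rw [show ε ^ 2 + Λ⁻¹ ^ 2 = ε ^ 2 * (1 + (Λ⁻¹ / ε) ^ 2) by field_simp,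
      Real.sqrt_mul (by positivity), Real.sqrt_sq hε.le]
    field_simp
  have hsqrt : √(ε ^ 2 + Λ⁻¹ ^ 2) ≤ 2 := by
    rw [Real.sqrt_le_left (by norm_num)]
    nlinarith
  have hsqrt0 := Real.sqrt_nonneg (ε ^ 2 + Λ⁻¹ ^ 2)
  have hpos : 0 < Λ⁻¹ + √(ε ^ 2 + Λ⁻¹ ^ 2) := by positivity
  rw [Real.arsinh, hfactor, Real.log_mul (by positivity) hpos.ne', add_sub_cancel_left, abs_le]
  constructor
  · have := Real.log_le_log hθ (by linarith : Λ⁻¹ ≤ Λ⁻¹ + √(ε ^ 2 + Λ⁻¹ ^ 2))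
    rw [Real.log_inv] at this
    linarith
  · linarith [Real.log_le_sub_one_of_pos hpos]

/-- The piecewise function `Λ + x^{-1/2}` on `(0, Λ⁻¹]`, `x⁻¹` on `(Λ⁻¹, 1]`, `x^{-3/2}` on
`(1, ∞)`, which dominates `I(x) - 1_{x ≤ Λ⁻¹} M / √(ε² + x²)` for the integrands `I` of interest. -/
noncomputable def logMajorant (Λ x : ℝ) : ℝ :=
  if x ≤ Λ⁻¹ then Λ + x ^ (-(1 / 2) : ℝ) else if x ≤ 1 then x⁻¹ else x ^ (-(3 / 2) : ℝ)

lemma logMajorant_eqOn_Ioc_zero :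
    EqOn (fun x => Λ + x ^ (-(1 / 2) : ℝ)) (logMajorant Λ) (Ioc 0 Λ⁻¹) :=
  fun _ hx => (if_pos hx.2).symm

lemma logMajorant_eqOn_Ioc_inv : EqOn (fun x => x⁻¹) (logMajorant Λ) (Ioc Λ⁻¹ 1) :=
  fun _ hx => ((if_neg hx.1.not_ge).trans (if_pos hx.2)).symm

lemma logMajorant_eqOn_Ioi_one (hΛ : 1 ≤ Λ) :
    EqOn (fun x => x ^ (-(3 / 2) : ℝ)) (logMajorant Λ) (Ioi 1) :=
  fun _ hx => ((if_neg ((inv_le_one_of_one_le₀ hΛ).trans_lt hx).not_ge).trans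
    (if_neg (not_le.2 hx))).symm

lemma integrableOn_logMajorant_and_setIntegral_le (hΛ : 1 ≤ Λ) :
    IntegrableOn (logMajorant Λ) (Ioi 0) ∧
      ∫ x in Ioi 0, logMajorant Λ x ≤ 5 + Real.log Λ := by
  have hθ : 0 < Λ⁻¹ := by positivity
  have hθ1 : Λ⁻¹ ≤ 1 := inv_le_one_of_one_le₀ hΛ
  have hrpow : IntervalIntegrable (fun x : ℝ => x ^ (-(1 / 2) : ℝ)) volume 0 Λ⁻¹ :=
    intervalIntegral.intervalIntegrable_rpow' (by norm_num)
  have hconst : IntervalIntegrable (fun _ => Λ) volume 0 Λ⁻¹ := intervalIntegrable_const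
  have hinv : ContinuousOn (fun x : ℝ => x⁻¹) (Icc Λ⁻¹ 1) :=
    continuousOn_inv₀.mono fun x hx => (hθ.trans_le hx.1).ne'
  have h1 := ((hconst.add hrpow).1).congr_fun logMajorant_eqOn_Ioc_zero measurableSet_Ioc
  have h2 := ((hinv.integrableOn_Icc (μ := volume)).mono_set Set.Ioc_subset_Icc_self).congr_fun
    logMajorant_eqOn_Ioc_inv measurableSet_Ioc
  have h3 := (integrableOn_Ioi_rpow_of_lt (by norm_num : (-(3 / 2) : ℝ) < -1) one_pos).congr_fun
    (logMajorant_eqOn_Ioi_one hΛ) measurableSet_Ioi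
  have h23 : IntegrableOn (logMajorant Λ) (Ioi Λ⁻¹) := by
    simpa only [Ioc_union_Ioi_eq_Ioi hθ1] using h2.union h3
  rw [← Ioc_union_Ioi_eq_Ioi hθ.le]
  refine ⟨h1.union h23, ?_⟩
  rw [setIntegral_union (Ioc_disjoint_Ioi le_rfl) measurableSet_Ioi h1 h23,
    ← Ioc_union_Ioi_eq_Ioi hθ1, setIntegral_union (Ioc_disjoint_Ioi le_rfl) measurableSet_Ioi h2 h3,
    ← setIntegral_congr_fun measurableSet_Ioc logMajorant_eqOn_Ioc_zero,
    ← setIntegral_congr_fun measurableSet_Ioc logMajorant_eqOn_Ioc_inv,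
    ← setIntegral_congr_fun measurableSet_Ioi (logMajorant_eqOn_Ioi_one hΛ),
    ← intervalIntegral.integral_of_le hθ.le, ← intervalIntegral.integral_of_le hθ1,
    intervalIntegral.integral_add hconst hrpow, integral_rpow (.inl (by norm_num)),
    integral_inv_of_pos hθ one_pos, integral_Ioi_rpow_of_lt (by norm_num) one_pos]
  have hroot : Λ⁻¹ ^ (1 / 2 : ℝ) ≤ 1 := Real.rpow_le_one hθ.le hθ1 (by norm_num)
  norm_num [inv_mul_cancel₀ (zero_lt_one.trans_le hΛ).ne']
  norm_num at hroot
  linarith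

/-- The model for the integrands below: `1 / √(ε² + t²)` truncated to `|t| ≤ Λ⁻¹`. -/
noncomputable def truncatedPole (ε Λ t : ℝ) : ℝ :=
  (Ioc 0 Λ⁻¹).indicator (fun x => 1 / √(ε ^ 2 + x ^ 2)) |t|

lemma integrable_truncatedPole (hε : ε ≠ 0) : Integrable (truncatedPole ε Λ) :=
  integrable_comp_abs ((integrable_indicator_iff measurableSet_Ioc).2
    (integrableOn_one_div_sqrt_sq_add_sq hε _ _)).integrableOn

lemma integral_truncatedPole (hε : 0 < ε) (hΛ : 0 ≤ Λ) :
    ∫ t, truncatedPole ε Λ t = 2 * Real.arsinh (Λ⁻¹ / ε) := by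
  simp only [truncatedPole]
  rw [integral_comp_abs, setIntegral_indicator measurableSet_Ioc,
    inter_eq_self_of_subset_right Set.Ioc_subset_Ioi_self,
    setIntegral_one_div_sqrt_sq_add_sq hε (inv_nonneg.2 hΛ)]

theorem norm_integral_sub_two_mul_log_le {I : ℝ → ℂ} {K M : ℝ} (hI : AEStronglyMeasurable I)
    (hε : 0 < ε) (hε1 : ε ≤ 1) (hΛ : 1 ≤ Λ) (hK : 0 ≤ K)
    (hnear : ∀ t, t ≠ 0 → |t| ≤ Λ⁻¹ →
      ‖I t - ((M * (1 / √(ε ^ 2 + |t| ^ 2)) : ℝ) : ℂ)‖ ≤ K * (Λ + |t| ^ (-(1 / 2) : ℝ)))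
    (hmid : ∀ t, t ≠ 0 → |t| ≤ 1 → ‖I t‖ ≤ K * |t|⁻¹)
    (hfar : ∀ t, 1 < |t| → ‖I t‖ ≤ K * |t| ^ (-(3 / 2) : ℝ)) :
    ‖(∫ t, I t) - ((2 * M * Real.log (1 / ε) : ℝ) : ℂ)‖ ≤
      (10 * K + 4 * |M|) * (1 + Real.log Λ) := by
  obtain ⟨hBint, hBle⟩ := integrableOn_logMajorant_and_setIntegral_le hΛ
  have hmodel : Integrable fun t => ((M * truncatedPole ε Λ t : ℝ) : ℂ) :=
    ((integrable_truncatedPole hε.ne').const_mul M).ofReal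
  have hbound : ∀ᵐ t : ℝ,
      ‖I t - ((M * truncatedPole ε Λ t : ℝ) : ℂ)‖ ≤ K * logMajorant Λ |t| := by
    filter_upwards [Measure.ae_ne volume (0 : ℝ)] with t ht
    rw [logMajorant, truncatedPole]
    rcases le_or_gt |t| Λ⁻¹ with h | h
    · rw [if_pos h, indicator_of_mem (Set.mem_Ioc.2 ⟨abs_pos.2 ht, h⟩)]
      exact hnear t ht h
    · rw [if_neg h.not_ge, indicator_of_notMem fun hmem => h.not_ge hmem.2, mul_zero,
        ofReal_zero, sub_zero]
      split_ifs with h1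
      exacts [hmid t ht h1, hfar t (not_le.1 h1)]
  have hmajor := (integrable_comp_abs hBint).const_mul K
  have hdiff := hmajor.mono' (hI.sub hmodel.aestronglyMeasurable) hbound
  have hIint : Integrable I := (hdiff.add hmodel).congr (.of_forall fun t => sub_add_cancel _ _)
  have hintegral := norm_integral_le_of_norm_le hmajor hbound
  rw [integral_sub hIint hmodel, integral_complex_ofReal, integral_const_mul,
    integral_truncatedPole hε (zero_le_one.trans hΛ), integral_const_mul,
    integral_comp_abs] at hintegral
  have hmain : ‖((M * (2 * Real.arsinh (Λ⁻¹ / ε)) : ℝ) : ℂ) - (2 * M * Real.log (1 / ε) : ℝ)‖ ≤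
      2 * |M| * (2 + Real.log Λ) := by
    rw [← ofReal_sub, ← mul_assoc, mul_comm M, ← mul_sub, norm_real, norm_mul, norm_mul,
      Real.norm_ofNat]
    exact mul_le_mul_of_nonneg_left (abs_arsinh_inv_div_sub_log_le hε hε1 hΛ) (by positivity)
  have hK' := mul_le_mul_of_nonneg_left hBle hK
  have hlog := Real.log_nonneg hΛ
  nlinarith [norm_sub_le_norm_sub_add_norm_sub (∫ t, I t)
    ((M * (2 * Real.arsinh (Λ⁻¹ / ε)) : ℝ) : ℂ) (2 * M * Real.log (1 / ε) : ℝ),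
    mul_nonneg hK hlog, mul_nonneg (abs_nonneg M) hlog, abs_nonneg M]

end LogSingularity

/-! ### The residue class and coprimality conditions -/

section Progression

variable {N : ℕ}

/-- The coefficients `1_{gcd(n, r) = 1, n ≡ q (mod N)} / τ(n)` of the sums in the theorem, where
`r₀, r₁` and the classes `q₀, q₁` enter. -/
noncomputable def progressionCoeff (q : (ZMod N)ˣ) (r n : ℕ) : ℝ :=
  if n.Coprime r ∧ (n : ZMod N) = q then (n.divisors.card : ℝ)⁻¹ else 0

variable (q : (ZMod N)ˣ) (r : ℕ)

lemma progressionCoeff_nonneg (n : ℕ) : 0 ≤ progressionCoeff q r n := by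
  unfold progressionCoeff
  split_ifs <;> positivity

lemma progressionCoeff_zero : progressionCoeff q r 0 = 0 := by simp [progressionCoeff]

lemma progressionCoeff_le_one (n : ℕ) : progressionCoeff q r n ≤ 1 := by
  unfold progressionCoeff
  split_ifs
  · exact Nat.cast_inv_le_one _
  · exact zero_le_one

lemma ofReal_progressionCoeff_eq_sum_recipTau [NeZero N] (n : ℕ) :
    (progressionCoeff q r n : ℂ) = (N.totient : ℂ)⁻¹ * ∑ χ : DirichletCharacter ℂ N,
      χ (q : ZMod N)⁻¹ * recipTau (DirichletCharacter.changeLevel (dvd_mul_right N r) χ) n := by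
  simp only [recipTau, changeLevel_natCast]
  by_cases hn : n.Coprime (N * r)
  · have horth := DirichletCharacter.sum_char_inv_mul_char_eq ℂ q.isUnit (n : ZMod N)
    have hN : (N.totient : ℂ) ≠ 0 := by simpa using NeZero.ne N
    have hr : n.Coprime r := Nat.Coprime.coprime_mul_left_right hn
    simp only [if_pos hn, ← mul_div_assoc, ← sum_div, horth]
    by_cases hq : (n : ZMod N) = q
    · rw [progressionCoeff, if_pos ⟨hr, hq⟩]
      simp [hq, hN]
    · simp [progressionCoeff, hq, Ne.symm hq]
  · have hq : ¬(n.Coprime r ∧ (n : ZMod N) = q) := fun ⟨hr, hnq⟩ =>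
      hn (((ZMod.isUnit_iff_coprime n N).1 (hnq ▸ q.isUnit)).mul_right hr)
    simp [progressionCoeff, hq, hn]

/-- The Dirichlet series of `progressionCoeff`. -/
noncomputable def progressionSeries (s : ℂ) : ℂ :=
  LSeries (fun n => (progressionCoeff q r n : ℂ)) s

/-- The contribution of the trivial character to `progressionSeries`, which carries its singularity
at `s = 1`. -/
noncomputable def principalPart (N r : ℕ) (s : ℂ) : ℂ :=
  (N.totient : ℂ)⁻¹ * LSeries (recipTau (1 : DirichletCharacter ℂ (N * r))) s

lemma progressionSeries_eq_sum [NeZero N] {s : ℂ} (hs : 1 < s.re) :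
    progressionSeries q r s = (N.totient : ℂ)⁻¹ * ∑ χ : DirichletCharacter ℂ N,
      χ (q : ZMod N)⁻¹ *
        LSeries (recipTau (DirichletCharacter.changeLevel (dvd_mul_right N r) χ)) s := by
  have hsum (χ : DirichletCharacter ℂ N) :
      LSeriesSummable (χ (q : ZMod N)⁻¹ •
        recipTau (DirichletCharacter.changeLevel (dvd_mul_right N r) χ)) s :=
    (LSeriesSummable_of_bounded_of_one_lt_re (fun n _ => norm_recipTau_le_one _ n) hs).smul _
  have hcoeff : (fun n => (progressionCoeff q r n : ℂ)) = (N.totient : ℂ)⁻¹ •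
      ∑ χ : DirichletCharacter ℂ N, χ (q : ZMod N)⁻¹ •
        recipTau (DirichletCharacter.changeLevel (dvd_mul_right N r) χ) := by
    ext n
    simp [ofReal_progressionCoeff_eq_sum_recipTau]
  simp only [progressionSeries, hcoeff, LSeries_smul, LSeries_sum fun χ _ => hsum χ]

end Progression

lemma norm_inv_totient_mul_sum_char_le {N : ℕ} [NeZero N] (S : Finset (DirichletCharacter ℂ N))
    (x : ZMod N) {a : DirichletCharacter ℂ N → ℂ} {B : ℝ} (hB : 0 ≤ B) (ha : ∀ χ ∈ S, ‖a χ‖ ≤ B) :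
    ‖(N.totient : ℂ)⁻¹ * ∑ χ ∈ S, χ x * a χ‖ ≤ B := by
  have hN : (0 : ℝ) < N.totient := by simpa using Nat.pos_of_neZero N
  have hcard : (S.card : ℝ) ≤ N.totient := by
    rw [← DirichletCharacter.card_eq_totient_of_hasEnoughRootsOfUnity ℂ N,
      Nat.card_eq_fintype_card]
    exact_mod_cast S.card_le_univ
  have hsum : ‖∑ χ ∈ S, χ x * a χ‖ ≤ N.totient * B := by
    refine (norm_sum_le_of_le (f := fun χ => χ x * a χ) (n := fun _ => B) S fun χ hχ => ?_).trans ?_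
    · rw [norm_mul]
      exact (mul_le_of_le_one_left (norm_nonneg _) (χ.norm_le_one x)).trans (ha χ hχ)
    · rw [sum_const, nsmul_eq_mul]
      gcongr
  rw [norm_mul, norm_inv, Complex.norm_natCast, inv_mul_le_iff₀ hN]
  exact hsum

section Bounds

variable (N : ℕ) [NeZero N]

lemma exists_norm_LSeries_recipTau_changeLevel_le :
    ∃ C ≥ 0, ∀ r ≠ 0, ∀ (χ : DirichletCharacter ℂ N) (s : ℂ), 1 < s.re →
      ‖LSeries (recipTau (DirichletCharacter.changeLevel (dvd_mul_right N r) χ)) s‖ ≤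
        C * r.divisors.card * √‖LSeries (fun n => χ n) s‖ := by
  obtain ⟨W, hW0, hW⟩ := exists_norm_LSeries_recipTau_sq_le
  refine ⟨√(W * N.divisors.card), by positivity, fun r hr χ s hs => ?_⟩
  have : NeZero (N * r) := ⟨mul_ne_zero (NeZero.ne N) hr⟩
  have hτ : (1 : ℝ) ≤ r.divisors.card := by
    exact_mod_cast card_pos.2 (Nat.nonempty_divisors.2 hr)
  have hω : (2 : ℝ) ^ (N * r).primeFactors.card ≤ N.divisors.card * r.divisors.card := by
    exact_mod_cast two_pow_card_primeFactors_mul_le (NeZero.ne N) hr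
  set ψ := DirichletCharacter.changeLevel (dvd_mul_right N r) χ
  refine abs_le_of_sq_le_sq' ?_ (by positivity) |>.2
  calc ‖LSeries (recipTau ψ) s‖ ^ 2 ≤ W * ‖LSeries (fun n => ψ n) s‖ := hW _ ψ s hs
    _ ≤ W * (N.divisors.card * r.divisors.card * ‖LSeries (fun n => χ n) s‖) := by
        gcongr
        exact (norm_LSeries_changeLevel_le (dvd_mul_right N r) χ hs).trans (by gcongr)
    _ ≤ W * (N.divisors.card * (r.divisors.card : ℝ) ^ 2 * ‖LSeries (fun n => χ n) s‖) := by
        gcongr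
        exact le_self_pow₀ hτ two_ne_zero
    _ = (√(W * N.divisors.card) * r.divisors.card * √‖LSeries (fun n => χ n) s‖) ^ 2 := by
        rw [mul_pow, mul_pow, Real.sq_sqrt (by positivity), Real.sq_sqrt (norm_nonneg _)]
        ring

lemma exists_norm_LSeries_recipTau_changeLevel_le_sqrt_sqrt_add :
    ∃ C ≥ 0, ∀ r ≠ 0, ∀ (χ : DirichletCharacter ℂ N) (s : ℂ), 1 < s.re →
      ‖LSeries (recipTau (DirichletCharacter.changeLevel (dvd_mul_right N r) χ)) s‖ ≤
        C * r.divisors.card * √(√‖s‖ + ‖s - 1‖⁻¹) := by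
  obtain ⟨C, hC0, hC⟩ := exists_norm_LSeries_recipTau_changeLevel_le N
  obtain ⟨D, hD0, hD⟩ := exists_norm_LSeries_le N
  refine ⟨C * √(D + 1), by positivity, fun r hr χ s hs => ?_⟩
  have hL : ‖LSeries (fun n => χ n) s‖ ≤ (D + 1) * (√‖s‖ + ‖s - 1‖⁻¹) := by
    have : 0 ≤ D * ‖s - 1‖⁻¹ := by positivity
    linarith [hD χ s hs, one_div ‖s - 1‖, Real.sqrt_nonneg ‖s‖]
  calc _ ≤ C * r.divisors.card * √‖LSeries (fun n => χ n) s‖ := hC r hr χ s hs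
    _ ≤ C * r.divisors.card * √((D + 1) * (√‖s‖ + ‖s - 1‖⁻¹)) := by gcongr
    _ = C * √(D + 1) * r.divisors.card * √(√‖s‖ + ‖s - 1‖⁻¹) := by
        rw [Real.sqrt_mul (by positivity)]
        ring

lemma exists_norm_progressionSeries_le :
    ∃ C ≥ 0, ∀ (q : (ZMod N)ˣ), ∀ r ≠ 0, ∀ s : ℂ, 1 < s.re →
      ‖progressionSeries q r s‖ ≤ C * r.divisors.card * √(√‖s‖ + ‖s - 1‖⁻¹) ∧
      ‖principalPart N r s‖ ≤ C * r.divisors.card * √(√‖s‖ + ‖s - 1‖⁻¹) := by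
  obtain ⟨C, hC0, hC⟩ := exists_norm_LSeries_recipTau_changeLevel_le_sqrt_sqrt_add N
  refine ⟨C, hC0, fun q r hr s hs => ⟨?_, ?_⟩⟩
  · rw [progressionSeries_eq_sum q r hs]
    exact norm_inv_totient_mul_sum_char_le univ _ (by positivity) fun χ _ => hC r hr χ s hs
  · have h := norm_inv_totient_mul_sum_char_le {1} 1 (by positivity)
      fun χ _ => hC r hr χ s hs
    simpa [principalPart] using h

lemma exists_norm_progressionSeries_sub_principalPart_le :
    ∃ C ≥ 0, ∀ (q : (ZMod N)ˣ), ∀ r ≠ 0, ∀ s : ℂ, 1 < s.re →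
      ‖progressionSeries q r s - principalPart N r s‖ ≤ C * r.divisors.card * √√‖s‖ := by
  classical
  obtain ⟨C, hC0, hC⟩ := exists_norm_LSeries_recipTau_changeLevel_le N
  obtain ⟨D, hD0, hD⟩ := exists_norm_LSeries_le_of_ne_one N
  refine ⟨C * √D, by positivity, fun q r hr s hs => ?_⟩
  have hq : IsUnit (q : ZMod N)⁻¹ := by
    rw [ZMod.inv_coe_unit]
    exact Units.isUnit _
  rw [progressionSeries_eq_sum q r hs, principalPart, ← mul_sub,
    ← add_sum_erase univ _ (mem_univ 1), MulChar.one_apply hq, one_mul,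
    DirichletCharacter.changeLevel_one, add_sub_cancel_left]
  refine norm_inv_totient_mul_sum_char_le _ _ (by positivity) fun χ hχ => ?_
  calc _ ≤ C * r.divisors.card * √‖LSeries (fun n => χ n) s‖ := hC r hr χ s hs
    _ ≤ C * r.divisors.card * √(D * √‖s‖) := by
        gcongr
        exact hD χ (ne_of_mem_erase hχ) s hs
    _ = C * √D * r.divisors.card * √√‖s‖ := by
        rw [Real.sqrt_mul hD0]
        ring

end Bounds

/-! ### The product of two series near `s = 1` -/

section NearOne

open scoped ComplexConjugate

lemma norm_le_re_add_abs_im {s : ℂ} (hs : 0 ≤ s.re) : ‖s‖ ≤ s.re + |s.im| := by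
  simpa [abs_of_nonneg hs] using norm_le_abs_re_add_abs_im s

lemma norm_sub_one_pos {s : ℂ} (hs : 1 < s.re) : 0 < ‖s - 1‖ :=
  norm_pos_iff.2 <| sub_ne_zero.2 fun h => by simp [h] at hs

lemma norm_sub_one_le_two {s : ℂ} (hs : 1 < s.re) (hs2 : s.re ≤ 2) (him : |s.im| ≤ 1) :
    ‖s - 1‖ ≤ 2 := by
  have h := norm_le_re_add_abs_im (s := s - 1) (by simpa using hs.le)
  simp only [sub_re, one_re, sub_im, one_im, sub_zero] at h
  linarith

lemma sqrt_norm_le_two {s : ℂ} (hs : 1 < s.re) (hs2 : s.re ≤ 2) (him : |s.im| ≤ 1) :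
    √‖s‖ ≤ 2 := by
  rw [Real.sqrt_le_left two_pos.le]
  linarith [norm_le_re_add_abs_im (s := s) (by linarith)]

/-- The constant of the main term for a general modulus `N`; for `N = 8` it is `S1`. -/
noncomputable def singularSeries (N r₀ r₁ : ℕ) : ℝ :=
  2 * f0 ^ 2 / ((N.totient : ℝ) ^ 2 * (∏ p ∈ (N * r₀).primeFactors, fP p) *
    ∏ p ∈ (N * r₁).primeFactors, fP p)

lemma singularSeries_nonneg (N r₀ r₁ : ℕ) : 0 ≤ singularSeries N r₀ r₁ := by
  have h (M : ℕ) : 0 ≤ ∏ p ∈ M.primeFactors, fP p :=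
    prod_nonneg fun p _ => zero_le_one.trans (one_le_fP p)
  have h₀ := h (N * r₀)
  have h₁ := h (N * r₁)
  unfold singularSeries
  positivity

lemma ofReal_pi_div_two_mul_singularSeries (N r₀ r₁ : ℕ) :
    ((Real.pi / 2 * singularSeries N r₀ r₁ : ℝ) : ℂ) = ((N.totient : ℂ) ^ 2)⁻¹ *
      ((Real.pi * f0 ^ 2 : ℝ) *
        (removedFactors (N * r₀) 1 * conj (removedFactors (N * r₁) 1))) := by
  rw [removedFactors_one, removedFactors_one, conj_ofReal, singularSeries]
  push_cast
  field_simp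

variable (N : ℕ) [NeZero N]

lemma norm_inv_totient_sq_le_one : ‖((N.totient : ℂ) ^ 2)⁻¹‖ ≤ 1 := by
  rw [norm_inv, norm_pow, Complex.norm_natCast]
  have hN : 1 ≤ N.totient := Nat.totient_pos.2 (Nat.pos_of_neZero N)
  exact inv_le_one_of_one_le₀ (one_le_pow₀ (by exact_mod_cast hN))

lemma singularSeries_le (r₀ r₁ : ℕ) : singularSeries N r₀ r₁ ≤ 2 * f0 ^ 2 := by
  have hprod (M : ℕ) : 1 ≤ ∏ p ∈ M.primeFactors, fP p := by
    simpa using prod_le_prod (s := M.primeFactors) (fun _ _ => zero_le_one) fun p _ => one_le_fP p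
  have hN : (1 : ℝ) ≤ N.totient := by
    exact_mod_cast Nat.totient_pos.2 (Nat.pos_of_neZero N)
  exact div_le_self (by positivity)
    (one_le_mul_of_one_le_of_one_le
      (one_le_mul_of_one_le_of_one_le (one_le_pow₀ hN) (hprod _)) (hprod _))

lemma exists_norm_progressionSeries_le_near :
    ∃ C ≥ 0, ∀ (q : (ZMod N)ˣ), ∀ r ≠ 0, ∀ s : ℂ, 1 < s.re → s.re ≤ 2 → |s.im| ≤ 1 →
      ‖progressionSeries q r s‖ ≤ C * r.divisors.card / √‖s - 1‖ ∧
      ‖principalPart N r s‖ ≤ C * r.divisors.card / √‖s - 1‖ ∧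
      ‖progressionSeries q r s - principalPart N r s‖ ≤ C * r.divisors.card := by
  obtain ⟨C, hC0, hC⟩ := exists_norm_progressionSeries_le N
  obtain ⟨D, hD0, hD⟩ := exists_norm_progressionSeries_sub_principalPart_le N
  refine ⟨C * √5 + D * √2, by positivity, fun q r hr s hs hs2 him => ?_⟩
  have hρ := norm_sub_one_pos hs
  have hsqrt := sqrt_norm_le_two hs hs2 him
  have hpole : √(√‖s‖ + ‖s - 1‖⁻¹) ≤ √5 / √‖s - 1‖ := by
    rw [← Real.sqrt_div (by norm_num)]
    refine Real.sqrt_le_sqrt ?_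
    rw [le_div_iff₀ hρ, add_mul, inv_mul_cancel₀ hρ.ne']
    nlinarith [norm_sub_one_le_two hs hs2 him]
  have hbound {x : ℝ} (hx : x ≤ C * r.divisors.card * √(√‖s‖ + ‖s - 1‖⁻¹)) :
      x ≤ (C * √5 + D * √2) * r.divisors.card / √‖s - 1‖ :=
    calc x ≤ C * r.divisors.card * (√5 / √‖s - 1‖) := hx.trans (by gcongr)
      _ = (C * √5) * r.divisors.card / √‖s - 1‖ := by ring
      _ ≤ _ := by
          gcongr
          exact le_add_of_nonneg_right (by positivity)
  obtain ⟨hF, hP⟩ := hC q r hr s hs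
  refine ⟨hbound hF, hbound hP, (hD q r hr s hs).trans ?_⟩
  calc D * r.divisors.card * √√‖s‖ ≤ D * r.divisors.card * √2 := by gcongr
    _ = D * √2 * r.divisors.card := by ring
    _ ≤ _ := by
        gcongr
        exact le_add_of_nonneg_left (by positivity)

lemma exists_norm_progressionSeries_mul_conj_sub_principalPart_le :
    ∃ C ≥ 0, ∀ (q₀ q₁ : (ZMod N)ˣ), ∀ r₀ ≠ 0, ∀ r₁ ≠ 0, ∀ s : ℂ, 1 < s.re → s.re ≤ 2 →
      |s.im| ≤ 1 → ‖progressionSeries q₀ r₀ s * conj (progressionSeries q₁ r₁ s) -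
        principalPart N r₀ s * conj (principalPart N r₁ s)‖ ≤
          C * (r₀.divisors.card * r₁.divisors.card) / √‖s - 1‖ := by
  obtain ⟨C, -, hC⟩ := exists_norm_progressionSeries_le_near N
  refine ⟨2 * C ^ 2, by positivity, fun q₀ q₁ r₀ hr₀ r₁ hr₁ s hs hs2 him => ?_⟩
  obtain ⟨-, hP₀, hsub₀⟩ := hC q₀ r₀ hr₀ s hs hs2 him
  obtain ⟨hF₁, -, hsub₁⟩ := hC q₁ r₁ hr₁ s hs hs2 him
  rw [← RCLike.norm_conj] at hF₁ hsub₁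
  rw [map_sub] at hsub₁
  refine (norm_mul_sub_mul_le hP₀ hF₁ hsub₀ hsub₁).trans_eq ?_
  ring

lemma exists_abs_norm_recipTauSeries_sq_sub_le :
    ∃ C ≥ 0, ∀ s : ℂ, 1 < s.re → s.re ≤ 2 → |s.im| ≤ 1 →
      |‖recipTauSeries s‖ ^ 2 - Real.pi * f0 ^ 2 / ‖s - 1‖| ≤ C := by
  obtain ⟨C, hC0, hC⟩ := exists_abs_norm_recipTauSeries_sq_div_sub_le
  obtain ⟨D, hD0, hD⟩ := exists_norm_riemannZeta_sub_le
  have := Real.pi_pos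
  refine ⟨D * 2 * (Real.pi * f0 ^ 2 + C * 2) + C, by positivity, fun s hs hs2 him => ?_⟩
  have hρ := norm_sub_one_pos hs
  have hζ0 : ‖riemannZeta s‖ ≠ 0 := norm_ne_zero_iff.2 (riemannZeta_ne_zero_of_one_lt_re hs)
  have hζ : ‖‖riemannZeta s‖ - ‖s - 1‖⁻¹‖ ≤ D * 2 := by
    rw [← norm_inv, ← one_div]
    refine (abs_norm_sub_norm_le _ _).trans ((hD s hs).trans ?_)
    gcongr
    exact sqrt_norm_le_two hs hs2 him
  have hratio : ‖‖recipTauSeries s‖ ^ 2 / ‖riemannZeta s‖‖ ≤ Real.pi * f0 ^ 2 + C * 2 := by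
    have h := (abs_le.1 (hC s hs)).2
    have hρ2 : C * ‖s - 1‖ ≤ C * 2 := by
      gcongr
      exact norm_sub_one_le_two hs hs2 him
    rw [Real.norm_of_nonneg (by positivity)]
    linarith
  have h := norm_mul_sub_mul_le (Real.norm_of_nonneg (inv_nonneg.2 hρ.le)).le hratio hζ (hC s hs)
  rw [mul_div_cancel₀ _ hζ0] at h
  rw [div_eq_inv_mul]
  refine h.trans_eq ?_
  field_simp

lemma exists_norm_removedFactors_mul_conj_le :
    ∃ C ≥ 0, ∀ r₀ ≠ 0, ∀ r₁ ≠ 0, ∀ s : ℂ, ∀ Λ : ℝ, 1 ≤ s.re →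
      Real.log (N * r₀ : ℕ) ≤ Λ → Real.log (N * r₁ : ℕ) ≤ Λ →
      ‖removedFactors (N * r₀) s * conj (removedFactors (N * r₁) s)‖ ≤
        C * (r₀.divisors.card * r₁.divisors.card) ∧
      ‖removedFactors (N * r₀) s * conj (removedFactors (N * r₁) s) -
        removedFactors (N * r₀) 1 * conj (removedFactors (N * r₁) 1)‖ ≤
          C * (r₀.divisors.card * r₁.divisors.card) * (‖s - 1‖ * Λ) := by
  obtain ⟨D, hD0, hD⟩ := exists_norm_removedFactors_sub_le
  have hbound (r : ℕ) (hr : r ≠ 0) (s : ℂ) (Λ : ℝ) (hs : 1 ≤ s.re)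
      (hΛ : Real.log (N * r : ℕ) ≤ Λ) :
      ‖removedFactors (N * r) s‖ ≤ N.divisors.card * r.divisors.card ∧
      ‖removedFactors (N * r) s - removedFactors (N * r) 1‖ ≤
        N.divisors.card * r.divisors.card * (D * (‖s - 1‖ * Λ)) := by
    have hω : (2 : ℝ) ^ (N * r).primeFactors.card ≤ N.divisors.card * r.divisors.card := by
      exact_mod_cast two_pow_card_primeFactors_mul_le (NeZero.ne N) hr
    refine ⟨(norm_removedFactors_le hs).trans hω,
      (hD _ (mul_ne_zero (NeZero.ne N) hr) s hs).trans ?_⟩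
    rw [← mul_assoc D]
    have := Real.log_natCast_nonneg (N * r)
    gcongr
  refine ⟨(N.divisors.card : ℝ) ^ 2 * (2 * D + 1), by positivity,
    fun r₀ hr₀ r₁ hr₁ s Λ hs hΛ₀ hΛ₁ => ?_⟩
  obtain ⟨hR₀, hsub₀⟩ := hbound r₀ hr₀ s Λ hs hΛ₀
  obtain ⟨hR₁, hsub₁⟩ := hbound r₁ hr₁ s Λ hs hΛ₁
  have hR₀one := (hbound r₀ hr₀ 1 Λ le_rfl hΛ₀).1
  rw [← RCLike.norm_conj] at hR₁ hsub₁
  rw [map_sub] at hsub₁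
  have hΛ : 0 ≤ Λ := (Real.log_natCast_nonneg _).trans hΛ₀
  have hT : 0 ≤ (N.divisors.card : ℝ) ^ 2 * (r₀.divisors.card * r₁.divisors.card) := by positivity
  constructor
  · rw [norm_mul]
    nlinarith [mul_le_mul hR₀ hR₁ (norm_nonneg _) (by positivity), mul_nonneg hD0 hT]
  · refine (norm_mul_sub_mul_le hR₀one hR₁ hsub₀ hsub₁).trans ?_
    nlinarith [mul_nonneg hT (mul_nonneg (norm_nonneg (s - 1)) hΛ)]

lemma principalPart_mul_conj (r₀ r₁ : ℕ) [NeZero r₀] [NeZero r₁] {s : ℂ} (hs : 1 < s.re) :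
    principalPart N r₀ s * conj (principalPart N r₁ s) = ((N.totient : ℂ) ^ 2)⁻¹ *
      ((‖recipTauSeries s‖ ^ 2 : ℝ) *
        (removedFactors (N * r₀) s * conj (removedFactors (N * r₁) s))) := by
  rw [principalPart, principalPart, LSeries_recipTau_one _ hs, LSeries_recipTau_one _ hs,
    ofReal_pow, ← mul_conj']
  simp only [map_mul, map_inv₀, conj_natCast]
  ring

lemma exists_norm_principalPart_mul_conj_sub_le :
    ∃ C ≥ 0, ∀ r₀ ≠ 0, ∀ r₁ ≠ 0, ∀ s : ℂ, ∀ Λ : ℝ, 1 < s.re → s.re ≤ 2 → |s.im| ≤ 1 →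
      Real.log (N * r₀ : ℕ) ≤ Λ → Real.log (N * r₁ : ℕ) ≤ Λ → 1 ≤ Λ →
      ‖principalPart N r₀ s * conj (principalPart N r₁ s) -
        ((Real.pi / 2 * singularSeries N r₀ r₁ / ‖s - 1‖ : ℝ) : ℂ)‖ ≤
          C * (r₀.divisors.card * r₁.divisors.card) * Λ := by
  obtain ⟨C, hC0, hC⟩ := exists_norm_removedFactors_mul_conj_le N
  obtain ⟨D, hD0, hD⟩ := exists_abs_norm_recipTauSeries_sq_sub_le
  have : 0 ≤ Real.pi * f0 ^ 2 := mul_nonneg Real.pi_nonneg (sq_nonneg _)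
  refine ⟨D * C + Real.pi * f0 ^ 2 * C, by positivity,
    fun r₀ hr₀ r₁ hr₁ s Λ hs hs2 him hΛ₀ hΛ₁ hΛ => ?_⟩
  have : NeZero r₀ := ⟨hr₀⟩
  have : NeZero r₁ := ⟨hr₁⟩
  have hρ := norm_sub_one_pos hs
  obtain ⟨hR, hRsub⟩ := hC r₀ hr₀ r₁ hr₁ s Λ hs.le hΛ₀ hΛ₁
  have hF : ‖((‖recipTauSeries s‖ ^ 2 : ℝ) : ℂ) - ((Real.pi * f0 ^ 2 / ‖s - 1‖ : ℝ) : ℂ)‖ ≤ D := by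
    rw [← ofReal_sub, norm_real]
    exact hD s hs hs2 him
  have hpole : ‖((Real.pi * f0 ^ 2 / ‖s - 1‖ : ℝ) : ℂ)‖ ≤ Real.pi * f0 ^ 2 / ‖s - 1‖ := by
    rw [norm_real, Real.norm_of_nonneg (by positivity)]
  have hmain : ((Real.pi / 2 * singularSeries N r₀ r₁ / ‖s - 1‖ : ℝ) : ℂ) =
      ((N.totient : ℂ) ^ 2)⁻¹ * ((Real.pi * f0 ^ 2 / ‖s - 1‖ : ℝ) *
        (removedFactors (N * r₀) 1 * conj (removedFactors (N * r₁) 1))) := by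
    rw [ofReal_div, ofReal_pi_div_two_mul_singularSeries, ofReal_div]
    ring
  rw [principalPart_mul_conj N r₀ r₁ hs, hmain, ← mul_sub, norm_mul]
  refine (mul_le_of_le_one_left (norm_nonneg _) (norm_inv_totient_sq_le_one N)).trans ?_
  refine (norm_mul_sub_mul_le hpole hR hF hRsub).trans ?_
  set T : ℝ := r₀.divisors.card * r₁.divisors.card
  calc D * (C * T) + Real.pi * f0 ^ 2 / ‖s - 1‖ * (C * T * (‖s - 1‖ * Λ))
      = D * (C * T) * 1 + Real.pi * f0 ^ 2 * (C * T) * Λ := by field_simp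
    _ ≤ D * (C * T) * Λ + Real.pi * f0 ^ 2 * (C * T) * Λ := by gcongr
    _ = (D * C + Real.pi * f0 ^ 2 * C) * T * Λ := by ring

end NearOne

/-! ### The integrand of Parseval's identity -/

section Weight

open scoped ComplexConjugate

/-- The factor `c^{1-s} \overline{d^{1-s}} Re(s)/|s|²` by which the rescalings `n₀c`, `n₁d` and the
kernel of Parseval's identity change the product of two Dirichlet series; it is normalised to be
`1` at `s = 1`. -/
noncomputable def parsevalWeight (c d : ℕ) (s : ℂ) : ℂ :=
  (c : ℂ) ^ (-(s - 1)) * conj ((d : ℂ) ^ (-(s - 1))) * ((s.re / ‖s‖ ^ 2 : ℝ) : ℂ)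

variable {c d : ℕ} {s : ℂ}

lemma norm_natCast_cpow_neg_sub_one_le_one (hc : c ≠ 0) (hs : 1 ≤ s.re) :
    ‖(c : ℂ) ^ (-(s - 1))‖ ≤ 1 := by
  rw [Complex.norm_natCast_cpow_of_pos (Nat.pos_of_ne_zero hc)]
  exact Real.rpow_le_one_of_one_le_of_nonpos
    (by exact_mod_cast Nat.one_le_iff_ne_zero.2 hc) (by simpa using hs)

lemma norm_parsevalWeight_le (hc : c ≠ 0) (hd : d ≠ 0) (hs : 1 ≤ s.re) :
    ‖parsevalWeight c d s‖ ≤ s.re / ‖s‖ ^ 2 := by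
  have h0 : 0 ≤ s.re / ‖s‖ ^ 2 := by positivity
  rw [parsevalWeight, norm_mul, norm_mul, RCLike.norm_conj, norm_real, Real.norm_of_nonneg h0]
  exact mul_le_of_le_one_left h0 (mul_le_one₀ (norm_natCast_cpow_neg_sub_one_le_one hc hs)
    (norm_nonneg _) (norm_natCast_cpow_neg_sub_one_le_one hd hs))

lemma re_div_norm_sq_le_one (hs : 1 ≤ s.re) : s.re / ‖s‖ ^ 2 ≤ 1 := by
  have hnorm : 1 ≤ ‖s‖ := hs.trans (re_le_norm s)
  exact (div_le_one (by positivity)).2 (by nlinarith [re_le_norm s])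

lemma abs_re_div_norm_sq_sub_one_le (hs : 1 ≤ s.re) : |s.re / ‖s‖ ^ 2 - 1| ≤ 2 * ‖s - 1‖ := by
  have hnorm : 1 ≤ ‖s‖ := hs.trans (re_le_norm s)
  have hsub : ‖s‖ - 1 ≤ ‖s - 1‖ := by simpa using norm_sub_norm_le s 1
  rw [abs_sub_comm, abs_of_nonneg (sub_nonneg.2 (re_div_norm_sq_le_one hs)),
    one_sub_div (by positivity), div_le_iff₀ (by positivity)]
  calc ‖s‖ ^ 2 - s.re ≤ (‖s‖ - 1) * (‖s‖ + 1) := by linarith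
    _ ≤ ‖s - 1‖ * (‖s‖ ^ 2 + ‖s‖ ^ 2) := by
        gcongr <;> nlinarith
    _ = 2 * ‖s - 1‖ * ‖s‖ ^ 2 := by ring

lemma norm_parsevalWeight_sub_one_le (hc : c ≠ 0) (hd : d ≠ 0) (hs : 1 ≤ s.re) {Λ : ℝ}
    (hcΛ : Real.log c ≤ Λ) (hdΛ : Real.log d ≤ Λ) :
    ‖parsevalWeight c d s - 1‖ ≤ ‖s - 1‖ * (2 * Λ + 2) := by
  have hpow {e : ℕ} (he : e ≠ 0) (heΛ : Real.log e ≤ Λ) :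
      ‖(e : ℂ) ^ (-(s - 1)) - 1‖ ≤ ‖s - 1‖ * Λ := by
    have h := norm_cpow_neg_sub_one_le (x := e) (z := s - 1)
      (by exact_mod_cast Nat.one_le_iff_ne_zero.2 he) (by simpa using hs)
    exact_mod_cast h.trans (by gcongr)
  have hd' : ‖conj ((d : ℂ) ^ (-(s - 1))) - 1‖ ≤ ‖s - 1‖ * Λ := by
    rw [← RCLike.norm_conj]
    simpa using hpow hd hdΛ
  have hkernel : ‖((s.re / ‖s‖ ^ 2 : ℝ) : ℂ) - 1‖ ≤ 2 * ‖s - 1‖ := by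
    rw [← ofReal_one, ← ofReal_sub, norm_real]
    exact abs_re_div_norm_sq_sub_one_le hs
  have hcd := norm_mul_sub_mul_le (a₁ := 1) (b₁ := 1) (A := 1) (B := 1) (by simp)
    ((RCLike.norm_conj _).trans_le (norm_natCast_cpow_neg_sub_one_le_one hd hs)) (hpow hc hcΛ) hd'
  have h := norm_mul_sub_mul_le (a₁ := 1 * 1) (b₁ := 1) (A := 1) (B := 1) (by simp)
    (by
      rw [norm_real, Real.norm_of_nonneg (by positivity)]
      exact re_div_norm_sq_le_one hs) hcd hkernel
  rw [mul_one (1 : ℂ), mul_one (1 : ℂ)] at h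
  refine h.trans_eq ?_
  ring

end Weight

lemma one_le_card_divisors_mul_card_divisors {m n : ℕ} (hm : m ≠ 0) (hn : n ≠ 0) :
    (1 : ℝ) ≤ m.divisors.card * n.divisors.card := by
  exact_mod_cast Nat.mul_pos (card_pos.2 (Nat.nonempty_divisors.2 hm))
    (card_pos.2 (Nat.nonempty_divisors.2 hn))

section Integrand

open scoped ComplexConjugate

/-- The integrand of Parseval's identity for the sum in the theorem, as a function on the
line `Re s = σ`. -/
noncomputable def parsevalIntegrand {N : ℕ} (q₀ q₁ : (ZMod N)ˣ) (r₀ r₁ c d : ℕ) (s : ℂ) : ℂ :=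
  progressionSeries q₀ r₀ s * conj (progressionSeries q₁ r₁ s) * parsevalWeight c d s

variable (N : ℕ) [NeZero N]

lemma exists_norm_parsevalIntegrand_le_of_abs_im_le_one :
    ∃ C ≥ 0, ∀ (q₀ q₁ : (ZMod N)ˣ), ∀ r₀ ≠ 0, ∀ r₁ ≠ 0, ∀ c d : ℕ, c ≠ 0 → d ≠ 0 →
      ∀ s : ℂ, 1 < s.re → s.re ≤ 2 → s.im ≠ 0 → |s.im| ≤ 1 → ‖parsevalIntegrand q₀ q₁ r₀ r₁ c d s‖ ≤
        C * (r₀.divisors.card * r₁.divisors.card) * |s.im|⁻¹ := by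
  obtain ⟨C, hC0, hC⟩ := exists_norm_progressionSeries_le_near N
  refine ⟨C ^ 2, by positivity, fun q₀ q₁ r₀ hr₀ r₁ hr₁ c d hc hd s hs hs2 him0 him => ?_⟩
  have hw := (norm_parsevalWeight_le hc hd hs.le).trans (re_div_norm_sq_le_one hs.le)
  have hρ : |s.im| ≤ ‖s - 1‖ := by simpa using abs_im_le_norm (s - 1)
  rw [parsevalIntegrand, norm_mul, norm_mul, RCLike.norm_conj]
  calc _ ≤ C * r₀.divisors.card / √‖s - 1‖ * (C * r₁.divisors.card / √‖s - 1‖) * 1 := by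
        gcongr
        exacts [(hC q₀ r₀ hr₀ s hs hs2 him).1, (hC q₁ r₁ hr₁ s hs hs2 him).1]
    _ = C ^ 2 * (r₀.divisors.card * r₁.divisors.card) * (√‖s - 1‖ ^ 2)⁻¹ := by ring
    _ ≤ C ^ 2 * (r₀.divisors.card * r₁.divisors.card) * |s.im|⁻¹ := by
        rw [Real.sq_sqrt (norm_nonneg _)]
        gcongr

lemma exists_norm_parsevalIntegrand_le_of_one_lt_abs_im :
    ∃ C ≥ 0, ∀ (q₀ q₁ : (ZMod N)ˣ), ∀ r₀ ≠ 0, ∀ r₁ ≠ 0, ∀ c d : ℕ, c ≠ 0 → d ≠ 0 →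
      ∀ s : ℂ, 1 < s.re → s.re ≤ 2 → 1 < |s.im| → ‖parsevalIntegrand q₀ q₁ r₀ r₁ c d s‖ ≤
        C * (r₀.divisors.card * r₁.divisors.card) * |s.im| ^ (-(3 / 2) : ℝ) := by
  obtain ⟨C, hC0, hC⟩ := exists_norm_progressionSeries_le N
  refine ⟨6 * C ^ 2, by positivity, fun q₀ q₁ r₀ hr₀ r₁ hr₁ c d hc hd s hs hs2 him => ?_⟩
  have hρ : |s.im| ≤ ‖s - 1‖ := by simpa using abs_im_le_norm (s - 1)
  have hkernel : s.re / ‖s‖ ^ 2 ≤ 2 / |s.im| ^ 2 := by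
    gcongr
    exact abs_im_le_norm s
  have hgrowth : √‖s‖ + ‖s - 1‖⁻¹ ≤ 3 * √|s.im| := by
    have hsqrt : √‖s‖ ≤ 2 * √|s.im| := by
      rw [Real.sqrt_le_left (by positivity), mul_pow, Real.sq_sqrt (abs_nonneg _)]
      linarith [norm_le_re_add_abs_im (s := s) (by linarith)]
    linarith [inv_le_one_of_one_le₀ (him.le.trans hρ), Real.one_le_sqrt.2 him.le]
  have hpow : √|s.im| / |s.im| ^ 2 = |s.im| ^ (-(3 / 2) : ℝ) := by
    rw [Real.sqrt_eq_rpow, ← Real.rpow_natCast, ← Real.rpow_sub (by linarith)]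
    norm_num
  set T : ℝ := r₀.divisors.card * r₁.divisors.card with hT
  rw [parsevalIntegrand, norm_mul, norm_mul, RCLike.norm_conj]
  calc _ ≤ C * r₀.divisors.card * √(3 * √|s.im|) * (C * r₁.divisors.card * √(3 * √|s.im|)) *
          (2 / |s.im| ^ 2) := by
        gcongr
        · exact (hC q₀ r₀ hr₀ s hs).1.trans (by gcongr)
        · exact (hC q₁ r₁ hr₁ s hs).1.trans (by gcongr)
        · exact (norm_parsevalWeight_le hc hd hs.le).trans hkernel
    _ = 2 * C ^ 2 * T * √(3 * √|s.im|) ^ 2 / |s.im| ^ 2 := by rw [hT]; ring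
    _ = 6 * C ^ 2 * T * (√|s.im| / |s.im| ^ 2) := by
        rw [Real.sq_sqrt (by positivity)]
        ring
    _ = 6 * C ^ 2 * T * |s.im| ^ (-(3 / 2) : ℝ) := by rw [hpow]

lemma exists_norm_parsevalIntegrand_sub_le :
    ∃ C ≥ 0, ∀ (q₀ q₁ : (ZMod N)ˣ), ∀ r₀ ≠ 0, ∀ r₁ ≠ 0, ∀ c d : ℕ, c ≠ 0 → d ≠ 0 → ∀ s : ℂ, ∀ Λ : ℝ,
      1 < s.re → s.re ≤ 2 → |s.im| ≤ 1 →
      Real.log (N * r₀ : ℕ) ≤ Λ → Real.log (N * r₁ : ℕ) ≤ Λ →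
      Real.log c ≤ Λ → Real.log d ≤ Λ → 1 ≤ Λ →
      ‖parsevalIntegrand q₀ q₁ r₀ r₁ c d s -
        ((Real.pi / 2 * singularSeries N r₀ r₁ / ‖s - 1‖ : ℝ) : ℂ)‖ ≤
          C * (r₀.divisors.card * r₁.divisors.card) * (Λ + 1 / √‖s - 1‖) := by
  obtain ⟨C, hC0, hC⟩ := exists_norm_progressionSeries_mul_conj_sub_principalPart_le N
  obtain ⟨D, hD0, hD⟩ := exists_norm_principalPart_mul_conj_sub_le N
  have := Real.pi_pos
  refine ⟨C + D + 4 * (Real.pi * f0 ^ 2), by positivity,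
    fun q₀ q₁ r₀ hr₀ r₁ hr₁ c d hc hd s Λ hs hs2 him hΛ₀ hΛ₁ hcΛ hdΛ hΛ => ?_⟩
  have hρ := norm_sub_one_pos hs
  have hprod := norm_sub_le_norm_sub_add_norm_sub _ _ _ |>.trans <| add_le_add
    (hC q₀ q₁ r₀ hr₀ r₁ hr₁ s hs hs2 him) (hD r₀ hr₀ r₁ hr₁ s Λ hs hs2 him hΛ₀ hΛ₁ hΛ)
  have hM : ‖((Real.pi / 2 * singularSeries N r₀ r₁ / ‖s - 1‖ : ℝ) : ℂ)‖ ≤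
      Real.pi * f0 ^ 2 / ‖s - 1‖ := by
    have hS := singularSeries_nonneg N r₀ r₁
    rw [norm_real, Real.norm_of_nonneg (by positivity)]
    calc _ ≤ Real.pi / 2 * (2 * f0 ^ 2) / ‖s - 1‖ := by
          gcongr
          exact singularSeries_le N r₀ r₁
      _ = Real.pi * f0 ^ 2 / ‖s - 1‖ := by ring
  have hw := (norm_parsevalWeight_le hc hd hs.le).trans (re_div_norm_sq_le_one hs.le)
  have h := norm_mul_sub_mul_le hM hw hprod (norm_parsevalWeight_sub_one_le hc hd hs.le hcΛ hdΛ)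
  rw [mul_one, mul_one] at h
  have hT := one_le_card_divisors_mul_card_divisors hr₀ hr₁
  set T : ℝ := r₀.divisors.card * r₁.divisors.card
  refine h.trans ?_
  have hsing : 0 ≤ 1 / √‖s - 1‖ := by positivity
  calc C * T / √‖s - 1‖ + D * T * Λ + Real.pi * f0 ^ 2 / ‖s - 1‖ * (‖s - 1‖ * (2 * Λ + 2))
      = C * T * (1 / √‖s - 1‖) + D * T * Λ + Real.pi * f0 ^ 2 * 1 * (2 * Λ + 2) := by
        field_simp
    _ ≤ C * T * (Λ + 1 / √‖s - 1‖) + D * T * (Λ + 1 / √‖s - 1‖) +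
          Real.pi * f0 ^ 2 * T * (4 * (Λ + 1 / √‖s - 1‖)) := by
        gcongr <;> linarith
    _ = (C + D + 4 * (Real.pi * f0 ^ 2)) * T * (Λ + 1 / √‖s - 1‖) := by ring

end Integrand

section Smoothed

open scoped ComplexConjugate

lemma mul_natCast_mul_cpow_eq {a : ℕ → ℂ} (ha : a 0 = 0) (c : ℕ) (s : ℂ) (n : ℕ) :
    a n * (((n * c : ℕ) : ℝ) : ℂ) ^ (-s) = (c : ℂ) ^ (-s) * LSeries.term a s n := by
  rcases eq_or_ne n 0 with rfl | hn
  · simp [ha]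
  · rw [LSeries.term_of_ne_zero hn, ofReal_natCast, Nat.cast_mul, natCast_mul_natCast_cpow,
      cpow_neg (n : ℂ)]
    ring

lemma parsevalWeight_eq {c d : ℕ} (hc : c ≠ 0) (hd : d ≠ 0) {σ : ℝ} (t : ℝ) :
    parsevalWeight c d (σ + t * I) = c * d * σ *
      ((c : ℂ) ^ (-(σ + t * I)) * conj ((d : ℂ) ^ (-(σ + t * I))) *
        ((σ ^ 2 + t ^ 2)⁻¹ : ℝ)) := by
  have hpow {e : ℕ} (he : e ≠ 0) (s : ℂ) : (e : ℂ) ^ (-(s - 1)) = e * (e : ℂ) ^ (-s) := by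
    rw [neg_sub, sub_eq_add_neg, cpow_add _ _ (Nat.cast_ne_zero.2 he), cpow_one]
  have hnorm : ‖(σ + t * I : ℂ)‖ ^ 2 = σ ^ 2 + t ^ 2 := by
    rw [← normSq_eq_norm_sq, normSq_add_mul_I]
  simp only [parsevalWeight, hpow hc, hpow hd, hnorm, map_mul, conj_natCast, div_eq_mul_inv,
    ofReal_mul, add_re, ofReal_re, re_ofReal_mul, I_re, mul_zero, add_zero]
  ring

lemma hasSum_mul_conj_mul_max_rpow_of_LSeriesSummable {a b : ℕ → ℂ} (ha0 : a 0 = 0) (hb0 : b 0 = 0)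
    {c d : ℕ} (hc : c ≠ 0) (hd : d ≠ 0) {σ : ℝ} (hσ : 0 < σ) (ha : LSeriesSummable a σ)
    (hb : LSeriesSummable b σ) :
    HasSum (fun p : ℕ × ℕ => Real.pi * (c * d) *
        (a p.1 * conj (b p.2) * (((max (p.1 * c) (p.2 * d) : ℕ) : ℝ) ^ (-(2 * σ)) : ℝ)))
      (∫ t : ℝ, LSeries a (σ + t * I) * conj (LSeries b (σ + t * I)) *
        parsevalWeight c d (σ + t * I)) := by
  have hpos {f : ℕ → ℂ} (hf : f 0 = 0) {e : ℕ} (he : e ≠ 0) (n : ℕ) (hn : f n ≠ 0) :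
      (0 : ℝ) < (n * e : ℕ) := by
    have : n ≠ 0 := fun h => hn (h ▸ hf)
    positivity
  have hsummable {f : ℕ → ℂ} (hf0 : f 0 = 0) (e : ℕ) (hf : LSeriesSummable f σ) :
      Summable fun n => ‖f n‖ * ((n * e : ℕ) : ℝ) ^ (-σ) := by
    refine (hf.norm.mul_left ‖(e : ℂ) ^ (-σ : ℂ)‖).congr fun n => ?_
    rw [← norm_mul, ← mul_natCast_mul_cpow_eq hf0, norm_mul, ← ofReal_neg, ← ofReal_cpow
      (by positivity), norm_real, Real.norm_of_nonneg (by positivity)]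
  have htsum {f : ℕ → ℂ} (hf0 : f 0 = 0) (e : ℕ) (t : ℝ) :
      ∑' n, f n * (((n * e : ℕ) : ℝ) : ℂ) ^ (-(σ + t * I)) =
        (e : ℂ) ^ (-(σ + t * I)) * LSeries f (σ + t * I) := by
    simp only [mul_natCast_mul_cpow_eq hf0, tsum_mul_left, LSeries]
  have h := (hasSum_mul_conj_mul_max_rpow (hpos ha0 hc) (hpos hb0 hd) hσ (hsummable ha0 c ha)
    (hsummable hb0 d hb)).mul_left (c * d * σ : ℂ)
  simp only [htsum ha0, htsum hb0, ← integral_const_mul, map_mul] at h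
  have hintegrand (t : ℝ) : LSeries a (σ + t * I) * conj (LSeries b (σ + t * I)) *
      parsevalWeight c d (σ + t * I) = c * d * σ * ((c : ℂ) ^ (-(σ + t * I)) *
        LSeries a (σ + t * I) * (conj ((d : ℂ) ^ (-(σ + t * I))) * conj (LSeries b (σ + t * I))) *
          ((σ ^ 2 + t ^ 2)⁻¹ : ℝ)) := by
    rw [parsevalWeight_eq hc hd]
    ring
  simp only [hintegrand]
  convert! h using 2 with p
  have hσ' : (σ : ℂ) ≠ 0 := ofReal_ne_zero.2 hσ.ne'
  push_cast
  field_simp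

/-- The term of the sum in the theorem at the pair `p = (n₀, n₁)`. -/
noncomputable def pairTerm {N : ℕ} (q₀ q₁ : (ZMod N)ˣ) (r₀ r₁ c d : ℕ) (p : ℕ × ℕ) : ℝ :=
  progressionCoeff q₀ r₀ p.1 * progressionCoeff q₁ r₁ p.2 /
    ((max (p.1 * c) (p.2 * d) : ℕ) : ℝ) ^ 2

section Parseval

variable {N : ℕ} (q₀ q₁ : (ZMod N)ˣ) (r₀ r₁ : ℕ) {c d : ℕ}

lemma pairTerm_nonneg (p : ℕ × ℕ) : 0 ≤ pairTerm q₀ q₁ r₀ r₁ c d p :=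
  div_nonneg (mul_nonneg (progressionCoeff_nonneg q₀ r₀ _) (progressionCoeff_nonneg q₁ r₁ _))
    (by positivity)

lemma LSeriesSummable_progressionCoeff (q : (ZMod N)ˣ) (r : ℕ) {s : ℂ} (hs : 1 < s.re) :
    LSeriesSummable (fun n => (progressionCoeff q r n : ℂ)) s :=
  LSeriesSummable_of_bounded_of_one_lt_re (m := 1) (fun n _ => by
    rw [norm_real, Real.norm_of_nonneg (progressionCoeff_nonneg q r n)]
    exact progressionCoeff_le_one q r n) hs

lemma differentiableAt_progressionSeries (q : (ZMod N)ˣ) (r : ℕ) {s : ℂ} (hs : 1 < s.re) :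
    DifferentiableAt ℂ (progressionSeries q r) s := by
  refine (LSeries_hasDerivAt (lt_of_le_of_lt ?_ (EReal.coe_lt_coe_iff.2 hs))).differentiableAt
  exact LSeries.abscissaOfAbsConv_le_of_forall_lt_LSeriesSummable fun y hy =>
    LSeriesSummable_progressionCoeff q r (by simpa using hy)

lemma aestronglyMeasurable_parsevalIntegrand {σ : ℝ} (hσ : 1 < σ) :
    AEStronglyMeasurable fun t : ℝ => parsevalIntegrand q₀ q₁ r₀ r₁ c d (σ + t * I) := by
  have hseries (q : (ZMod N)ˣ) (r : ℕ) :
      Continuous fun t : ℝ => progressionSeries q r (σ + t * I) := by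
    refine continuous_iff_continuousAt.2 fun t => ?_
    exact (differentiableAt_progressionSeries q r (by simpa)).continuousAt.comp
      (f := fun t : ℝ => (σ + t * I : ℂ)) (by fun_prop)
  refine Measurable.aestronglyMeasurable ?_
  have h₀ := (hseries q₀ r₀).measurable
  have h₁ := (hseries q₁ r₁).measurable
  unfold parsevalIntegrand parsevalWeight
  fun_prop

lemma hasSum_pairTerm_mul_rpow_neg (hc : c ≠ 0) (hd : d ≠ 0) {ε : ℝ} (hε : 0 < ε) :
    HasSum (fun p => ((Real.pi * (c * d) * (pairTerm q₀ q₁ r₀ r₁ c d p *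
        ((max (p.1 * c) (p.2 * d) : ℕ) : ℝ) ^ (-ε)) : ℝ) : ℂ))
      (∫ t : ℝ, parsevalIntegrand q₀ q₁ r₀ r₁ c d ((1 + ε / 2 : ℝ) + t * I)) := by
  have hσ : 1 < ((1 + ε / 2 : ℝ) : ℂ).re := by rw [ofReal_re]; linarith
  simp only [parsevalIntegrand, progressionSeries]
  convert hasSum_mul_conj_mul_max_rpow_of_LSeriesSummable (by simp [progressionCoeff_zero])
    (by simp [progressionCoeff_zero]) hc hd (by linarith)
    (LSeriesSummable_progressionCoeff q₀ r₀ hσ) (LSeriesSummable_progressionCoeff q₁ r₁ hσ)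
    using 2 with p
  have hpow (x : ℕ) : (x : ℝ) ^ (-(2 * (1 + ε / 2))) = ((x : ℝ) ^ 2)⁻¹ * (x : ℝ) ^ (-ε) := by
    rw [show -(2 * (1 + ε / 2)) = -2 + -ε by ring, Real.rpow_add' (by positivity) (by linarith),
      Real.rpow_neg (by positivity), Real.rpow_two]
  rw [hpow, pairTerm, conj_ofReal]
  push_cast
  ring

lemma summable_pairTerm_mul_rpow_neg (hc : c ≠ 0) (hd : d ≠ 0) {ε : ℝ} (hε : 0 < ε) :
    Summable fun p => pairTerm q₀ q₁ r₀ r₁ c d p *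
      ((max (p.1 * c) (p.2 * d) : ℕ) : ℝ) ^ (-ε) := by
  have h := Complex.summable_ofReal.1 (hasSum_pairTerm_mul_rpow_neg q₀ q₁ r₀ r₁ hc hd hε).summable
  exact (summable_mul_left_iff (by positivity)).1 h

lemma integral_parsevalIntegrand (hc : c ≠ 0) (hd : d ≠ 0) {ε : ℝ} (hε : 0 < ε) :
    ∫ t : ℝ, parsevalIntegrand q₀ q₁ r₀ r₁ c d ((1 + ε / 2 : ℝ) + t * I) =
      ((Real.pi * (c * d * ∑' p, pairTerm q₀ q₁ r₀ r₁ c d p *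
        ((max (p.1 * c) (p.2 * d) : ℕ) : ℝ) ^ (-ε)) : ℝ) : ℂ) := by
  rw [← (hasSum_pairTerm_mul_rpow_neg q₀ q₁ r₀ r₁ hc hd hε).tsum_eq, ← ofReal_tsum, tsum_mul_left,
    mul_assoc]

end Parseval

lemma norm_integral_verticalLine_sub_le {F : ℂ → ℂ} {K M Λ ε : ℝ} (hε : 0 < ε) (hε1 : ε ≤ 1)
    (hΛ : 1 ≤ Λ) (hK : 0 ≤ K)
    (hF : AEStronglyMeasurable fun t : ℝ => F ((1 + ε : ℝ) + t * I))
    (hnear : ∀ s : ℂ, s.re = 1 + ε → |s.im| ≤ 1 →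
      ‖F s - ((M / ‖s - 1‖ : ℝ) : ℂ)‖ ≤ K * (Λ + 1 / √‖s - 1‖))
    (hmid : ∀ s : ℂ, s.re = 1 + ε → s.im ≠ 0 → |s.im| ≤ 1 → ‖F s‖ ≤ K * |s.im|⁻¹)
    (hfar : ∀ s : ℂ, s.re = 1 + ε → 1 < |s.im| → ‖F s‖ ≤ K * |s.im| ^ (-(3 / 2) : ℝ)) :
    ‖(∫ t : ℝ, F ((1 + ε : ℝ) + t * I)) - ((2 * M * Real.log (1 / ε) : ℝ) : ℂ)‖ ≤
      (10 * K + 4 * |M|) * (1 + Real.log Λ) := by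
  have hre (t : ℝ) : ((1 + ε : ℝ) + t * I : ℂ).re = 1 + ε := by simp
  have him (t : ℝ) : ((1 + ε : ℝ) + t * I : ℂ).im = t := by simp
  refine norm_integral_sub_two_mul_log_le hF hε hε1 hΛ hK (fun t ht htΛ => ?_)
    (fun t ht ht1 => ?_) fun t ht => ?_
  · have hnorm : ‖((1 + ε : ℝ) + t * I : ℂ) - 1‖ = √(ε ^ 2 + |t| ^ 2) := by
      rw [show ((1 + ε : ℝ) + t * I : ℂ) - 1 = ε + t * I by push_cast; ring, norm_add_mul_I,
        sq_abs]
    have ht_le : |t| ≤ √(ε ^ 2 + |t| ^ 2) := Real.le_sqrt_of_sq_le (by linarith [sq_nonneg ε])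
    have h := hnear _ (hre t) ((him t).symm ▸ htΛ.trans (inv_le_one_of_one_le₀ hΛ))
    rw [hnorm] at h
    rw [mul_one_div, Real.rpow_neg (abs_nonneg t), ← Real.sqrt_eq_rpow, ← one_div]
    refine h.trans ?_
    have := abs_pos.2 ht
    gcongr
  · simpa only [him] using hmid _ (hre t) ((him t).symm ▸ ht) ((him t).symm ▸ ht1)
  · simpa only [him] using hfar _ (hre t) ((him t).symm ▸ ht)

lemma exists_norm_integral_parsevalIntegrand_sub_le (N : ℕ) [NeZero N] :
    ∃ C ≥ 0, ∀ (q₀ q₁ : (ZMod N)ˣ), ∀ r₀ ≠ 0, ∀ r₁ ≠ 0, ∀ c d : ℕ, c ≠ 0 → d ≠ 0 → ∀ Λ : ℝ,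
      Real.log (N * r₀ : ℕ) ≤ Λ → Real.log (N * r₁ : ℕ) ≤ Λ →
      Real.log c ≤ Λ → Real.log d ≤ Λ → 1 ≤ Λ → ∀ ε : ℝ, 0 < ε → ε ≤ 1 →
      ‖(∫ t : ℝ, parsevalIntegrand q₀ q₁ r₀ r₁ c d ((1 + ε : ℝ) + t * I)) -
        ((Real.pi * (singularSeries N r₀ r₁ * Real.log (1 / ε)) : ℝ) : ℂ)‖ ≤
          C * (r₀.divisors.card * r₁.divisors.card) * (1 + Real.log Λ) := by
  obtain ⟨C₁, hC₁0, hC₁⟩ := exists_norm_parsevalIntegrand_sub_le N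
  obtain ⟨C₂, hC₂0, hC₂⟩ := exists_norm_parsevalIntegrand_le_of_abs_im_le_one N
  obtain ⟨C₃, hC₃0, hC₃⟩ := exists_norm_parsevalIntegrand_le_of_one_lt_abs_im N
  have := Real.pi_pos
  refine ⟨10 * (C₁ + C₂ + C₃) + 4 * (Real.pi * f0 ^ 2), by positivity,
    fun q₀ q₁ r₀ hr₀ r₁ hr₁ c d hc hd Λ hΛ₀ hΛ₁ hcΛ hdΛ hΛ ε hε hε1 => ?_⟩
  have hT := one_le_card_divisors_mul_card_divisors hr₀ hr₁
  set T : ℝ := r₀.divisors.card * r₁.divisors.card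
  have hM : |Real.pi / 2 * singularSeries N r₀ r₁| ≤ Real.pi * f0 ^ 2 * T := by
    rw [abs_of_nonneg (mul_nonneg (by positivity) (singularSeries_nonneg N r₀ r₁))]
    calc _ ≤ Real.pi / 2 * (2 * f0 ^ 2) := by
          gcongr
          exact singularSeries_le N r₀ r₁
      _ = Real.pi * f0 ^ 2 := by ring
      _ ≤ Real.pi * f0 ^ 2 * T := le_mul_of_one_le_right (by positivity) hT
  have h := norm_integral_verticalLine_sub_le (F := parsevalIntegrand q₀ q₁ r₀ r₁ c d)
    (K := (C₁ + C₂ + C₃) * T) (M := Real.pi / 2 * singularSeries N r₀ r₁) hε hε1 hΛ (by positivity)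
    (aestronglyMeasurable_parsevalIntegrand q₀ q₁ r₀ r₁ (by linarith))
    (fun s hs him => (hC₁ q₀ q₁ r₀ hr₀ r₁ hr₁ c d hc hd s Λ (by linarith) (by linarith) him hΛ₀
      hΛ₁ hcΛ hdΛ hΛ).trans (by gcongr; linarith))
    (fun s hs him him1 => (hC₂ q₀ q₁ r₀ hr₀ r₁ hr₁ c d hc hd s (by linarith) (by linarith) him
      him1).trans (by gcongr; linarith))
    (fun s hs him => (hC₃ q₀ q₁ r₀ hr₀ r₁ hr₁ c d hc hd s (by linarith) (by linarith) him).trans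
      (by gcongr; linarith))
  rw [show 2 * (Real.pi / 2 * singularSeries N r₀ r₁) * Real.log (1 / ε) =
    Real.pi * (singularSeries N r₀ r₁ * Real.log (1 / ε)) by ring] at h
  have := Real.log_nonneg hΛ
  calc _ ≤ (10 * ((C₁ + C₂ + C₃) * T) + 4 * (Real.pi * f0 ^ 2 * T)) * (1 + Real.log Λ) :=
        h.trans (by gcongr)
    _ = _ := by ring

lemma exists_abs_mul_tsum_pairTerm_sub_le (N : ℕ) [NeZero N] :
    ∃ C ≥ 0, ∀ (q₀ q₁ : (ZMod N)ˣ), ∀ r₀ ≠ 0, ∀ r₁ ≠ 0, ∀ c d : ℕ, c ≠ 0 → d ≠ 0 → ∀ Λ : ℝ,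
      Real.log (N * r₀ : ℕ) ≤ Λ → Real.log (N * r₁ : ℕ) ≤ Λ →
      Real.log c ≤ Λ → Real.log d ≤ Λ → 1 ≤ Λ → ∀ ε : ℝ, 0 < ε → ε ≤ 1 →
      |c * d * ∑' p, pairTerm q₀ q₁ r₀ r₁ c d p * ((max (p.1 * c) (p.2 * d) : ℕ) : ℝ) ^ (-ε) -
        singularSeries N r₀ r₁ * Real.log (1 / ε)| ≤
          C * (r₀.divisors.card * r₁.divisors.card) * (1 + Real.log Λ) := by
  obtain ⟨C, hC0, hC⟩ := exists_norm_integral_parsevalIntegrand_sub_le N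
  refine ⟨C + 2 * f0 ^ 2, by positivity,
    fun q₀ q₁ r₀ hr₀ r₁ hr₁ c d hc hd Λ hΛ₀ hΛ₁ hcΛ hdΛ hΛ ε hε hε1 => ?_⟩
  have h := hC q₀ q₁ r₀ hr₀ r₁ hr₁ c d hc hd Λ hΛ₀ hΛ₁ hcΛ hdΛ hΛ (ε / 2) (by linarith)
    (by linarith)
  rw [integral_parsevalIntegrand q₀ q₁ r₀ r₁ hc hd hε, ← ofReal_sub, ← mul_sub, norm_real,
    Real.norm_eq_abs, abs_mul, abs_of_pos Real.pi_pos] at h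
  have hT := one_le_card_divisors_mul_card_divisors hr₀ hr₁
  set T : ℝ := r₀.divisors.card * r₁.divisors.card
  set L := ∑' p, pairTerm q₀ q₁ r₀ r₁ c d p * ((max (p.1 * c) (p.2 * d) : ℕ) : ℝ) ^ (-ε)
  set S := singularSeries N r₀ r₁
  have hS : 0 ≤ S := singularSeries_nonneg N r₀ r₁
  have hlogΛ := Real.log_nonneg hΛ
  have hhalf : |c * d * L - S * Real.log (1 / (ε / 2))| ≤ C * T * (1 + Real.log Λ) :=
    (le_mul_of_one_le_left (abs_nonneg _) (by linarith [Real.pi_gt_three])).trans h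
  have hlog : Real.log (1 / (ε / 2)) = Real.log 2 + Real.log (1 / ε) := by
    rw [← Real.log_mul two_ne_zero (by positivity)]
    congr 1
    field_simp
  have hlog2 : |S * Real.log 2| ≤ 2 * f0 ^ 2 := by
    rw [abs_of_nonneg (mul_nonneg hS (Real.log_nonneg one_le_two))]
    nlinarith [singularSeries_le N r₀ r₁, Real.log_two_lt_d9, Real.log_nonneg one_le_two]
  calc |c * d * L - S * Real.log (1 / ε)|
      = |(c * d * L - S * Real.log (1 / (ε / 2))) + S * Real.log 2| := by rw [hlog]; ring_nf
    _ ≤ C * T * (1 + Real.log Λ) + 2 * f0 ^ 2 := (abs_add_le _ _).trans (add_le_add hhalf hlog2)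
    _ ≤ C * T * (1 + Real.log Λ) + 2 * f0 ^ 2 * (T * (1 + Real.log Λ)) := by
        have hTΛ := one_le_mul_of_one_le_of_one_le hT (by linarith : 1 ≤ 1 + Real.log Λ)
        exact add_le_add le_rfl (le_mul_of_one_le_right (by positivity) hTΛ)
    _ = (C + 2 * f0 ^ 2) * T * (1 + Real.log Λ) := by ring

end Smoothed

/-! ### Rankin's trick -/

section Tauberian

variable {ι : Type*} {a m : ι → ℝ} {B : Finset ι} {X : ℝ}

lemma sum_le_rpow_mul_tsum (ha : ∀ i, 0 ≤ a i) (hm : ∀ i, a i ≠ 0 → 0 < m i)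
    (hB : ∀ i ∈ B, a i ≠ 0 → m i ≤ X) (hX : 0 < X) {ε : ℝ} (hε : 0 ≤ ε)
    (hsum : Summable fun i => a i * m i ^ (-ε)) :
    ∑ i ∈ B, a i ≤ X ^ ε * ∑' i, a i * m i ^ (-ε) := by
  have hterm (i : ι) : 0 ≤ a i * m i ^ (-ε) := by
    rcases eq_or_ne (a i) 0 with h | h
    · simp [h]
    · exact mul_nonneg (ha i) (Real.rpow_nonneg (hm i h).le _)
  refine le_trans ?_ (mul_le_mul_of_nonneg_left (hsum.sum_le_tsum B fun i _ => hterm i)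
    (by positivity))
  rw [mul_sum]
  refine sum_le_sum fun i hi => ?_
  rcases eq_or_ne (a i) 0 with h | h
  · simp [h]
  · calc a i = m i ^ ε * (a i * m i ^ (-ε)) := by
          rw [Real.rpow_neg (hm i h).le]
          field_simp [(Real.rpow_pos_of_pos (hm i h) ε).ne']
      _ ≤ X ^ ε * (a i * m i ^ (-ε)) := by
          gcongr
          exacts [hterm i, (hm i h).le, hB i hi h]

lemma tsum_le_sum_add_rpow_mul_tsum (ha : ∀ i, 0 ≤ a i) (hm : ∀ i, a i ≠ 0 → 1 ≤ m i)
    (hB : ∀ i ∉ B, a i ≠ 0 → X ≤ m i) (hX : 0 < X) {δ η : ℝ} (hδ : 0 ≤ δ) (hη : 0 ≤ η)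
    (hsum : Summable fun i => a i * m i ^ (-η))
    (hsum' : Summable fun i => a i * m i ^ (-(η + δ))) :
    ∑' i, a i * m i ^ (-(η + δ)) ≤ ∑ i ∈ B, a i + X ^ (-δ) * ∑' i, a i * m i ^ (-η) := by
  have hterm (i : ι) : 0 ≤ a i * m i ^ (-η) := by
    rcases eq_or_ne (a i) 0 with h | h
    · simp [h]
    · exact mul_nonneg (ha i) (Real.rpow_nonneg (zero_le_one.trans (hm i h)) _)
  have hhead (i : ι) : a i * m i ^ (-(η + δ)) ≤ a i := by
    rcases eq_or_ne (a i) 0 with h | h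
    · simp [h]
    · exact mul_le_of_le_one_right (ha i)
        (Real.rpow_le_one_of_one_le_of_nonpos (hm i h) (by linarith))
  have htail (i : ι) (hi : i ∉ B) :
      a i * m i ^ (-(η + δ)) ≤ X ^ (-δ) * (a i * m i ^ (-η)) := by
    rcases eq_or_ne (a i) 0 with h | h
    · simp [h]
    · calc a i * m i ^ (-(η + δ)) = m i ^ (-δ) * (a i * m i ^ (-η)) := by
            rw [neg_add_rev, Real.rpow_add (zero_lt_one.trans_le (hm i h))]
            ring
        _ ≤ X ^ (-δ) * (a i * m i ^ (-η)) := mul_le_mul_of_nonneg_right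
            (Real.rpow_le_rpow_of_nonpos hX (hB i hi h) (by linarith)) (hterm i)
  have hright := hsum.mul_left (X ^ (-δ))
  rw [← hsum'.sum_add_tsum_compl (s := B), ← tsum_mul_left]
  gcongr with i
  · exact hhead i
  · exact (Summable.tsum_le_tsum (fun i : ↥((B : Set ι)ᶜ) => htail i i.2) (hsum'.subtype _)
      (hright.subtype _)).trans (hright.tsum_subtype_le _ _ fun i =>
        mul_nonneg (by positivity) (hterm i))

lemma exp_one_div_le_three {Y : ℝ} (hY : 1 ≤ Y) : Real.exp (1 / Y) ≤ 3 := by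
  have hexp : Real.exp (1 / Y) ≤ Real.exp 1 := Real.exp_le_exp.2 (div_le_self zero_le_one hY)
  linarith [Real.exp_one_lt_d9]

lemma exp_one_div_sub_one_mul_le_three {Y : ℝ} (hY : 1 ≤ Y) : (Real.exp (1 / Y) - 1) * Y ≤ 3 := by
  have hmul : Real.exp (1 / Y) * Real.exp (-(1 / Y)) = 1 := by rw [← Real.exp_add]; simp
  have hsub : Real.exp (1 / Y) - 1 ≤ Real.exp (1 / Y) * (1 / Y) := by
    nlinarith [Real.add_one_le_exp (-(1 / Y)), Real.exp_pos (1 / Y)]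
  calc (Real.exp (1 / Y) - 1) * Y ≤ Real.exp (1 / Y) * (1 / Y) * Y := by gcongr
    _ = Real.exp (1 / Y) := by field_simp
    _ ≤ 3 := exp_one_div_le_three hY

lemma exp_neg_half_mul_le_two (Y : ℝ) : Real.exp (-(Y / 2)) * Y ≤ 2 := by
  rw [Real.exp_neg, inv_mul_le_iff₀ (Real.exp_pos _)]
  linarith [Real.add_one_le_exp (Y / 2)]

variable {S E : ℝ}

lemma sum_le_mul_loglog_add (ha : ∀ i, 0 ≤ a i) (hm : ∀ i, a i ≠ 0 → 0 < m i)
    (hB : ∀ i ∈ B, a i ≠ 0 → m i ≤ X) (hX : 0 < X) (hlog : 1 < Real.log X) (hS : 0 ≤ S)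
    (hE : 0 ≤ E) (hsum : ∀ ε : ℝ, 0 < ε → Summable fun i => a i * m i ^ (-ε))
    (h : ∀ ε : ℝ, 0 < ε → ε ≤ 1 → ∑' i, a i * m i ^ (-ε) ≤ S * Real.log (1 / ε) + E) :
    ∑ i ∈ B, a i ≤ S * Real.log (Real.log X) +
      (3 * E + S * (6 + Real.log (1 + Real.log (Real.log X)))) := by
  have hy0 := Real.log_pos hlog
  set l := Real.log X with hl
  set y := Real.log l with hy
  set Y := 1 + y
  have hl0 : 0 < l := by linarith
  have hY0 : 0 < Y := by linarith
  have hε0 : 0 < 1 / (Y * l) := by positivity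
  have hε1 : 1 / (Y * l) ≤ 1 := (div_le_one (by positivity)).2 (by nlinarith)
  have hrankin := sum_le_rpow_mul_tsum ha hm hB hX hε0.le (hsum _ hε0)
  have hsmooth := h _ hε0 hε1
  rw [one_div_one_div, Real.log_mul hY0.ne' hl0.ne', ← hy] at hsmooth
  rw [Real.rpow_def_of_pos hX, ← hl, show l * (1 / (Y * l)) = 1 / Y by field_simp] at hrankin
  have hx1 : 1 ≤ Real.exp (1 / Y) := Real.one_le_exp (by positivity)
  have hx3 := exp_one_div_le_three (by linarith : 1 ≤ Y)
  have hxY := exp_one_div_sub_one_mul_le_three (by linarith : 1 ≤ Y)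
  set x := Real.exp (1 / Y)
  have hlogY : Real.log Y + y ≤ 2 * Y := by linarith [Real.log_le_sub_one_of_pos hY0]
  calc ∑ i ∈ B, a i ≤ x * (S * (Real.log Y + y) + E) := hrankin.trans (by gcongr)
    _ = S * ((x - 1) * (Real.log Y + y)) + S * (Real.log Y + y) + x * E := by ring
    _ ≤ S * ((x - 1) * (2 * Y)) + S * (Real.log Y + y) + 3 * E := by gcongr
    _ = S * (2 * ((x - 1) * Y)) + S * (Real.log Y + y) + 3 * E := by ring
    _ ≤ S * (2 * 3) + S * (Real.log Y + y) + 3 * E := by gcongr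
    _ = S * y + (3 * E + S * (6 + Real.log Y)) := by ring

lemma exp_neg_half_mul_le_of_le {T Y : ℝ} (hY : 0 ≤ Y) (hS : 0 ≤ S) (hE : 0 ≤ E)
    (hT : T ≤ S * Y + E) : Real.exp (-(Y / 2)) * T ≤ 2 * S + E := by
  have hexp : Real.exp (-(Y / 2)) ≤ 1 := Real.exp_le_one_iff.2 (by linarith)
  calc Real.exp (-(Y / 2)) * T ≤ Real.exp (-(Y / 2)) * (S * Y + E) := by gcongr
    _ = S * (Real.exp (-(Y / 2)) * Y) + Real.exp (-(Y / 2)) * E := by ring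
    _ ≤ S * 2 + 1 * E := by
        gcongr
        exact exp_neg_half_mul_le_two Y
    _ = 2 * S + E := by ring

lemma mul_loglog_sub_le_sum (ha : ∀ i, 0 ≤ a i) (hm : ∀ i, a i ≠ 0 → 1 ≤ m i)
    (hB : ∀ i ∉ B, a i ≠ 0 → X ≤ m i) (hX : 0 < X) (hlog : 1 < Real.log X) (hS : 0 ≤ S)
    (hE : 0 ≤ E) (hsum : ∀ ε : ℝ, 0 < ε → Summable fun i => a i * m i ^ (-ε))
    (h : ∀ ε : ℝ, 0 < ε → ε ≤ 1 → |∑' i, a i * m i ^ (-ε) - S * Real.log (1 / ε)| ≤ E) :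
    S * Real.log (Real.log X) - (2 * E + S * (2 + Real.log (1 + Real.log (Real.log X)))) ≤
      ∑ i ∈ B, a i := by
  have hy0 := Real.log_pos hlog
  set l := Real.log X with hl
  set y := Real.log l
  set Y := 1 + y
  have hl0 : 0 < l := by linarith
  have hY0 : 0 < Y := by linarith
  have hYl : Y ≤ l := by linarith [Real.log_le_sub_one_of_pos hl0]
  set δ := Y / (2 * l) with hδ
  have hδ0 : 0 < δ := by positivity
  have hδδ : δ + δ = Y / l := by rw [hδ]; field_simp; norm_num
  have hδ1 : δ + δ ≤ 1 := hδδ ▸ (div_le_one hl0).2 hYl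
  have hrankin := tsum_le_sum_add_rpow_mul_tsum ha hm hB hX hδ0.le hδ0.le (hsum _ hδ0)
    (hsum _ (add_pos hδ0 hδ0))
  have hlower := (abs_le.1 (h (δ + δ) (by linarith) hδ1)).1
  have hupper := (abs_le.1 (h δ hδ0 (by linarith))).2
  have hlogY : 0 ≤ Real.log Y := Real.log_nonneg (by linarith)
  have hlog_two : Real.log (1 / (δ + δ)) = y - Real.log Y := by
    rw [hδδ, one_div_div, Real.log_div hl0.ne' hY0.ne']
  have hlog_one : Real.log (1 / δ) ≤ Y := by
    rw [hδ, one_div_div, Real.log_div (by positivity) hY0.ne', Real.log_mul two_ne_zero hl0.ne']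
    linarith [Real.log_two_lt_d9]
  rw [Real.rpow_def_of_pos hX, ← hl, show l * -δ = -(Y / 2) by rw [hδ]; field_simp] at hrankin
  have htail : Real.exp (-(Y / 2)) * ∑' i, a i * m i ^ (-δ) ≤ 2 * S + E :=
    exp_neg_half_mul_le_of_le hY0.le hS hE
      (by linarith [mul_le_mul_of_nonneg_left hlog_one hS])
  rw [hlog_two] at hlower
  linarith

/-- Rankin's trick with `ε = 1 / (Y log X)` for the upper bound and `ε = Y / log X` for the lower
bound, where `Y = 1 + log log X`: this changes `log (1 / ε)` by `log Y` only. -/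
lemma abs_sum_sub_mul_loglog_le (ha : ∀ i, 0 ≤ a i) (hm : ∀ i, a i ≠ 0 → 1 ≤ m i)
    (hB : ∀ i, a i ≠ 0 → (i ∈ B ↔ m i ≤ X)) (hX : 0 < X) (hlog : 1 < Real.log X) (hS : 0 ≤ S)
    (hsum : ∀ ε : ℝ, 0 < ε → Summable fun i => a i * m i ^ (-ε))
    (h : ∀ ε : ℝ, 0 < ε → ε ≤ 1 → |∑' i, a i * m i ^ (-ε) - S * Real.log (1 / ε)| ≤ E) :
    |∑ i ∈ B, a i - S * Real.log (Real.log X)| ≤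
      3 * E + S * (6 + Real.log (1 + Real.log (Real.log X))) := by
  have hE : 0 ≤ E := (abs_nonneg _).trans (h 1 one_pos le_rfl)
  have hupper := sum_le_mul_loglog_add ha (fun i hi => zero_lt_one.trans_le (hm i hi))
    (fun i hi h0 => (hB i h0).1 hi) hX hlog hS hE hsum
    (fun ε hε hε1 => by linarith [(abs_le.1 (h ε hε hε1)).2])
  have hlower := mul_loglog_sub_le_sum ha hm
    (fun i hi h0 => (not_le.1 (mt (hB i h0).2 hi)).le) hX hlog hS hE hsum h
  rw [abs_le]
  constructor <;> linarith

end Tauberian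

/-! ### The truncated sum -/

section Truncation

variable {N : ℕ} (q₀ q₁ : (ZMod N)ˣ) (r₀ r₁ : ℕ) {c d : ℕ} {X : ℝ} {p : ℕ × ℕ}

lemma sum_filter_eq_sum_pairTerm (c d : ℕ) (X : ℝ) :
    ∑ p ∈ (Icc 1 ⌊X⌋₊ ×ˢ Icc 1 ⌊X⌋₊).filter
        (fun p : ℕ × ℕ => ((max (p.1 * c) (p.2 * d) : ℕ) : ℝ) ≤ X ∧
          p.1.Coprime r₀ ∧ p.2.Coprime r₁ ∧ (p.1 : ZMod N) = q₀ ∧ (p.2 : ZMod N) = q₁),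
      1 / (((max (p.1 * c) (p.2 * d) : ℕ) : ℝ) ^ 2 * (p.1.divisors.card : ℝ) *
        (p.2.divisors.card : ℝ)) =
    ∑ p ∈ (Icc 1 ⌊X⌋₊ ×ˢ Icc 1 ⌊X⌋₊).filter
        (fun p : ℕ × ℕ => ((max (p.1 * c) (p.2 * d) : ℕ) : ℝ) ≤ X),
      pairTerm q₀ q₁ r₀ r₁ c d p := by
  rw [sum_filter, sum_filter]
  refine sum_congr rfl fun p _ => ?_
  unfold pairTerm progressionCoeff
  split_ifs <;> first | (exfalso; tauto) | (field_simp; done) | simp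

variable {q₀ q₁ r₀ r₁}

lemma ne_zero_of_pairTerm_ne_zero (hp : pairTerm q₀ q₁ r₀ r₁ c d p ≠ 0) :
    p.1 ≠ 0 ∧ p.2 ≠ 0 := by
  constructor <;> intro h <;> exact hp (by simp [pairTerm, h, progressionCoeff_zero])

lemma one_le_max_of_pairTerm_ne_zero (hc : c ≠ 0) (hp : pairTerm q₀ q₁ r₀ r₁ c d p ≠ 0) :
    (1 : ℝ) ≤ ((max (p.1 * c) (p.2 * d) : ℕ) : ℝ) := by
  have hpc : 1 ≤ p.1 * c :=
    Nat.one_le_iff_ne_zero.2 (mul_ne_zero (ne_zero_of_pairTerm_ne_zero hp).1 hc)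
  exact_mod_cast hpc.trans (le_max_left _ _)

lemma mem_filter_max_le_iff (hc : c ≠ 0) (hd : d ≠ 0)
    (hp : pairTerm q₀ q₁ r₀ r₁ c d p ≠ 0) :
    p ∈ (Icc 1 ⌊X⌋₊ ×ˢ Icc 1 ⌊X⌋₊).filter
        (fun p : ℕ × ℕ => ((max (p.1 * c) (p.2 * d) : ℕ) : ℝ) ≤ X) ↔
      ((max (p.1 * c) (p.2 * d) : ℕ) : ℝ) ≤ X := by
  rw [mem_filter, and_iff_right_iff_imp]
  intro hX
  obtain ⟨h0, h1⟩ := ne_zero_of_pairTerm_ne_zero hp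
  have hmax := Nat.le_floor hX
  rw [mem_product, mem_Icc, mem_Icc]
  exact ⟨⟨Nat.pos_of_ne_zero h0, (Nat.le_mul_of_pos_right _ (Nat.pos_of_ne_zero hc)).trans
      ((le_max_left _ _).trans hmax)⟩,
    Nat.pos_of_ne_zero h1, (Nat.le_mul_of_pos_right _ (Nat.pos_of_ne_zero hd)).trans
      ((le_max_right _ _).trans hmax)⟩

lemma exists_abs_mul_sum_pairTerm_sub_le (N : ℕ) [NeZero N] :
    ∃ C ≥ 0, ∀ X : ℝ, Real.exp 1 < X → ∀ (q₀ q₁ : (ZMod N)ˣ), ∀ r₀ ≠ 0, ∀ r₁ ≠ 0,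
      ∀ c d : ℕ, c ≠ 0 → d ≠ 0 → ∀ Λ : ℝ, Real.log (N * r₀ : ℕ) ≤ Λ →
        Real.log (N * r₁ : ℕ) ≤ Λ → Real.log c ≤ Λ → Real.log d ≤ Λ → 1 ≤ Λ →
      |c * d * ∑ p ∈ (Icc 1 ⌊X⌋₊ ×ˢ Icc 1 ⌊X⌋₊).filter
            (fun p : ℕ × ℕ => ((max (p.1 * c) (p.2 * d) : ℕ) : ℝ) ≤ X),
          pairTerm q₀ q₁ r₀ r₁ c d p - singularSeries N r₀ r₁ * Real.log (Real.log X)| ≤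
        C * (r₀.divisors.card * r₁.divisors.card) *
          (1 + Real.log Λ + Real.log (1 + Real.log (Real.log X))) := by
  obtain ⟨C, hC, hsmooth⟩ := exists_abs_mul_tsum_pairTerm_sub_le N
  refine ⟨3 * C + 12 * f0 ^ 2, by positivity, fun X hX q₀ q₁ r₀ hr₀ r₁ hr₁ c d hc hd Λ h₀ h₁ hcΛ hdΛ
    hΛ => ?_⟩
  have hX0 : 0 < X := (Real.exp_pos 1).trans hX
  have hlog : 1 < Real.log X := (Real.lt_log_iff_exp_lt hX0).2 hX
  have htauber := abs_sum_sub_mul_loglog_le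
    (a := fun p => c * d * pairTerm q₀ q₁ r₀ r₁ c d p)
    (m := fun p => ((max (p.1 * c) (p.2 * d) : ℕ) : ℝ))
    (fun p => mul_nonneg (by positivity) (pairTerm_nonneg q₀ q₁ r₀ r₁ p))
    (fun p hp => one_le_max_of_pairTerm_ne_zero hc (right_ne_zero_of_mul hp))
    (fun p hp => mem_filter_max_le_iff hc hd (right_ne_zero_of_mul hp)) hX0 hlog
    (singularSeries_nonneg N r₀ r₁)
    (fun ε hε => by
      simp_rw [mul_assoc ((c : ℝ) * d)]
      exact (summable_pairTerm_mul_rpow_neg q₀ q₁ r₀ r₁ hc hd hε).mul_left _)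
    (fun ε hε hε1 => by
      simp_rw [mul_assoc ((c : ℝ) * d), tsum_mul_left]
      exact hsmooth q₀ q₁ r₀ hr₀ r₁ hr₁ c d hc hd Λ h₀ h₁ hcΛ hdΛ hΛ ε hε hε1)
  rw [← mul_sum] at htauber
  refine htauber.trans ?_
  have hlogΛ := Real.log_nonneg hΛ
  have hL : 0 ≤ Real.log (1 + Real.log (Real.log X)) :=
    Real.log_nonneg (by linarith [Real.log_pos hlog])
  set L := Real.log (1 + Real.log (Real.log X))
  have hτ := one_le_card_divisors_mul_card_divisors hr₀ hr₁
  set T : ℝ := r₀.divisors.card * r₁.divisors.card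
  calc 3 * (C * T * (1 + Real.log Λ)) + singularSeries N r₀ r₁ * (6 + L)
      ≤ 3 * (C * T * (1 + Real.log Λ + L)) + 2 * f0 ^ 2 * (6 * (T * (1 + Real.log Λ + L))) := by
        gcongr 3 * (C * T * ?_) + ?_ * ?_
        · linarith
        · exact singularSeries_le N r₀ r₁
        · nlinarith
    _ = (3 * C + 12 * f0 ^ 2) * T * (1 + Real.log Λ + L) := by ring

end Truncation

section Assembly

lemma log_natCast_le_of_le_rpow {n : ℕ} {l K : ℝ} (hn : n ≠ 0) (hl : 0 < l)
    (h : (n : ℝ) ≤ l ^ K) : Real.log n ≤ K * Real.log l := by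
  rw [← Real.log_rpow hl]
  exact Real.log_le_log (by positivity) h

lemma exists_log_le_mul_one_add_log (N : ℕ) [NeZero N] (C₁ C₂ : ℝ) :
    ∃ A ≥ 1, ∀ l : ℝ, 1 < l → ∀ n : ℕ, n ≠ 0 →
      ((n : ℝ) ≤ l ^ C₁ → Real.log (N * n : ℕ) ≤ A * (1 + Real.log l)) ∧
      ((n : ℝ) ≤ l ^ C₂ → Real.log n ≤ A * (1 + Real.log l)) := by
  have hN := Real.log_natCast_nonneg N
  refine ⟨1 + Real.log N + |C₁| + |C₂|, by linarith [abs_nonneg C₁, abs_nonneg C₂],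
    fun l hl n hn => ?_⟩
  have hy := Real.log_pos hl
  have hbound (K : ℝ) (h : (n : ℝ) ≤ l ^ K) : Real.log n ≤ |K| * Real.log l :=
    (log_natCast_le_of_le_rpow hn (by linarith) h).trans (by gcongr; exact le_abs_self K)
  refine ⟨fun h => ?_, fun h => ?_⟩
  · have hNn : Real.log (N * n : ℕ) = Real.log N + Real.log n := by
      rw [Nat.cast_mul, Real.log_mul (NeZero.ne _) (by positivity)]
    nlinarith [hbound C₁ h, abs_nonneg C₁, abs_nonneg C₂, mul_nonneg hN hy.le,
      mul_nonneg (abs_nonneg C₂) hy.le]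
  · nlinarith [hbound C₂ h, abs_nonneg C₁, abs_nonneg C₂, mul_nonneg hN hy.le,
      mul_nonneg (abs_nonneg C₁) hy.le]

lemma log_one_add_le_two_mul_sqrt {y : ℝ} (hy : 0 ≤ y) : Real.log (1 + y) ≤ 2 * √y := by
  have hlog := Real.log_le_sub_one_of_pos (Real.sqrt_pos.2 (by linarith : 0 < 1 + y))
  rw [Real.log_sqrt (by linarith)] at hlog
  have hsqrt : √(1 + y) ≤ 1 + √y := by
    rw [Real.sqrt_le_left (by positivity)]
    nlinarith [Real.sq_sqrt hy, Real.sqrt_nonneg y]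
  linarith

lemma exists_one_add_log_le_mul_sqrt_loglog :
    ∃ K ≥ 0, ∀ X : ℝ, 3 ≤ X →
      1 + Real.log (1 + Real.log (Real.log X)) ≤ K * √(Real.log (Real.log X)) := by
  have hlog : 1 < Real.log 3 := (Real.lt_log_iff_exp_lt three_pos).2 Real.exp_one_lt_three
  have hloglog : 0 < Real.log (Real.log 3) := Real.log_pos hlog
  have hsqrt : 0 < √(Real.log (Real.log 3)) := Real.sqrt_pos.2 hloglog
  refine ⟨(√(Real.log (Real.log 3)))⁻¹ + 2, by positivity, fun X hX => ?_⟩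
  have hmono : Real.log (Real.log 3) ≤ Real.log (Real.log X) :=
    Real.log_le_log (by linarith) (Real.log_le_log three_pos hX)
  have hone : 1 ≤ (√(Real.log (Real.log 3)))⁻¹ * √(Real.log (Real.log X)) := by
    rw [← div_eq_inv_mul, one_le_div hsqrt]
    exact Real.sqrt_le_sqrt hmono
  linarith [log_one_add_le_two_mul_sqrt (hloglog.le.trans hmono)]

lemma S1_eq_singularSeries {r₀ r₁ : ℕ} (hr₀ : r₀ ≠ 0) (hr₁ : r₁ ≠ 0) :
    S1 r₀ r₁ = singularSeries 8 r₀ r₁ := by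
  have hprime {r : ℕ} (hr : r ≠ 0) : (8 * r).primeFactors = (2 * r).primeFactors := by
    rw [Nat.primeFactors_mul (by norm_num) hr, Nat.primeFactors_mul two_ne_zero hr,
      show 8 = 2 ^ 3 by norm_num, Nat.primeFactors_prime_pow three_ne_zero Nat.prime_two,
      Nat.prime_two.primeFactors]
  rw [S1, singularSeries, hprime hr₀, hprime hr₁]

end Assembly

end DivisorSum

theorem statement9_general (N : ℕ) [NeZero N] (C₁ C₂ : ℝ) :
    ∃ C ≥ 0, ∀ X : ℝ, Real.exp 1 < X → ∀ q₀ q₁ : (ZMod N)ˣ, ∀ r₀ r₁ : ℕ, r₀ ≠ 0 → r₁ ≠ 0 →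
        (r₀ : ℝ) ≤ Real.log X ^ C₁ → (r₁ : ℝ) ≤ Real.log X ^ C₁ →
      ∀ c₀ c₁ : ℕ, c₀ ≠ 0 → c₁ ≠ 0 →
        (c₀ : ℝ) ≤ Real.log X ^ C₂ → (c₁ : ℝ) ≤ Real.log X ^ C₂ →
      |∑ p ∈ (Icc 1 ⌊X⌋₊ ×ˢ Icc 1 ⌊X⌋₊).filter
            (fun p : ℕ × ℕ => ((max (p.1 * c₀) (p.2 * c₁) : ℕ) : ℝ) ≤ X ∧
              p.1.Coprime r₀ ∧ p.2.Coprime r₁ ∧ (p.1 : ZMod N) = q₀ ∧ (p.2 : ZMod N) = q₁),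
          1 / (((max (p.1 * c₀) (p.2 * c₁) : ℕ) : ℝ) ^ 2 * (p.1.divisors.card : ℝ) *
            (p.2.divisors.card : ℝ)) -
        DivisorSum.singularSeries N r₀ r₁ * Real.log (Real.log X) / (c₀ * c₁)| ≤
        C * r₀.divisors.card * r₁.divisors.card *
          (1 + Real.log (1 + Real.log (Real.log X))) / (c₀ * c₁) := by
  obtain ⟨C, hC, hmain⟩ := DivisorSum.exists_abs_mul_sum_pairTerm_sub_le N
  obtain ⟨A, hA, hlogs⟩ := DivisorSum.exists_log_le_mul_one_add_log N C₁ C₂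
  have hlogA := Real.log_nonneg hA
  refine ⟨C * (2 + Real.log A), by positivity,
    fun X hX q₀ q₁ r₀ r₁ hr₀ hr₁ hrX₀ hrX₁ c₀ c₁ hc₀ hc₁ hcX₀ hcX₁ => ?_⟩
  have hlog : 1 < Real.log X := (Real.lt_log_iff_exp_lt ((Real.exp_pos 1).trans hX)).2 hX
  have hy := Real.log_pos hlog
  have hL := Real.log_nonneg (by linarith : 1 ≤ 1 + Real.log (Real.log X))
  have hbound := hmain X hX q₀ q₁ r₀ hr₀ r₁ hr₁ c₀ c₁ hc₀ hc₁ (A * (1 + Real.log (Real.log X)))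
    ((hlogs _ hlog r₀ hr₀).1 hrX₀) ((hlogs _ hlog r₁ hr₁).1 hrX₁)
    ((hlogs _ hlog c₀ hc₀).2 hcX₀) ((hlogs _ hlog c₁ hc₁).2 hcX₁) (by nlinarith)
  rw [Real.log_mul (by linarith) (by linarith)] at hbound
  have hc : (0 : ℝ) < c₀ * c₁ := by positivity
  rw [DivisorSum.sum_filter_eq_sum_pairTerm, sub_div' hc.ne', abs_div, abs_of_pos hc,
    mul_comm _ ((c₀ : ℝ) * c₁)]
  gcongr
  refine hbound.trans ?_
  set L := Real.log (1 + Real.log (Real.log X))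
  calc C * (r₀.divisors.card * r₁.divisors.card) * (1 + (Real.log A + L) + L)
      ≤ C * (r₀.divisors.card * r₁.divisors.card) * ((2 + Real.log A) * (1 + L)) := by
        gcongr C * _ * ?_
        nlinarith
    _ = C * (2 + Real.log A) * r₀.divisors.card * r₁.divisors.card * (1 + L) := by ring

open scoped Classical in
theorem statement9 (C₁ C₂ : ℝ) (h₁ : 0 < C₁) (h₂ : 0 < C₂) :
    ∃ C : ℝ, ∀ X : ℝ, 3 ≤ X → ∀ q₀ q₁ : (ZMod 8)ˣ,
      ∀ r₀ r₁ : ℕ, Odd r₀ → Odd r₁ → 1 ≤ r₀ → 1 ≤ r₁ →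
        (r₀ : ℝ) ≤ (Real.log X) ^ C₁ → (r₁ : ℝ) ≤ (Real.log X) ^ C₁ →
      ∀ c₀ c₁ : ℕ, 1 ≤ c₀ → 1 ≤ c₁ →
        (c₀ : ℝ) ≤ (Real.log X) ^ C₂ → (c₁ : ℝ) ≤ (Real.log X) ^ C₂ →
      |(∑ p ∈ (Finset.Icc 1 ⌊X⌋₊ ×ˢ Finset.Icc 1 ⌊X⌋₊).filter
            (fun p : ℕ × ℕ => ((max (p.1 * c₀) (p.2 * c₁) : ℕ) : ℝ) ≤ X ∧
              Nat.Coprime p.1 r₀ ∧ Nat.Coprime p.2 r₁ ∧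
              (p.1 : ZMod 8) = (q₀ : ZMod 8) ∧ (p.2 : ZMod 8) = (q₁ : ZMod 8)),
          1 / (((max (p.1 * c₀) (p.2 * c₁) : ℕ) : ℝ) ^ 2 *
            ((Nat.divisors p.1).card : ℝ) * ((Nat.divisors p.2).card : ℝ)))
        - S1 r₀ r₁ * Real.log (Real.log X) / ((c₀ : ℝ) * (c₁ : ℝ))| ≤
        C * ((Nat.divisors r₀).card : ℝ) * ((Nat.divisors r₁).card : ℝ) *
          Real.sqrt (Real.log (Real.log X)) / ((c₀ : ℝ) * (c₁ : ℝ)) := by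
  obtain ⟨C, hC, hgeneral⟩ := statement9_general 8 C₁ C₂
  obtain ⟨K, -, hK⟩ := DivisorSum.exists_one_add_log_le_mul_sqrt_loglog
  refine ⟨C * K, fun X hX q₀ q₁ r₀ r₁ _ _ hr₀ hr₁ hrX₀ hrX₁ c₀ c₁ hc₀ hc₁ hcX₀ hcX₁ => ?_⟩
  rw [DivisorSum.S1_eq_singularSeries (by lia) (by lia)]
  refine (hgeneral X (Real.exp_one_lt_three.trans_le hX) q₀ q₁ r₀ r₁ (by lia) (by lia)
    hrX₀ hrX₁ c₀ c₁ (by lia) (by lia) hcX₀ hcX₁).trans ?_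
  gcongr ?_ / _
  calc C * r₀.divisors.card * r₁.divisors.card * (1 + Real.log (1 + Real.log (Real.log X)))
      ≤ C * r₀.divisors.card * r₁.divisors.card * (K * √(Real.log (Real.log X))) := by
        gcongr
        exact hK X hX
    _ = C * K * r₀.divisors.card * r₁.divisors.card * √(Real.log (Real.log X)) := by ring
end

section
/- Let C₁, C₂ > 0. There is a constant C = C(C₁, C₂) such that for all X ≥ 3, all integers 1 ≤ c₀, c₁ ≤ (log X)^{C₁}, and all positive integers d₀, d₁: ∑∑_{n₀, n₁ ≥ 1, ‖n₀c₀, n₁c₁‖ ≤ X, ‖n₀d₀, n₁d₁‖ > (log X)^{C₂}} (log ‖n₀c₀, n₁c₁‖) / (‖n₀c₀, n₁c₁‖² τ(n₀) τ(n₁)) ≤ C · (log X)/(c₀ c₁). -/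
open Finset

/-!
Write `f n = 1 / τ(n)`. Since `τ(ab) ≤ τ(a) τ(b)`, every one of the `τ(n)` terms of the Dirichlet
convolution `(f * f) n` is at most `1 / τ(n)`, so `f * f ≤ 1` and
`(∑_{n ≤ x} f(n)/n)² ≤ ∑_{k ≤ x²} 1/k ≤ 1 + 2 log x`.

As `f` decreases along divisibility, writing `log x = log (x/n) + ∑_{d ∣ n} Λ(d)` and using
Chebyshev's bound `ψ(y) ≪ y` gives `log x · ∑_{n ≤ x} f(n) ≪ x ∑_{n ≤ x} f(n)/n`, hence
`log x · ∑_{n ≤ x} f(n) ≪ x √(1 + 2 log x)`.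

All summands are nonnegative, so the condition on `d₀, d₁` may be dropped, and by symmetry it
suffices to treat the pairs with `n₁ c₁ ≤ n₀ c₀ =: m`. Splitting `log m = log (m/c₁) + log c₁`, the
sum over `n₁ ≤ m/c₁` contributes `log m · ∑ f(n₁) ≪ (√(1 + 2 log X) + log c₁) · m/c₁`. What is left
is `∑ f(n₀)/n₀`, which costs another `√(1 + 2 log X)`; and `log c₁ ≪ log log X ≪ √(log X)`.
-/

lemma sum_le_sum_sum_of_forall_mem {α β R : Type*} [AddCommMonoid R] [PartialOrder R]
    [IsOrderedAddMonoid R] {S : Finset (α × β)} {s : Finset α} {t : α → Finset β} {g : α → β → R}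
    (hS : ∀ p ∈ S, p.1 ∈ s ∧ p.2 ∈ t p.1) (hg : ∀ a ∈ s, ∀ b ∈ t a, 0 ≤ g a b) :
    ∑ p ∈ S, g p.1 p.2 ≤ ∑ a ∈ s, ∑ b ∈ t a, g a b := by
  let T := (s.sigma t).map (Equiv.sigmaEquivProd α β).toEmbedding
  have hT : ∀ p, p ∈ T ↔ p.1 ∈ s ∧ p.2 ∈ t p.1 := fun p => by
    rw [mem_map_equiv, mem_sigma]
    rfl
  rw [← sum_finset_product' T s t hT]
  exact sum_le_sum_of_subset_of_nonneg (fun p hp => (hT p).mpr (hS p hp))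
    fun p hp _ => hg _ ((hT p).mp hp).1 _ ((hT p).mp hp).2

section ArithmeticFunction

lemma sum_Ioc_mul_sum_Ioc_le {R : Type*} [Semiring R] [PartialOrder R] [IsOrderedRing R]
    {f g : ArithmeticFunction R} (hf : ∀ n, 0 ≤ f n) (hg : ∀ n, 0 ≤ g n) (M N : ℕ) :
    (∑ m ∈ Ioc 0 M, f m) * ∑ n ∈ Ioc 0 N, g n ≤ ∑ k ∈ Ioc 0 (M * N), (f * g) k := by
  have hinner : ∀ m ∈ Ioc 0 M, ∑ n ∈ Ioc 0 N, g n ≤ ∑ n ∈ Ioc 0 (M * N / m), g n := by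
    intro m hm
    obtain ⟨hm0, hmM⟩ := mem_Ioc.mp hm
    have hN : N ≤ M * N / m := (Nat.le_div_iff_mul_le hm0).mpr <| by
      rw [mul_comm N]
      exact Nat.mul_le_mul_right N hmM
    exact sum_le_sum_of_subset_of_nonneg (Ioc_subset_Ioc_right hN) fun n _ _ => hg n
  calc (∑ m ∈ Ioc 0 M, f m) * ∑ n ∈ Ioc 0 N, g n
      = ∑ m ∈ Ioc 0 M, f m * ∑ n ∈ Ioc 0 N, g n := sum_mul _ _ _
    _ ≤ ∑ m ∈ Ioc 0 M, f m * ∑ n ∈ Ioc 0 (M * N / m), g n :=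
        sum_le_sum fun m hm => mul_le_mul_of_nonneg_left (hinner m hm) (hf m)
    _ ≤ ∑ m ∈ Ioc 0 (M * N), f m * ∑ n ∈ Ioc 0 (M * N / m), g n := by
        rcases N.eq_zero_or_pos with rfl | hN
        · simp only [mul_zero, Nat.zero_div, Ioc_self, sum_empty, sum_const_zero, le_refl]
        · exact sum_le_sum_of_subset_of_nonneg
            (Ioc_subset_Ioc_right (Nat.le_mul_of_pos_right M hN))
            fun m _ _ => mul_nonneg (hf m) (sum_nonneg fun n _ => hg n)
    _ = ∑ k ∈ Ioc 0 (M * N), (f * g) k :=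
        (ArithmeticFunction.sum_Ioc_mul_eq_sum_sum f g (M * N)).symm

variable {f : ArithmeticFunction ℝ}

lemma nonneg_of_antitone_dvd (hf : ∀ m n, m ∣ n → f n ≤ f m) (n : ℕ) : 0 ≤ f n := by
  simpa only [ArithmeticFunction.map_zero] using hf n 0 (dvd_zero n)

lemma mul_log_le_mul_vonMangoldt_of_antitone_dvd (hf : ∀ m n, m ∣ n → f n ≤ f m) (n : ℕ) :
    f n * Real.log n ≤ (f * ArithmeticFunction.vonMangoldt) n := by
  rw [ArithmeticFunction.mul_apply, ← ArithmeticFunction.vonMangoldt_sum,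
    ← Nat.sum_divisorsAntidiagonal' (fun _ d => ArithmeticFunction.vonMangoldt d), mul_sum]
  refine sum_le_sum fun p hp => ?_
  have hdvd : p.1 ∣ n := ⟨p.2, (Nat.mem_divisorsAntidiagonal.mp hp).1.symm⟩
  exact mul_le_mul_of_nonneg_right (hf _ _ hdvd) ArithmeticFunction.vonMangoldt_nonneg

lemma sum_mul_log_le_of_antitone_dvd (hf : ∀ m n, m ∣ n → f n ≤ f m) (N : ℕ) :
    ∑ n ∈ Ioc 0 N, f n * Real.log n ≤ (Real.log 4 + 4) * N * ∑ n ∈ Ioc 0 N, f n / n := by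
  have hpsi (n : ℕ) : ∑ d ∈ Ioc 0 (N / n), ArithmeticFunction.vonMangoldt d
      ≤ (Real.log 4 + 4) * ((N : ℝ) / n) := by
    rw [← Nat.floor_div_eq_div (K := ℝ)]
    exact Chebyshev.psi_le_const_mul_self (by positivity)
  calc ∑ n ∈ Ioc 0 N, f n * Real.log n
      ≤ ∑ n ∈ Ioc 0 N, (f * ArithmeticFunction.vonMangoldt) n :=
        sum_le_sum fun n _ => mul_log_le_mul_vonMangoldt_of_antitone_dvd hf n
    _ = ∑ n ∈ Ioc 0 N, f n * ∑ d ∈ Ioc 0 (N / n), ArithmeticFunction.vonMangoldt d :=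
        ArithmeticFunction.sum_Ioc_mul_eq_sum_sum _ _ _
    _ ≤ ∑ n ∈ Ioc 0 N, f n * ((Real.log 4 + 4) * ((N : ℝ) / n)) :=
        sum_le_sum fun n _ => mul_le_mul_of_nonneg_left (hpsi n) (nonneg_of_antitone_dvd hf n)
    _ = (Real.log 4 + 4) * N * ∑ n ∈ Ioc 0 N, f n / n := by
        rw [mul_sum]
        exact sum_congr rfl fun n _ => by ring

lemma log_mul_sum_le_of_antitone_dvd (hf : ∀ m n, m ∣ n → f n ≤ f m) {x : ℝ} (hx : 0 < x) :
    Real.log x * ∑ n ∈ Ioc 0 ⌊x⌋₊, f n ≤ (Real.log 4 + 5) * x * ∑ n ∈ Ioc 0 ⌊x⌋₊, f n / n := by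
  have hf0 := nonneg_of_antitone_dvd hf
  have hmean : 0 ≤ ∑ n ∈ Ioc 0 ⌊x⌋₊, f n / n :=
    sum_nonneg fun n _ => div_nonneg (hf0 n) n.cast_nonneg
  have hlog : ∀ n ∈ Ioc 0 ⌊x⌋₊, Real.log x ≤ x / n + Real.log n := by
    intro n hn
    have hn0 : (0 : ℝ) < n := by exact_mod_cast (mem_Ioc.mp hn).1
    have hdiv := Real.log_le_self (x := x / n) (by positivity)
    rw [Real.log_div hx.ne' hn0.ne'] at hdiv
    linarith
  calc Real.log x * ∑ n ∈ Ioc 0 ⌊x⌋₊, f n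
      = ∑ n ∈ Ioc 0 ⌊x⌋₊, f n * Real.log x := by rw [mul_comm, sum_mul]
    _ ≤ ∑ n ∈ Ioc 0 ⌊x⌋₊, f n * (x / n + Real.log n) :=
        sum_le_sum fun n hn => mul_le_mul_of_nonneg_left (hlog n hn) (hf0 n)
    _ = x * (∑ n ∈ Ioc 0 ⌊x⌋₊, f n / n) + ∑ n ∈ Ioc 0 ⌊x⌋₊, f n * Real.log n := by
        rw [mul_sum, ← sum_add_distrib]
        exact sum_congr rfl fun n _ => by ring
    _ ≤ x * (∑ n ∈ Ioc 0 ⌊x⌋₊, f n / n)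
          + (Real.log 4 + 4) * x * ∑ n ∈ Ioc 0 ⌊x⌋₊, f n / n := by
        grw [sum_mul_log_le_of_antitone_dvd hf, Nat.floor_le hx.le]
    _ = (Real.log 4 + 5) * x * ∑ n ∈ Ioc 0 ⌊x⌋₊, f n / n := by ring

end ArithmeticFunction

/-- The arithmetic function `n ↦ 1 / τ(n)`, where `τ` counts divisors; its value at `0` is `0`. -/
noncomputable def invTau : ArithmeticFunction ℝ :=
  ⟨fun n => (#n.divisors : ℝ)⁻¹, by simp⟩

lemma invTau_apply (n : ℕ) : invTau n = (#n.divisors : ℝ)⁻¹ := rfl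

lemma invTau_nonneg (n : ℕ) : 0 ≤ invTau n :=
  inv_nonneg.mpr (Nat.cast_nonneg _)

lemma invTau_le_one (n : ℕ) : invTau n ≤ 1 :=
  Nat.cast_inv_le_one _

lemma card_divisors_pos {n : ℕ} (hn : n ≠ 0) : 0 < #n.divisors :=
  card_pos.mpr (Nat.nonempty_divisors.mpr hn)

lemma invTau_antitone_dvd (m n : ℕ) (h : m ∣ n) : invTau n ≤ invTau m := by
  rcases eq_or_ne n 0 with rfl | hn
  · simpa only [ArithmeticFunction.map_zero] using invTau_nonneg m
  · have hm : 0 < #m.divisors := card_divisors_pos (ne_zero_of_dvd_ne_zero hn h)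
    rw [invTau_apply, invTau_apply]
    gcongr

lemma invTau_mul_le (m n : ℕ) : invTau m * invTau n ≤ invTau (m * n) := by
  rcases eq_or_ne (m * n) 0 with h | h
  · rcases Nat.mul_eq_zero.mp h with rfl | rfl <;> simp
  · have hpos : 0 < #(m * n).divisors := card_divisors_pos h
    have hcard : #(m * n).divisors ≤ #m.divisors * #n.divisors := by
      rw [Nat.divisors_mul]
      exact card_mul_le
    rw [invTau_apply, invTau_apply, invTau_apply, ← mul_inv]
    gcongr
    exact_mod_cast hcard

lemma invTau_mul_invTau_le_one (n : ℕ) : (invTau * invTau) n ≤ 1 := by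
  have hcard : #n.divisorsAntidiagonal = #n.divisors := by
    rw [← Nat.map_div_right_divisors, card_map]
  calc (invTau * invTau) n
      = ∑ p ∈ n.divisorsAntidiagonal, invTau p.1 * invTau p.2 := ArithmeticFunction.mul_apply
    _ ≤ ∑ _p ∈ n.divisorsAntidiagonal, invTau n := by
        refine sum_le_sum fun p hp => ?_
        rw [← (Nat.mem_divisorsAntidiagonal.mp hp).1]
        exact invTau_mul_le _ _
    _ = #n.divisors * (#n.divisors : ℝ)⁻¹ := by
        rw [sum_const, nsmul_eq_mul, hcard, invTau_apply]
    _ ≤ 1 := mul_inv_le_one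

lemma pdiv_id_mul_pdiv_id_apply {K : Type*} [Field K] (f g : ArithmeticFunction K) (n : ℕ) :
    (f.pdiv (ArithmeticFunction.id : ArithmeticFunction K) *
      g.pdiv (ArithmeticFunction.id : ArithmeticFunction K)) n = (f * g) n / n := by
  simp only [ArithmeticFunction.mul_apply, ArithmeticFunction.pdiv_apply,
    ArithmeticFunction.natCoe_apply, ArithmeticFunction.id_apply, sum_div]
  refine sum_congr rfl fun p hp => ?_
  rw [← (Nat.mem_divisorsAntidiagonal.mp hp).1, Nat.cast_mul, div_mul_div_comm]

lemma sum_invTau_div_sq_le (N : ℕ) :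
    (∑ n ∈ Ioc 0 N, invTau n / n) ^ 2 ≤ 1 + 2 * Real.log N := by
  let F := invTau.pdiv (ArithmeticFunction.id : ArithmeticFunction ℝ)
  have hF : ∀ n, F n = invTau n / n := fun n => rfl
  have hF0 (n : ℕ) : 0 ≤ F n := div_nonneg (invTau_nonneg n) n.cast_nonneg
  have hFF (k : ℕ) : (F * F) k ≤ (k : ℝ)⁻¹ := by
    rw [pdiv_id_mul_pdiv_id_apply, inv_eq_one_div]
    gcongr
    exact invTau_mul_invTau_le_one k
  calc (∑ n ∈ Ioc 0 N, invTau n / n) ^ 2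
      = (∑ n ∈ Ioc 0 N, F n) * ∑ n ∈ Ioc 0 N, F n := by simp only [hF, sq]
    _ ≤ ∑ k ∈ Ioc 0 (N * N), (F * F) k := sum_Ioc_mul_sum_Ioc_le hF0 hF0 N N
    _ ≤ ∑ k ∈ Ioc 0 (N * N), (k : ℝ)⁻¹ := sum_le_sum fun k _ => hFF k
    _ = (harmonic (N * N) : ℝ) := by
        rw [harmonic_eq_sum_Icc]
        push_cast
        rfl
    _ ≤ 1 + Real.log ((N * N : ℕ) : ℝ) := harmonic_le_one_add_log (N * N)
    _ = 1 + 2 * Real.log N := by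
        rw [← sq, Nat.cast_pow, Real.log_pow, Nat.cast_ofNat]

lemma sum_invTau_div_le {N : ℕ} {x : ℝ} (hx : 1 ≤ x) (hN : (N : ℝ) ≤ x) :
    ∑ n ∈ Ioc 0 N, invTau n / n ≤ √(1 + 2 * Real.log x) := by
  have hlog : Real.log N ≤ Real.log x := by
    rcases N.eq_zero_or_pos with rfl | hpos
    · simpa only [Nat.cast_zero, Real.log_zero] using Real.log_nonneg hx
    · exact Real.log_le_log (Nat.cast_pos.mpr hpos) hN
  apply Real.le_sqrt_of_sq_le
  linarith [sum_invTau_div_sq_le N]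

lemma sum_invTau_le {x : ℝ} (hx : 0 ≤ x) : ∑ n ∈ Ioc 0 ⌊x⌋₊, invTau n ≤ x := by
  calc ∑ n ∈ Ioc 0 ⌊x⌋₊, invTau n ≤ ∑ _n ∈ Ioc 0 ⌊x⌋₊, (1 : ℝ) :=
        sum_le_sum fun n _ => invTau_le_one n
    _ = (⌊x⌋₊ : ℝ) := by simp
    _ ≤ x := Nat.floor_le hx

lemma log_mul_sum_invTau_le {x : ℝ} (hx : 1 ≤ x) :
    Real.log x * ∑ n ∈ Ioc 0 ⌊x⌋₊, invTau n
      ≤ (Real.log 4 + 5) * √(1 + 2 * Real.log x) * x := by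
  have hx0 : 0 < x := by linarith
  calc Real.log x * ∑ n ∈ Ioc 0 ⌊x⌋₊, invTau n
      ≤ (Real.log 4 + 5) * x * ∑ n ∈ Ioc 0 ⌊x⌋₊, invTau n / n :=
        log_mul_sum_le_of_antitone_dvd invTau_antitone_dvd hx0
    _ ≤ (Real.log 4 + 5) * x * √(1 + 2 * Real.log x) := by
        gcongr
        exact sum_invTau_div_le hx (Nat.floor_le hx0.le)
    _ = (Real.log 4 + 5) * √(1 + 2 * Real.log x) * x := by ring

lemma log_mul_sum_invTau_div_le {x X c : ℝ} (hx : 0 ≤ x) (hxX : x ≤ X) (hc : 1 ≤ c) :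
    Real.log x * ∑ n ∈ Ioc 0 ⌊x / c⌋₊, invTau n
      ≤ ((Real.log 4 + 5) * √(1 + 2 * Real.log X) + Real.log c) * (x / c) := by
  have hc0 : 0 < c := by linarith
  have hlogc : 0 ≤ Real.log c := Real.log_nonneg hc
  rcases lt_or_ge (x / c) 1 with hlt | hge
  · rw [Nat.floor_eq_zero.mpr hlt, Ioc_self, sum_empty, mul_zero]
    positivity
  · have hx0 : 0 < x := by linarith [(one_le_div hc0).mp hge]
    have hdiv : x / c ≤ X := (div_le_self hx hc).trans hxX
    calc Real.log x * ∑ n ∈ Ioc 0 ⌊x / c⌋₊, invTau n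
        = Real.log (x / c) * ∑ n ∈ Ioc 0 ⌊x / c⌋₊, invTau n
            + Real.log c * ∑ n ∈ Ioc 0 ⌊x / c⌋₊, invTau n := by
          rw [← add_mul, Real.log_div hx0.ne' hc0.ne', sub_add_cancel]
      _ ≤ (Real.log 4 + 5) * √(1 + 2 * Real.log (x / c)) * (x / c)
            + Real.log c * (x / c) :=
          add_le_add (log_mul_sum_invTau_le hge)
            (mul_le_mul_of_nonneg_left (sum_invTau_le (by positivity)) hlogc)
      _ ≤ (Real.log 4 + 5) * √(1 + 2 * Real.log X) * (x / c) + Real.log c * (x / c) := by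
          gcongr
      _ = ((Real.log 4 + 5) * √(1 + 2 * Real.log X) + Real.log c) * (x / c) := by ring

lemma log_le_two_mul_sqrt {x : ℝ} (hx : 0 ≤ x) : Real.log x ≤ 2 * √x := by
  linarith [Real.log_sqrt hx, Real.log_le_self (Real.sqrt_nonneg x)]

lemma log_le_mul_sqrt_of_le_rpow {C c y : ℝ} (hC : 0 ≤ C) (hc : 0 < c) (hy : 0 < y)
    (h : c ≤ y ^ C) : Real.log c ≤ 2 * C * √y := by
  calc Real.log c ≤ Real.log (y ^ C) := Real.log_le_log hc h
    _ = C * Real.log y := Real.log_rpow hy C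
    _ ≤ C * (2 * √y) := by grw [log_le_two_mul_sqrt hy.le]
    _ = 2 * C * √y := by ring

lemma sqrt_one_add_two_mul_le {y : ℝ} (hy : 1 / 2 ≤ y) : √(1 + 2 * y) ≤ 2 * √y := by
  rw [Real.sqrt_le_left (by positivity), mul_pow, Real.sq_sqrt (by linarith)]
  linarith

lemma one_half_le_log {x : ℝ} (hx : 2 ≤ x) : 1 / 2 ≤ Real.log x := by
  linarith [Real.log_two_gt_d9, Real.log_le_log two_pos hx]

lemma mul_sqrt_one_add_two_mul_le_of_le_rpow {C K a b y : ℝ} (hC : 0 ≤ C) (hK : 0 ≤ K)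
    (hy : 1 / 2 ≤ y) (ha : 0 < a) (hb : 0 < b) (hay : a ≤ y ^ C) (hby : b ≤ y ^ C) :
    (2 * K * √(1 + 2 * y) + Real.log a + Real.log b) * √(1 + 2 * y) ≤ 8 * (K + C) * y := by
  have hy0 : 0 < y := by linarith
  have hloga := log_le_mul_sqrt_of_le_rpow hC ha hy0 hay
  have hlogb := log_le_mul_sqrt_of_le_rpow hC hb hy0 hby
  calc (2 * K * √(1 + 2 * y) + Real.log a + Real.log b) * √(1 + 2 * y)
      ≤ (2 * K * (2 * √y) + 2 * C * √y + 2 * C * √y) * (2 * √y) := by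
        gcongr <;> exact sqrt_one_add_two_mul_le hy
    _ = 8 * (K + C) * (√y * √y) := by ring
    _ = 8 * (K + C) * y := by rw [Real.mul_self_sqrt hy0.le]

/-- The summand `log M / (M² τ(n₀) τ(n₁))`, `M = ‖n₀ a, n₁ b‖`, of the double sum, at the pair
`p = (n₀, n₁)`. -/
noncomputable def maxWeight (a b : ℝ) (p : ℕ × ℕ) : ℝ :=
  Real.log (max (p.1 * a) (p.2 * b)) /
    (max (p.1 * a) (p.2 * b) ^ 2 * #p.1.divisors * #p.2.divisors)

lemma maxWeight_swap (a b : ℝ) (p : ℕ × ℕ) : maxWeight a b p.swap = maxWeight b a p := by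
  rw [maxWeight, maxWeight, Prod.fst_swap, Prod.snd_swap, max_comm, mul_right_comm]

lemma maxWeight_of_le {a b : ℝ} {p : ℕ × ℕ} (h : p.2 * b ≤ p.1 * a) :
    maxWeight a b p = Real.log (p.1 * a) / (p.1 * a) ^ 2 * (invTau p.1 * invTau p.2) := by
  rw [maxWeight, max_eq_left h, invTau_apply, invTau_apply]
  simp only [div_eq_mul_inv, mul_inv, mul_assoc]

section DoubleSum

variable {X a b : ℝ}

lemma sum_sum_log_div_sq_mul_invTau_le (hX : 1 ≤ X) (ha : 1 ≤ a) (hb : 1 ≤ b) :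
    ∑ n ∈ Ioc 0 ⌊X / a⌋₊, ∑ k ∈ Ioc 0 ⌊n * a / b⌋₊,
        Real.log (n * a) / (n * a) ^ 2 * (invTau n * invTau k)
      ≤ ((Real.log 4 + 5) * √(1 + 2 * Real.log X) + Real.log b) * √(1 + 2 * Real.log X)
          / (a * b) := by
  have ha0 : 0 < a := by linarith
  have hXa : 0 ≤ X / a := by positivity
  have hlogb : 0 ≤ Real.log b := Real.log_nonneg hb
  set B := (Real.log 4 + 5) * √(1 + 2 * Real.log X) + Real.log b
  have hrow : ∀ n ∈ Ioc 0 ⌊X / a⌋₊, ∑ k ∈ Ioc 0 ⌊n * a / b⌋₊,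
      Real.log (n * a) / (n * a) ^ 2 * (invTau n * invTau k) ≤ B / (a * b) * (invTau n / n) := by
    intro n hn
    have hn0 : (0 : ℝ) < n := by exact_mod_cast (mem_Ioc.mp hn).1
    have hnX : n * a ≤ X := (le_div_iff₀ ha0).mp ((Nat.le_floor_iff hXa).mp (mem_Ioc.mp hn).2)
    have hn_nonneg := invTau_nonneg n
    calc ∑ k ∈ Ioc 0 ⌊n * a / b⌋₊, Real.log (n * a) / (n * a) ^ 2 * (invTau n * invTau k)
        = invTau n / (n * a) ^ 2 * (Real.log (n * a) * ∑ k ∈ Ioc 0 ⌊n * a / b⌋₊, invTau k) := by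
          rw [mul_sum, mul_sum]
          exact sum_congr rfl fun k _ => by ring
      _ ≤ invTau n / (n * a) ^ 2 * (B * (n * a / b)) :=
          mul_le_mul_of_nonneg_left (log_mul_sum_invTau_div_le (by positivity) hnX hb)
            (by positivity)
      _ = B / (a * b) * (invTau n / n) := by field_simp
  calc _ ≤ ∑ n ∈ Ioc 0 ⌊X / a⌋₊, B / (a * b) * (invTau n / n) := sum_le_sum hrow
    _ = B / (a * b) * ∑ n ∈ Ioc 0 ⌊X / a⌋₊, invTau n / n := (mul_sum _ _ _).symm
    _ ≤ B / (a * b) * √(1 + 2 * Real.log X) := by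
        gcongr
        exact sum_invTau_div_le hX ((Nat.floor_le hXa).trans (div_le_self (by linarith) ha))
    _ = B * √(1 + 2 * Real.log X) / (a * b) := div_mul_eq_mul_div _ _ _

lemma sum_maxWeight_le_of_mul_le_mul (hX : 1 ≤ X) (ha : 1 ≤ a) (hb : 1 ≤ b)
    {S : Finset (ℕ × ℕ)} (hpos : ∀ p ∈ S, 0 < p.1 ∧ 0 < p.2)
    (hle : ∀ p ∈ S, p.2 * b ≤ p.1 * a) (hSX : ∀ p ∈ S, p.1 * a ≤ X) :
    ∑ p ∈ S, maxWeight a b p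
      ≤ ((Real.log 4 + 5) * √(1 + 2 * Real.log X) + Real.log b) * √(1 + 2 * Real.log X)
          / (a * b) := by
  have ha0 : 0 < a := by linarith
  have hb0 : 0 < b := by linarith
  calc ∑ p ∈ S, maxWeight a b p
      = ∑ p ∈ S, Real.log (p.1 * a) / (p.1 * a) ^ 2 * (invTau p.1 * invTau p.2) :=
        sum_congr rfl fun p hp => maxWeight_of_le (hle p hp)
    _ ≤ ∑ n ∈ Ioc 0 ⌊X / a⌋₊, ∑ k ∈ Ioc 0 ⌊n * a / b⌋₊,
          Real.log (n * a) / (n * a) ^ 2 * (invTau n * invTau k) := by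
        refine sum_le_sum_sum_of_forall_mem
          (g := fun n k : ℕ => Real.log (n * a) / (n * a) ^ 2 * (invTau n * invTau k))
          (fun p hp => ⟨?_, ?_⟩) fun n hn k _ => ?_
        · exact mem_Ioc.mpr ⟨(hpos p hp).1, Nat.le_floor ((le_div_iff₀ ha0).mpr (hSX p hp))⟩
        · exact mem_Ioc.mpr ⟨(hpos p hp).2, Nat.le_floor ((le_div_iff₀ hb0).mpr (hle p hp))⟩
        · have hn1 : (1 : ℝ) ≤ n := by exact_mod_cast (mem_Ioc.mp hn).1
          have hlog : 0 ≤ Real.log (n * a) :=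
            Real.log_nonneg (one_le_mul_of_one_le_of_one_le hn1 ha)
          exact mul_nonneg (by positivity) (mul_nonneg (invTau_nonneg n) (invTau_nonneg k))
    _ ≤ _ := sum_sum_log_div_sq_mul_invTau_le hX ha hb

theorem statement10_general (hX : 1 ≤ X) (ha : 1 ≤ a) (hb : 1 ≤ b) {S : Finset (ℕ × ℕ)}
    (hpos : ∀ p ∈ S, 0 < p.1 ∧ 0 < p.2) (hSX : ∀ p ∈ S, max (p.1 * a) (p.2 * b) ≤ X) :
    ∑ p ∈ S, maxWeight a b p
      ≤ (2 * (Real.log 4 + 5) * √(1 + 2 * Real.log X) + Real.log a + Real.log b)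
          * √(1 + 2 * Real.log X) / (a * b) := by
  classical
  have hfst : ∑ p ∈ S with p.2 * b ≤ p.1 * a, maxWeight a b p ≤ _ :=
    sum_maxWeight_le_of_mul_le_mul hX ha hb
      (fun p hp => hpos p (mem_filter.mp hp).1) (fun p hp => (mem_filter.mp hp).2)
      fun p hp => (max_le_iff.mp (hSX p (mem_filter.mp hp).1)).1
  have hsnd : ∑ p ∈ S with ¬ p.2 * b ≤ p.1 * a, maxWeight a b p
      ≤ ((Real.log 4 + 5) * √(1 + 2 * Real.log X) + Real.log a) * √(1 + 2 * Real.log X)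
          / (b * a) := by
    have hswap := sum_maxWeight_le_of_mul_le_mul hX hb ha
      (S := {p ∈ S | ¬ p.2 * b ≤ p.1 * a}.map (Equiv.prodComm ℕ ℕ).toEmbedding)
    simp only [forall_mem_map, sum_map, Equiv.coe_toEmbedding, Equiv.prodComm_apply,
      Prod.fst_swap, Prod.snd_swap, maxWeight_swap] at hswap
    exact hswap (fun p hp => (hpos p (mem_filter.mp hp).1).symm)
      (fun p hp => (not_le.mp (mem_filter.mp hp).2).le)
      fun p hp => (max_le_iff.mp (hSX p (mem_filter.mp hp).1)).2
  rw [← sum_filter_add_sum_filter_not S (fun p => p.2 * b ≤ p.1 * a)]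
  refine (add_le_add hfst hsnd).trans_eq ?_
  rw [mul_comm b a]
  ring

lemma sum_maxWeight_le_of_le_log_rpow {C : ℝ} (hC : 0 ≤ C) (hX : 2 ≤ X) (ha : 1 ≤ a) (hb : 1 ≤ b)
    (haX : a ≤ Real.log X ^ C) (hbX : b ≤ Real.log X ^ C) {S : Finset (ℕ × ℕ)}
    (hpos : ∀ p ∈ S, 0 < p.1 ∧ 0 < p.2) (hSX : ∀ p ∈ S, max (p.1 * a) (p.2 * b) ≤ X) :
    ∑ p ∈ S, maxWeight a b p ≤ 8 * (Real.log 4 + 5 + C) * Real.log X / (a * b) := by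
  refine (statement10_general (by linarith) ha hb hpos hSX).trans ?_
  refine div_le_div_of_nonneg_right ?_ (by positivity)
  exact mul_sqrt_one_add_two_mul_le_of_le_rpow hC (by positivity) (one_half_le_log hX)
    (by linarith) (by linarith) haX hbX

end DoubleSum

open scoped Classical in
theorem statement10 (C₁ C₂ : ℝ) (h₁ : 0 < C₁) (h₂ : 0 < C₂) :
    ∃ C : ℝ, ∀ X : ℝ, 3 ≤ X →
      ∀ c₀ c₁ : ℕ, 1 ≤ c₀ → 1 ≤ c₁ →
        (c₀ : ℝ) ≤ (Real.log X) ^ C₁ → (c₁ : ℝ) ≤ (Real.log X) ^ C₁ →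
      ∀ d₀ d₁ : ℕ, 0 < d₀ → 0 < d₁ →
      (∑ p ∈ (Finset.Icc 1 ⌊X⌋₊ ×ˢ Finset.Icc 1 ⌊X⌋₊).filter
            (fun p : ℕ × ℕ => ((max (p.1 * c₀) (p.2 * c₁) : ℕ) : ℝ) ≤ X ∧
              (Real.log X) ^ C₂ < ((max (p.1 * d₀) (p.2 * d₁) : ℕ) : ℝ)),
          Real.log ((max (p.1 * c₀) (p.2 * c₁) : ℕ) : ℝ) /
            (((max (p.1 * c₀) (p.2 * c₁) : ℕ) : ℝ) ^ 2 *
              ((Nat.divisors p.1).card : ℝ) * ((Nat.divisors p.2).card : ℝ)))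
        ≤ C * Real.log X / ((c₀ : ℝ) * (c₁ : ℝ)) := by
  refine ⟨8 * (Real.log 4 + 5 + C₁), fun X hX c₀ c₁ hc₀ hc₁ hc₀X hc₁X _ _ _ _ => ?_⟩
  simp only [Nat.cast_max, Nat.cast_mul]
  refine sum_maxWeight_le_of_le_log_rpow h₁.le (by linarith) (Nat.one_le_cast.mpr hc₀)
    (Nat.one_le_cast.mpr hc₁) hc₀X hc₁X (fun p hp => ?_) fun p hp => (mem_filter.mp hp).2.1
  obtain ⟨hfst, hsnd⟩ := mem_product.mp (mem_filter.mp hp).1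
  exact ⟨(mem_Icc.mp hfst).1, (mem_Icc.mp hsnd).1⟩
end
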